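/- For each m ∈ ℕ there is a constant c(m) > 0 such that the following holds. Let d, m ∈ ℕ, let F ∈ 𝔉_d^+ (i.e., F is symmetric with characteristic function F̂(t) ≥ 0 for all t ∈ ℝ^d), and let (μ, ν) be a random vector with non-negative integer coordinates. Define G = ∑_{k≥0} P{μ = k} · F^k and H = ∑_{k≥0} P{ν = k} · F^k. Then ρ_m(G, H) ≤ E min{ c(m)·|μ−ν|/(ν+1), 1 }. -/

import Mathlib

open MeasureTheory RealInnerProductSpace
open scoped ENNReal

noncomputable section

abbrev Euc (d : ℕ) := EuclideanSpace ℝ (Fin d)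

/-- Convolution of two measures on an additive structure. -/
def mconv {α : Type*} [MeasurableSpace α] [Add α] (μ ν : Measure α) : Measure α :=
  (μ.prod ν).map (fun p => p.1 + p.2)

/-- Convolution power `μ^{*n}`, with `μ^{*0}` the Dirac measure at `0`. -/
def convPow {α : Type*} [MeasurableSpace α] [AddMonoid α] (μ : Measure α) : ℕ → Measure α
  | 0 => Measure.dirac 0
  | n + 1 => mconv (convPow μ n) μ

/-- Convolution product of a finite family of measures. -/
def convProd {α : Type*} [MeasurableSpace α] [AddMonoid α] :
    ∀ {n : ℕ}, (Fin n → Measure α) → Measure α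
  | 0, _ => Measure.dirac 0
  | n + 1, G => mconv (convProd (fun i : Fin n => G i.castSucc)) (G (Fin.last n))

/-- The compound Poisson measure `e(a·μ) = e^{-a} ∑_k a^k μ^{*k}/k!`. -/
def cpois {α : Type*} [MeasurableSpace α] [AddMonoid α] (a : ℝ) (μ : Measure α) : Measure α :=
  Measure.sum fun k : ℕ =>
    (ENNReal.ofReal (Real.exp (-a) * a ^ k / k.factorial)) • convPow μ k

/-- A measure is symmetric if it is invariant under `x ↦ -x`. -/
def IsSymmMeasure {d : ℕ} (μ : Measure (Euc d)) : Prop :=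
  μ.map (fun x => -x) = μ

/-- Characteristic function of a measure on `ℝ^d`. -/
def charFn {d : ℕ} (μ : Measure (Euc d)) (t : Euc d) : ℂ :=
  ∫ x, Complex.exp ((⟪t, x⟫ : ℂ) * Complex.I) ∂μ

/-- Characteristic function of a measure on `ℝ`. -/
def charFn1 (μ : Measure ℝ) (t : ℝ) : ℂ :=
  ∫ x, Complex.exp (((t * x : ℝ) : ℂ) * Complex.I) ∂μ

/-- Convex polyhedra determined by the directions `t 1, …, t m`. -/
def polyhedraOn {d m : ℕ} (t : Fin m → Euc d) : Set (Set (Euc d)) :=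
  {X | ∃ a b : Fin m → EReal,
    X = {x | ∀ j, a j ≤ ((⟪x, t j⟫ : ℝ) : EReal) ∧ ((⟪x, t j⟫ : ℝ) : EReal) ≤ b j}}

/-- The collection `𝔛_m` of convex polyhedra determined by `m` pairs of parallel hyperplanes. -/
def polyhedra (d m : ℕ) : Set (Set (Euc d)) :=
  {X | ∃ t : Fin m → Euc d, X ∈ polyhedraOn t}

/-- The distance `ρ_m(G,H) = sup_{X ∈ 𝔛_m} |G{X} - H{X}|`. -/
def rhoPoly {d : ℕ} (m : ℕ) (G H : Measure (Euc d)) : ℝ :=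
  ⨆ X ∈ polyhedra d m, |(G X).toReal - (H X).toReal|

/-- The Lévy concentration function `Q(μ, b) = sup_x μ[x, x+b]`. -/
def concFn (μ : Measure ℝ) (b : ℝ) : ℝ :=
  ⨆ x : ℝ, (μ (Set.Icc x (x + b))).toReal

/-- `q(H, X) = inf_{‖t‖=1} Q(𝓛(⟨ξ,t⟩), λ{⟨x,t⟩ : x ∈ X})` where `H = 𝓛(ξ)`. -/
def qFn {d : ℕ} (H : Measure (Euc d)) (X : Set (Euc d)) : ℝ :=
  ⨅ t ∈ {t : Euc d | ‖t‖ = 1},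
    concFn (H.map fun x => ⟪x, t⟫) (volume ((fun x => ⟪x, t⟫) '' X)).toReal

/-- The uniform (Kolmogorov) distance on `ℝ^d`. -/
def kolmDist {d : ℕ} (G H : Measure (Euc d)) : ℝ :=
  ⨆ x : Euc d, |(G {y | ∀ i, y i ≤ x i}).toReal - (H {y | ∀ i, y i ≤ x i}).toReal|

/-- The uniform (Kolmogorov) distance on `ℝ`. -/
def kolmDist1 (G H : Measure ℝ) : ℝ :=
  ⨆ x : ℝ, |(G (Set.Iic x)).toReal - (H (Set.Iic x)).toReal|

end

noncomputable section
namespace S15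
open MeasureTheory RealInnerProductSpace

/-- Weighted correlation operator. -/
def Kop {m : ℕ} (w : Euc m → ℝ) (μ : Measure (Euc m)) (g : Euc m → ℝ) : Euc m → ℝ :=
  fun y => ∫ x, w x * g (y + x) ∂μ

/-- bounded measurable -/
structure BM {m : ℕ} (g : Euc m → ℝ) : Prop where
  meas : Measurable g
  bdd : ∃ M, ∀ y, |g y| ≤ M

/-- bounded measurable integrable -/
structure Good {m : ℕ} (g : Euc m → ℝ) : Prop where
  meas : Measurable g
  bdd : ∃ M, ∀ y, |g y| ≤ M
  int : Integrable g

/-- integrable weight -/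
structure Wt {m : ℕ} (w : Euc m → ℝ) (μ : Measure (Euc m)) : Prop where
  meas : Measurable w
  int : Integrable w μ

/-- L1 norm -/
def n1 {m : ℕ} (g : Euc m → ℝ) : ℝ := ∫ y, |g y|

/-- even function -/
def Ev {m : ℕ} (g : Euc m → ℝ) : Prop := ∀ y, g (-y) = g y

variable {m : ℕ} {w u g h : Euc m → ℝ} {μ ν : Measure (Euc m)}

lemma Good.bm (hg : Good g) : BM g := ⟨hg.meas, hg.bdd⟩
lemma Good.wt (hg : Good g) : Wt g volume := ⟨hg.meas, hg.int⟩
lemma BM.wt [IsFiniteMeasure μ] (hg : BM g) : Wt g μ := by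
  refine ⟨hg.meas, ?_⟩
  obtain ⟨M, hM⟩ := hg.bdd
  exact Integrable.of_bound hg.meas.aestronglyMeasurable M (.of_forall hM)

lemma BM.const (c : ℝ) : BM (fun _ : Euc m => c) := ⟨measurable_const, |c|, fun _ => le_rfl⟩

lemma BM.add (hg : BM g) (hh : BM h) : BM (fun y => g y + h y) := by
  obtain ⟨A, hA⟩ := hg.bdd
  obtain ⟨B, hB⟩ := hh.bdd
  exact ⟨hg.meas.add hh.meas, A + B, fun y => (abs_add_le _ _).trans (add_le_add (hA y) (hB y))⟩

lemma BM.sub (hg : BM g) (hh : BM h) : BM (fun y => g y - h y) := by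
  obtain ⟨A, hA⟩ := hg.bdd
  obtain ⟨B, hB⟩ := hh.bdd
  exact ⟨hg.meas.sub hh.meas, A + B, fun y => (abs_sub _ _).trans (add_le_add (hA y) (hB y))⟩

lemma BM.mul (hg : BM g) (hh : BM h) : BM (fun y => g y * h y) := by
  obtain ⟨A, hA⟩ := hg.bdd
  obtain ⟨B, hB⟩ := hh.bdd
  refine ⟨hg.meas.mul hh.meas, A * B, fun y => ?_⟩
  rw [abs_mul]
  exact mul_le_mul (hA y) (hB y) (abs_nonneg _) ((abs_nonneg _).trans (hA y))

lemma BM.abs (hg : BM g) : BM (fun y => |g y|) :=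
  ⟨hg.meas.abs, hg.bdd.imp fun M hM y => by simpa using hM y⟩

lemma BM.shift (hg : BM g) (x : Euc m) : BM (fun y => g (y + x)) :=
  ⟨hg.meas.comp (measurable_add_const x), hg.bdd.imp fun _ hM _ => hM _⟩

lemma BM.mul_good (hg : BM g) (hh : Good h) : Good (fun y => g y * h y) := by
  have h1 := hg.mul hh.bm
  obtain ⟨A, hA⟩ := hg.bdd
  exact ⟨h1.meas, h1.bdd, hh.int.bdd_mul hg.meas.aestronglyMeasurable (.of_forall hA)⟩

lemma Good.add (hg : Good g) (hh : Good h) : Good (fun y => g y + h y) :=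
  ⟨(hg.bm.add hh.bm).meas, (hg.bm.add hh.bm).bdd, hg.int.add hh.int⟩

lemma Good.sub (hg : Good g) (hh : Good h) : Good (fun y => g y - h y) :=
  ⟨(hg.bm.sub hh.bm).meas, (hg.bm.sub hh.bm).bdd, hg.int.sub hh.int⟩

lemma Good.const_mul (hg : Good g) (c : ℝ) : Good (fun y => c * g y) :=
  (BM.const c).mul_good hg

lemma Good.abs (hg : Good g) : Good (fun y => |g y|) :=
  ⟨hg.bm.abs.meas, hg.bm.abs.bdd, hg.int.abs⟩

lemma Good.shift (hg : Good g) (x : Euc m) : Good (fun y => g (y + x)) :=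
  ⟨(hg.bm.shift x).meas, (hg.bm.shift x).bdd, hg.int.comp_add_right x⟩

lemma n1_nonneg (g : Euc m → ℝ) : 0 ≤ n1 g := integral_nonneg fun _ => abs_nonneg _

lemma n1_add_le (hg : Good g) (hh : Good h) : n1 (fun y => g y + h y) ≤ n1 g + n1 h := by
  unfold n1
  rw [← integral_add hg.abs.int hh.abs.int]
  exact integral_mono (hg.add hh).abs.int (hg.abs.int.add hh.abs.int) fun y => abs_add_le _ _

lemma n1_sub_le (hg : Good g) (hh : Good h) : n1 (fun y => g y - h y) ≤ n1 g + n1 h := by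
  unfold n1
  rw [← integral_add hg.abs.int hh.abs.int]
  exact integral_mono (hg.sub hh).abs.int (hg.abs.int.add hh.abs.int) fun y => abs_sub _ _

lemma n1_const_mul (c : ℝ) (g : Euc m → ℝ) : n1 (fun y => c * g y) = |c| * n1 g := by
  unfold n1
  simp_rw [abs_mul]
  rw [integral_const_mul]

lemma n1_shift (g : Euc m → ℝ) (x : Euc m) : n1 (fun y => g (y + x)) = n1 g :=
  integral_add_right_eq_self (fun y => |g y|) x

lemma n1_mono (hg : Good g) (hh : Good h) (H : ∀ y, |g y| ≤ |h y|) : n1 g ≤ n1 h :=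
  integral_mono hg.abs.int hh.abs.int H

lemma kop_int (hw : Wt w μ) (hg : BM g) (y : Euc m) :
    Integrable (fun x => w x * g (y + x)) μ := by
  obtain ⟨M, hM⟩ := hg.bdd
  exact hw.int.mul_bdd (c := M) (hg.meas.comp (measurable_const_add y)).aestronglyMeasurable
    (.of_forall fun x => hM _)

lemma kop_abs_le (hw : Wt w μ) (hg : BM g) {M : ℝ} (hM : ∀ y, |g y| ≤ M) (y : Euc m) :
    |Kop w μ g y| ≤ (∫ x, |w x| ∂μ) * M := by
  unfold Kop
  refine (abs_integral_le_integral_abs).trans ?_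
  rw [← integral_mul_const]
  refine integral_mono (kop_int hw hg y).abs (hw.int.abs.mul_const M) fun x => ?_
  simp only [abs_mul]
  exact mul_le_mul_of_nonneg_left (hM _) (abs_nonneg _)

lemma BM.kop [SFinite μ] (hw : Wt w μ) (hg : BM g) : BM (Kop w μ g) := by
  obtain ⟨M, hM⟩ := hg.bdd
  refine ⟨?_, _, kop_abs_le hw hg hM⟩
  have : StronglyMeasurable (fun p : Euc m × Euc m => w p.2 * g (p.1 + p.2)) :=
    ((hw.meas.comp measurable_snd).mul (hg.meas.comp (measurable_fst.add measurable_snd))).stronglyMeasurable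
  exact this.integral_prod_right.measurable

lemma kop_prod_int [SFinite μ] (hw : Wt w μ) (hg : Good g) :
    Integrable (fun p : Euc m × Euc m => w p.1 * g (p.2 + p.1)) (μ.prod volume) := by
  have hm : AEStronglyMeasurable (fun p : Euc m × Euc m => w p.1 * g (p.2 + p.1)) (μ.prod volume) :=
    ((hw.meas.comp measurable_fst).mul (hg.meas.comp (measurable_snd.add measurable_fst))).aestronglyMeasurable
  rw [integrable_prod_iff hm]
  refine ⟨.of_forall fun x => ((hg.shift x).int.const_mul (w x)), ?_⟩
  have : ∀ x, ∫ y, ‖w x * g (y + x)‖ = |w x| * n1 g := by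
    intro x
    simp only [norm_mul, Real.norm_eq_abs]
    rw [integral_const_mul]
    congr 1
    exact n1_shift g x
  simp only [this]
  exact hw.int.abs.mul_const _

lemma Good.kop [SFinite μ] (hw : Wt w μ) (hg : Good g) : Good (Kop w μ g) :=
  ⟨(hg.bm.kop hw).meas, (hg.bm.kop hw).bdd, (kop_prod_int hw hg).integral_prod_right⟩

lemma integral_kop [SFinite μ] (hw : Wt w μ) (hg : Good g) :
    ∫ y, Kop w μ g y = (∫ x, w x ∂μ) * ∫ y, g y := by
  unfold Kop
  rw [← integral_integral_swap (kop_prod_int hw hg)]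
  simp_rw [integral_const_mul]
  rw [← integral_mul_const]
  congr 1
  ext x
  rw [integral_add_right_eq_self g x]

lemma Wt.abs (hw : Wt w μ) : Wt (fun x => |w x|) μ := ⟨hw.meas.abs, hw.int.abs⟩

lemma n1_kop_le [SFinite μ] (hw : Wt w μ) (hg : Good g) :
    n1 (Kop w μ g) ≤ (∫ x, |w x| ∂μ) * n1 g := by
  unfold n1
  rw [← integral_kop hw.abs hg.abs]
  refine integral_mono (hg.kop hw).abs.int (hg.abs.kop hw.abs).int fun y => ?_
  refine abs_integral_le_integral_abs.trans (le_of_eq ?_)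
  simp only [Kop, abs_mul]

lemma kop_comm [SFinite μ] [SFinite ν] (hw : Wt w μ) (hu : Wt u ν) (hg : BM g) :
    Kop w μ (Kop u ν g) = Kop u ν (Kop w μ g) := by
  ext y
  unfold Kop
  simp_rw [← integral_const_mul]
  rw [integral_integral_swap]
  · congr 1
    ext x
    congr 1
    ext z
    rw [add_right_comm]
    ring
  · obtain ⟨M, hM⟩ := hg.bdd
    have : Integrable (fun p : Euc m × Euc m => (w p.1 * u p.2) * g (y + p.1 + p.2)) (μ.prod ν) := by
      refine (hw.int.mul_prod hu.int).mul_bdd (c := M) ?_ (.of_forall fun x => hM _)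
      exact (hg.meas.comp ((measurable_fst.const_add y).add measurable_snd)).aestronglyMeasurable
    refine this.congr (.of_forall fun p => ?_)
    simp only [Function.uncurry]
    ring

lemma kop_add (hw : Wt w μ) (hg : BM g) (hh : BM h) :
    Kop w μ (fun y => g y + h y) = fun y => Kop w μ g y + Kop w μ h y := by
  ext y
  unfold Kop
  rw [← integral_add (kop_int hw hg y) (kop_int hw hh y)]
  simp_rw [mul_add]

lemma kop_sub (hw : Wt w μ) (hg : BM g) (hh : BM h) :
    Kop w μ (fun y => g y - h y) = fun y => Kop w μ g y - Kop w μ h y := by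
  ext y
  unfold Kop
  rw [← integral_sub (kop_int hw hg y) (kop_int hw hh y)]
  simp_rw [mul_sub]

lemma kop_const_mul (c : ℝ) (w : Euc m → ℝ) (μ : Measure (Euc m)) (g : Euc m → ℝ) :
    Kop w μ (fun y => c * g y) = fun y => c * Kop w μ g y := by
  ext y
  unfold Kop
  rw [← integral_const_mul]
  congr 1; ext x; ring

lemma kop_sub_wt (hw : Wt w μ) (hu : Wt u μ) (hg : BM g) :
    Kop (fun y => w y - u y) μ g = fun y => Kop w μ g y - Kop u μ g y := by
  ext y
  unfold Kop
  rw [← integral_sub (kop_int hw hg y) (kop_int hu hg y)]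
  simp_rw [sub_mul]

lemma kop_shift (w : Euc m → ℝ) (μ : Measure (Euc m)) (g : Euc m → ℝ) (x : Euc m) :
    Kop w μ (fun y => g (y + x)) = fun y => Kop w μ g (y + x) := by
  ext y
  unfold Kop
  congr 1; ext z; rw [add_right_comm]

lemma kop_mono (hw : Wt w μ) (hw0 : ∀ x, 0 ≤ w x) (hg : BM g) (hh : BM h) (H : ∀ y, g y ≤ h y) (y : Euc m) :
    Kop w μ g y ≤ Kop w μ h y :=
  integral_mono (kop_int hw hg y) (kop_int hw hh y) fun x => mul_le_mul_of_nonneg_left (H _) (hw0 x)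

lemma kop_swap (hw : Ev w) (hg : Ev g) : Kop w volume g = Kop g volume w := by
  ext y
  unfold Kop
  have h1 := integral_sub_left_eq_self (fun x => w x * g (y + x)) volume (-y)
  rw [← h1]
  congr 1
  ext x
  rw [show y + (-y - x) = -x by abel, hg, show -y - x = -(y + x) by abel, hw, mul_comm]

lemma integral_neg_map (f : Euc m → ℝ) :
    ∫ x, f x ∂(μ.map (fun x => -x)) = ∫ x, f (-x) ∂μ :=
  (MeasurableEquiv.neg (Euc m)).measurableEmbedding.integral_map f

lemma Ev.kop (hμ : μ.map (fun x => -x) = μ) (hw : Ev w) (hg : Ev g) : Ev (Kop w μ g) := by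
  intro y
  unfold Kop
  conv_lhs => rw [← hμ]
  rw [integral_neg_map]
  · congr 1
    ext x
    rw [hw, ← neg_add, hg]

/-- The basic operator. -/
def TT (F : Measure (Euc m)) (g : Euc m → ℝ) : Euc m → ℝ := fun y => ∫ x, g (y + x) ∂F

lemma top_eq (F : Measure (Euc m)) (g : Euc m → ℝ) : TT F g = Kop (fun _ => 1) F g := by
  ext y; simp [TT, Kop]

/-- cosine transform -/
def Fc (F : Measure (Euc m)) (t : Euc m) : ℝ := ∫ x, Real.cos ⟪t, x⟫ ∂F

/-- admissible -/
structure Adm (F : Measure (Euc m)) : Prop where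
  prob : IsProbabilityMeasure F
  symm : F.map (fun x => -x) = F
  pos : ∀ t, 0 ≤ Fc F t

section T
variable {F : Measure (Euc m)} [IsProbabilityMeasure F]

lemma wt_one : Wt (fun _ : Euc m => (1:ℝ)) F := (BM.const 1).wt

lemma top_int (hg : BM g) (y : Euc m) : Integrable (fun x => g (y + x)) F := by
  simpa using kop_int (wt_one (F := F)) hg y

lemma BM.top (hg : BM g) : BM (TT F g) := by rw [top_eq]; exact hg.kop wt_one
lemma Good.top (hg : Good g) : Good (TT F g) := by rw [top_eq]; exact hg.kop wt_one
lemma BM.iter (hg : BM g) (n : ℕ) : BM ((TT F)^[n] g) := by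
  induction n with
  | zero => exact hg
  | succ n ih => rw [Function.iterate_succ_apply']; exact ih.top
lemma Good.iter (hg : Good g) (n : ℕ) : Good ((TT F)^[n] g) := by
  induction n with
  | zero => exact hg
  | succ n ih => rw [Function.iterate_succ_apply']; exact ih.top

lemma n1_top_le (hg : Good g) : n1 (TT F g) ≤ n1 g := by
  rw [top_eq]
  simpa using n1_kop_le (wt_one (F := F)) hg
lemma integral_top (hg : Good g) : ∫ y, TT F g y = ∫ y, g y := by
  rw [top_eq]
  simpa using integral_kop (wt_one (F := F)) hg
lemma integral_iter (hg : Good g) (n : ℕ) : ∫ y, (TT F)^[n] g y = ∫ y, g y := by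
  induction n with
  | zero => rfl
  | succ n ih => rw [Function.iterate_succ_apply', integral_top (hg.iter n), ih]

lemma top_abs_le (hg : BM g) {M : ℝ} (hM : ∀ y, |g y| ≤ M) (y : Euc m) : |TT F g y| ≤ M := by
  rw [top_eq]
  simpa using kop_abs_le (wt_one (F := F)) hg hM y
lemma iter_abs_le (hg : BM g) {M : ℝ} (hM : ∀ y, |g y| ≤ M) (n : ℕ) (y : Euc m) :
    |(TT F)^[n] g y| ≤ M := by
  induction n generalizing y with
  | zero => exact hM y
  | succ n ih => rw [Function.iterate_succ_apply']; exact top_abs_le (hg.iter n) ih y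

lemma top_mono (hg : BM g) (hh : BM h) (H : ∀ y, g y ≤ h y) (y : Euc m) : TT F g y ≤ TT F h y :=
  integral_mono (top_int hg y) (top_int hh y) fun x => H _

lemma iter_mono (hg : BM g) (hh : BM h) (H : ∀ y, g y ≤ h y) (n : ℕ) (y : Euc m) :
    (TT F)^[n] g y ≤ (TT F)^[n] h y := by
  induction n generalizing y with
  | zero => exact H y
  | succ n ih =>
    rw [Function.iterate_succ_apply', Function.iterate_succ_apply']
    exact top_mono (hg.iter n) (hh.iter n) ih y

lemma top_pos (hg : BM g) (H : ∀ y, 0 < g y) (y : Euc m) : 0 < TT F g y := by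
  unfold TT
  rw [integral_pos_iff_support_of_nonneg (fun x => (H _).le) (top_int hg y)]
  have : Function.support (fun x => g (y + x)) = Set.univ := by
    ext x; simp [(H (y+x)).ne']
  rw [this]; simp

lemma iter_pos (hg : BM g) (H : ∀ y, 0 < g y) (n : ℕ) (y : Euc m) : 0 < (TT F)^[n] g y := by
  induction n generalizing y with
  | zero => exact H y
  | succ n ih => rw [Function.iterate_succ_apply']; exact top_pos (hg.iter n) ih y

lemma top_add (hg : BM g) (hh : BM h) :
    TT F (fun y => g y + h y) = fun y => TT F g y + TT F h y := by
  simp only [top_eq]; exact kop_add wt_one hg hh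
lemma top_sub (hg : BM g) (hh : BM h) :
    TT F (fun y => g y - h y) = fun y => TT F g y - TT F h y := by
  simp only [top_eq]; exact kop_sub wt_one hg hh
lemma top_const_mul (c : ℝ) (g : Euc m → ℝ) :
    TT F (fun y => c * g y) = fun y => c * TT F g y := by
  simp only [top_eq]; exact kop_const_mul c _ _ _
lemma iter_sub (hg : BM g) (hh : BM h) (n : ℕ) :
    (TT F)^[n] (fun y => g y - h y) = fun y => (TT F)^[n] g y - (TT F)^[n] h y := by
  induction n with
  | zero => rfl
  | succ n ih =>
    simp only [Function.iterate_succ_apply', ih]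
    exact top_sub (hg.iter n) (hh.iter n)
lemma iter_add (hg : BM g) (hh : BM h) (n : ℕ) :
    (TT F)^[n] (fun y => g y + h y) = fun y => (TT F)^[n] g y + (TT F)^[n] h y := by
  induction n with
  | zero => rfl
  | succ n ih =>
    simp only [Function.iterate_succ_apply', ih]
    exact top_add (hg.iter n) (hh.iter n)

lemma top_kop [SFinite μ] (hw : Wt w μ) (hg : BM g) : TT F (Kop w μ g) = Kop w μ (TT F g) := by
  simp only [top_eq]; exact kop_comm wt_one hw hg
lemma iter_kop [SFinite μ] (hw : Wt w μ) (hg : BM g) (n : ℕ) :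
    (TT F)^[n] (Kop w μ g) = Kop w μ ((TT F)^[n] g) := by
  induction n with
  | zero => rfl
  | succ n ih =>
    simp only [Function.iterate_succ_apply', ih]
    exact top_kop hw (hg.iter n)

lemma top_shift (x : Euc m) (g : Euc m → ℝ) :
    TT F (fun y => g (y + x)) = fun y => TT F g (y + x) := by
  simp only [top_eq]; exact kop_shift _ _ _ _
lemma iter_shift (x : Euc m) (g : Euc m → ℝ) (n : ℕ) :
    (TT F)^[n] (fun y => g (y + x)) = fun y => (TT F)^[n] g (y + x) := by
  induction n with
  | zero => rfl
  | succ n ih => simp only [Function.iterate_succ_apply', ih]; exact top_shift _ _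

lemma Ev.top (hF : F.map (fun x => -x) = F) (hg : Ev g) : Ev (TT F g) := by
  rw [top_eq]; exact Ev.kop hF (fun _ => rfl) hg
lemma Ev.iter (hF : F.map (fun x => -x) = F) (hg : Ev g) (n : ℕ) : Ev ((TT F)^[n] g) := by
  induction n with
  | zero => exact hg
  | succ n ih => rw [Function.iterate_succ_apply']; exact ih.top hF

/-- cosine representation of g -/
def CRep (ρ g : Euc m → ℝ) : Prop := ∀ y, g y = ∫ t, Real.cos ⟪t, y⟫ * ρ t

lemma Fc_meas : Measurable (Fc F) := by
  have : StronglyMeasurable (fun p : Euc m × Euc m => Real.cos ⟪p.1, p.2⟫) := by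
    apply Continuous.stronglyMeasurable; fun_prop
  exact this.integral_prod_right.measurable

lemma cos_int (t : Euc m) : Integrable (fun x => Real.cos ⟪t, x⟫) F := by
  refine Integrable.of_bound (by apply Continuous.aestronglyMeasurable; fun_prop) 1 (.of_forall fun x => ?_)
  exact Real.abs_cos_le_one _

lemma Fc_abs_le (t : Euc m) : |Fc F t| ≤ 1 := by
  refine abs_integral_le_integral_abs.trans ?_
  calc _ ≤ ∫ x, (1:ℝ) ∂F := integral_mono (cos_int t).abs (integrable_const _) fun x => Real.abs_cos_le_one _
    _ = 1 := by simp

lemma sin_zero (hF : F.map (fun x => -x) = F) (t : Euc m) : ∫ x, Real.sin ⟪t, x⟫ ∂F = 0 := by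
  have : ∫ x, Real.sin ⟪t, x⟫ ∂F = - ∫ x, Real.sin ⟪t, x⟫ ∂F := by
    conv_lhs => rw [← hF]
    rw [integral_neg_map, ← integral_neg]
    simp [inner_neg_right]
  linarith

lemma top_cos (hF : F.map (fun x => -x) = F) (t y : Euc m) :
    ∫ x, Real.cos ⟪t, y + x⟫ ∂F = Real.cos ⟪t, y⟫ * Fc F t := by
  have hs : Integrable (fun x => Real.sin ⟪t, x⟫) F := by
    refine Integrable.of_bound (by apply Continuous.aestronglyMeasurable; fun_prop) 1 (.of_forall fun x => ?_)
    exact Real.abs_sin_le_one _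
  simp_rw [inner_add_right, Real.cos_add]
  rw [integral_sub ((cos_int t).const_mul _) (hs.const_mul _), integral_const_mul, integral_const_mul,
    sin_zero hF]
  simp [Fc]

lemma CRep.wt_int {ρ : Euc m → ℝ} (hρ : Integrable ρ) (y : Euc m) :
    Integrable (fun t => Real.cos ⟪t, y⟫ * ρ t) := by
  refine hρ.bdd_mul (c := 1) (by apply Continuous.aestronglyMeasurable; fun_prop) (.of_forall fun x => ?_)
  exact Real.abs_cos_le_one _

lemma CRep.top {ρ : Euc m → ℝ} (hF : F.map (fun x => -x) = F) (hρ : Integrable ρ) (h : CRep ρ g) :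
    CRep (fun t => Fc F t * ρ t) (TT F g) := by
  intro y
  unfold TT
  simp_rw [h _]
  rw [integral_integral_swap]
  · congr 1; ext t
    rw [integral_mul_const, top_cos hF]
    ring
  · have h1 : Integrable (fun p : Euc m × Euc m => (1:ℝ) * ρ p.2) (F.prod volume) :=
      (integrable_const (1:ℝ)).mul_prod hρ
    simp only [one_mul] at h1
    refine h1.bdd_mul (c := 1) (by apply Continuous.aestronglyMeasurable; fun_prop) (.of_forall fun x => ?_)
    exact Real.abs_cos_le_one _

lemma Fc_mul_int {ρ : Euc m → ℝ} (hρ : Integrable ρ) : Integrable (fun t => Fc F t * ρ t) :=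
  hρ.bdd_mul (c := 1) Fc_meas.aestronglyMeasurable (.of_forall Fc_abs_le)

lemma Fc_pow_mul_int {ρ : Euc m → ℝ} (hρ : Integrable ρ) (n : ℕ) :
    Integrable (fun t => Fc F t ^ n * ρ t) :=
  hρ.bdd_mul (c := 1) (Fc_meas.pow_const n).aestronglyMeasurable
    (.of_forall fun t => by rw [norm_pow]; exact pow_le_one₀ (norm_nonneg _) (Fc_abs_le t))

lemma CRep.iter {ρ : Euc m → ℝ} (hF : F.map (fun x => -x) = F) (hρ : Integrable ρ) (h : CRep ρ g) (n : ℕ) :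
    CRep (fun t => Fc F t ^ n * ρ t) ((TT F)^[n] g) := by
  induction n with
  | zero => simpa using h
  | succ n ih =>
    rw [Function.iterate_succ_apply']
    have := CRep.top hF (Fc_pow_mul_int hρ n) ih
    convert this using 2
    ring

lemma CRep.abs_le {ρ : Euc m → ℝ} (hρ : Integrable ρ) (h0 : ∀ t, 0 ≤ ρ t) (h : CRep ρ g) (y : Euc m) :
    |g y| ≤ g 0 := by
  rw [h y, h 0]
  refine abs_integral_le_integral_abs.trans ?_
  refine integral_mono (CRep.wt_int hρ y).abs (CRep.wt_int hρ 0) fun t => ?_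
  simp only [abs_mul, abs_of_nonneg (h0 t), inner_zero_right, Real.cos_zero]
  exact mul_le_mul_of_nonneg_right (Real.abs_cos_le_one _) (h0 t)

end T
end S15
end

noncomputable section
namespace S15
open MeasureTheory RealInnerProductSpace
variable {m : ℕ}

/-- normalizing constant -/
def cc (m : ℕ) (θ : ℝ) : ℝ := (2 * Real.pi * θ) ^ (-(m:ℝ)/2)
/-- Gaussian kernel -/
def kk (θ : ℝ) (y : Euc m) : ℝ := cc m θ * Real.exp (-‖y‖^2 / (2*θ))

lemma cc_pos {θ : ℝ} (hθ : 0 < θ) : 0 < cc m θ := Real.rpow_pos_of_pos (by positivity) _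

lemma kk_pos {θ : ℝ} (hθ : 0 < θ) (y : Euc m) : 0 < kk θ y :=
  mul_pos (cc_pos hθ) (Real.exp_pos _)

lemma kk_zero (θ : ℝ) : kk θ (0 : Euc m) = cc m θ := by simp [kk]

lemma kk_le {θ : ℝ} (hθ : 0 < θ) (y : Euc m) : kk θ y ≤ cc m θ := by
  unfold kk
  apply mul_le_of_le_one_right (cc_pos hθ).le
  apply Real.exp_le_one_iff.2
  rw [neg_div]
  simp only [Left.neg_nonpos_iff]; positivity

lemma kk_meas (θ : ℝ) : Measurable (kk θ : Euc m → ℝ) := by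
  apply Continuous.measurable
  unfold kk
  fun_prop

lemma kk_ev (θ : ℝ) : Ev (kk θ : Euc m → ℝ) := by
  intro y; simp [kk]

/-- real Gaussian integral with linear term -/
lemma gauss_lin {b : ℝ} (hb : 0 < b) (c : ℝ) (w : Euc m) :
    Integrable (fun v : Euc m => Real.exp (-b * ‖v‖^2 + c * ⟪w, v⟫)) ∧
    ∫ v : Euc m, Real.exp (-b * ‖v‖^2 + c * ⟪w, v⟫) =
      (Real.pi / b) ^ ((m:ℝ)/2) * Real.exp (c^2 * ‖w‖^2 / (4*b)) := by
  have hb' : 0 < (b:ℂ).re := by simpa using hb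
  have h1 := GaussianFourier.integrable_cexp_neg_mul_sq_norm_add hb' (c:ℂ) w
  have h2 := GaussianFourier.integral_cexp_neg_mul_sq_norm_add hb' (c:ℂ) w
  have e : ∀ v : Euc m, Complex.exp (-(b:ℂ) * ‖v‖^2 + (c:ℂ) * ((⟪w, v⟫ : ℝ) : ℂ)) =
      ((Real.exp (-b * ‖v‖^2 + c * ⟪w, v⟫) : ℝ) : ℂ) := by
    intro v; push_cast; rfl
  constructor
  · have := h1.re
    refine this.congr (.of_forall fun v => ?_)
    exact (congrArg Complex.re (e v)).trans (Complex.ofReal_re _)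
  · simp only [e] at h2
    rw [integral_complex_ofReal] at h2
    apply Complex.ofReal_injective
    rw [h2]
    push_cast
    rw [Complex.ofReal_cpow (by positivity)]
    simp

lemma gauss_cos {b : ℝ} (hb : 0 < b) (y : Euc m) :
    ∫ t : Euc m, Real.cos ⟪t, y⟫ * Real.exp (-b * ‖t‖^2) =
      (Real.pi / b) ^ ((m:ℝ)/2) * Real.exp (-‖y‖^2 / (4*b)) := by
  have hb' : 0 < (b:ℂ).re := by simpa using hb
  have h1 := GaussianFourier.integrable_cexp_neg_mul_sq_norm_add hb' (Complex.I) y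
  have h2 := GaussianFourier.integral_cexp_neg_mul_sq_norm_add hb' (Complex.I) y
  have h3 := congrArg Complex.re h2
  have := integral_re h1
  simp only [RCLike.re_to_complex] at this
  rw [← this] at h3
  have e : ∀ v : Euc m, (Complex.exp (-(b:ℂ) * ‖v‖^2 + Complex.I * ((⟪y, v⟫ : ℝ) : ℂ))).re =
      Real.cos ⟪v, y⟫ * Real.exp (-b * ‖v‖^2) := by
    intro v
    rw [Complex.exp_re]
    have a1 : (-(b:ℂ) * ‖v‖^2 + Complex.I * ((⟪y, v⟫ : ℝ) : ℂ)).re = -b * ‖v‖^2 := by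
      simp [← Complex.ofReal_pow]
    have a2 : (-(b:ℂ) * ‖v‖^2 + Complex.I * ((⟪y, v⟫ : ℝ) : ℂ)).im = ⟪y, v⟫ := by
      simp [← Complex.ofReal_pow]
    rw [a1, a2, real_inner_comm, mul_comm]
  simp only [e] at h3
  rw [h3]
  have : ((Real.pi:ℂ) / (b:ℂ)) ^ ((Module.finrank ℝ (Euc m) : ℂ)/2) * Complex.exp (Complex.I^2 * (‖y‖:ℂ)^2 / (4 * (b:ℂ)))
    = (((Real.pi / b) ^ ((m:ℝ)/2) * Real.exp (-‖y‖^2 / (4*b)) : ℝ) : ℂ) := by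
    push_cast
    rw [Complex.ofReal_cpow (by positivity)]
    simp
  rw [this, Complex.ofReal_re]

lemma cc_mul {θ : ℝ} (hθ : 0 < θ) : cc m θ * (2 * Real.pi * θ) ^ ((m:ℝ)/2) = 1 := by
  unfold cc
  rw [← Real.rpow_add (by positivity)]
  simp [neg_div]

lemma kk_int {θ : ℝ} (hθ : 0 < θ) : Integrable (kk θ : Euc m → ℝ) := by
  have := (gauss_lin (m := m) (b := 1/(2*θ)) (by positivity) 0 0).1
  refine (this.const_mul (cc m θ)).congr (.of_forall fun v => ?_)
  simp only [kk]
  congr 2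
  simp; ring

lemma kk_integral {θ : ℝ} (hθ : 0 < θ) : ∫ y : Euc m, kk θ y = 1 := by
  have := (gauss_lin (m := m) (b := 1/(2*θ)) (by positivity) 0 0).2
  simp only [zero_mul, add_zero] at this
  unfold kk
  rw [integral_const_mul]
  have e : ∀ v : Euc m, -‖v‖^2/(2*θ) = -(1/(2*θ)) * ‖v‖^2 := fun v => by ring
  simp only [e, this]
  rw [show Real.pi/(1/(2*θ)) = 2*Real.pi*θ by field_simp]
  simp [cc_mul hθ]

lemma kk_good {θ : ℝ} (hθ : 0 < θ) : Good (kk θ : Euc m → ℝ) :=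
  ⟨kk_meas θ, ⟨cc m θ, fun y => by rw [abs_of_pos (kk_pos hθ y)]; exact kk_le hθ y⟩, kk_int hθ⟩

lemma kk_conv {θ θ' : ℝ} (hθ : 0 < θ) (hθ' : 0 < θ') :
    Kop (kk θ') volume (kk θ) = (kk (θ + θ') : Euc m → ℝ) := by
  ext y
  unfold Kop kk
  have e : ∀ x : Euc m, cc m θ' * Real.exp (-‖x‖^2/(2*θ')) * (cc m θ * Real.exp (-‖y+x‖^2/(2*θ))) =
      (cc m θ' * cc m θ * Real.exp (-‖y‖^2/(2*θ))) *
        Real.exp (-(1/(2*θ')+1/(2*θ)) * ‖x‖^2 + (-1/θ) * ⟪y, x⟫) := by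
    intro x
    have : Real.exp (-‖x‖^2/(2*θ')) * Real.exp (-‖y+x‖^2/(2*θ)) = Real.exp (-‖y‖^2/(2*θ)) *
        Real.exp (-(1/(2*θ')+1/(2*θ)) * ‖x‖^2 + (-1/θ) * ⟪y, x⟫) := by
      rw [← Real.exp_add, ← Real.exp_add, norm_add_sq_real]
      congr 1
      field_simp
      ring
    linear_combination (cc m θ' * cc m θ) * this
  simp only [e]
  rw [integral_const_mul, (gauss_lin (by positivity) _ _).2]
  have h1 : Real.exp (-‖y‖^2/(2*θ)) * Real.exp ((-1/θ)^2 * ‖y‖^2 / (4*(1/(2*θ')+1/(2*θ)))) =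
      Real.exp (-‖y‖^2/(2*(θ+θ'))) := by
    rw [← Real.exp_add]
    congr 1
    field_simp
    ring
  have h2 : cc m θ' * cc m θ * (Real.pi / (1/(2*θ')+1/(2*θ))) ^ ((m:ℝ)/2) = cc m (θ + θ') := by
    have h3 := cc_mul (m := m) hθ
    have h4 := cc_mul (m := m) hθ'
    have h5 := cc_mul (m := m) (add_pos hθ hθ')
    have h6 : (Real.pi / (1/(2*θ')+1/(2*θ))) ^ ((m:ℝ)/2) * (2 * Real.pi * (θ+θ')) ^ ((m:ℝ)/2)
        = (2 * Real.pi * θ) ^ ((m:ℝ)/2) * (2 * Real.pi * θ') ^ ((m:ℝ)/2) := by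
      rw [← Real.mul_rpow (by positivity) (by positivity), ← Real.mul_rpow (by positivity) (by positivity)]
      congr 1
      field_simp
    have h7 : (2 * Real.pi * (θ+θ')) ^ ((m:ℝ)/2) ≠ 0 := (Real.rpow_pos_of_pos (by positivity) _).ne'
    apply mul_right_cancel₀ h7
    rw [h5, mul_assoc, h6]
    calc _ = (cc m θ' * (2 * Real.pi * θ') ^ ((m:ℝ)/2)) * (cc m θ * (2 * Real.pi * θ) ^ ((m:ℝ)/2)) := by ring
      _ = 1 := by rw [h3, h4]; ring
  rw [← h1, ← h2]; ring

lemma kk_rep {θ : ℝ} (hθ : 0 < θ) : CRep (fun t => cc m θ * kk (1/θ) t) (kk θ : Euc m → ℝ) := by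
  intro y
  have := gauss_cos (m := m) (b := θ/2) (by positivity) y
  have e : ∀ t : Euc m, Real.cos ⟪t,y⟫ * (cc m θ * kk (1/θ) t) =
      (cc m θ * cc m (1/θ)) * (Real.cos ⟪t,y⟫ * Real.exp (-(θ/2) * ‖t‖^2)) := by
    intro t
    unfold kk
    rw [show -‖t‖^2/(2*(1/θ)) = -(θ/2) * ‖t‖^2 by field_simp]
    ring
  simp only [e]
  rw [integral_const_mul, this]
  have h4 := cc_mul (m := m) (θ := 1/θ) (by positivity)
  rw [show Real.pi / (θ/2) = 2 * Real.pi * (1/θ) by field_simp, show 4 * (θ/2) = 2*θ by ring]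
  unfold kk
  linear_combination (-cc m θ * Real.exp (-‖y‖^2/(2*θ))) * h4

lemma kk_rep_int {θ : ℝ} (hθ : 0 < θ) : Integrable (fun t : Euc m => cc m θ * kk (1/θ) t) :=
  (kk_int (by positivity)).const_mul _

lemma kk_cmp {κ : ℝ} (hκ : 0 ≤ κ) (y : Euc m) :
    (1+κ) ^ (-(m:ℝ)/2) * kk 1 y ≤ kk (1+κ) y := by
  unfold kk cc
  rw [← mul_assoc, ← Real.mul_rpow (by positivity) (by positivity)]
  rw [show (1+κ)*(2*Real.pi*1) = 2*Real.pi*(1+κ) by ring]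
  gcongr ?_ * ?_
  apply Real.exp_le_exp.2
  rw [neg_div, neg_div]
  apply neg_le_neg
  gcongr
  linarith

end S15
end

noncomputable section
namespace S15
open MeasureTheory RealInnerProductSpace
variable {m : ℕ} {g h : Euc m → ℝ}

/-- The mollified iterates. -/
def fj (F : Measure (Euc m)) (N j : ℕ) : Euc m → ℝ := (TT F)^[j] (kk ((j:ℝ)/N))

/-- The parameter phi. -/
def phi (F : Measure (Euc m)) (N : ℕ) : ℝ := ∫ t, Fc F t ^ N * kk 1 t

/-- normalized bump -/
def chi (F : Measure (Euc m)) (N : ℕ) : Euc m → ℝ := fun y => fj F N N y / fj F N N 0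

/-- modulus -/
def ee (F : Measure (Euc m)) (N : ℕ) : Euc m → ℝ := fun x => Real.sqrt (2 * (1 - chi F N x))

variable {F : Measure (Euc m)} [IsProbabilityMeasure F] {N j : ℕ}

lemma jN_pos (hN : 1 ≤ N) (hj : 1 ≤ j) : (0:ℝ) < (j:ℝ)/N := by
  have : (0:ℝ) < N := by exact_mod_cast hN
  have : (0:ℝ) < j := by exact_mod_cast hj
  positivity

lemma fj_good (hN : 1 ≤ N) (hj : 1 ≤ j) : Good (fj F N j) := (kk_good (jN_pos hN hj)).iter j
lemma fj_pos (hN : 1 ≤ N) (hj : 1 ≤ j) (y : Euc m) : 0 < fj F N j y :=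
  iter_pos (kk_good (jN_pos hN hj)).bm (kk_pos (jN_pos hN hj)) j y
lemma fj_integral (hN : 1 ≤ N) (hj : 1 ≤ j) : ∫ y, fj F N j y = 1 := by
  unfold fj
  rw [integral_iter (kk_good (jN_pos hN hj)), kk_integral (jN_pos hN hj)]
lemma fj_n1 (hN : 1 ≤ N) (hj : 1 ≤ j) : n1 (fj F N j) = 1 := by
  unfold n1
  simp_rw [abs_of_pos (fj_pos (F := F) hN hj _)]
  exact fj_integral hN hj


lemma fj_ev (hF : Adm F) : Ev (fj F N j) := (kk_ev _).iter hF.symm j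

lemma fj_conv (hF : Adm F) {i : ℕ} (hN : 1 ≤ N) (hi : 1 ≤ i) (hj : 1 ≤ j) :
    Kop (fj F N i) volume (fj F N j) = fj F N (i + j) := by
  have gi := kk_good (m := m) (jN_pos hN hi)
  have gj := kk_good (m := m) (jN_pos hN hj)
  have e1 : Kop (fj F N i) volume (fj F N j) =
      (TT F)^[j] (Kop (fj F N i) volume (kk ((j:ℝ)/N))) :=
    (iter_kop (fj_good hN hi).wt gj.bm j).symm
  rw [e1, kop_swap (fj_ev hF) (kk_ev _)]
  have e2 : Kop (kk ((j:ℝ)/N)) volume (fj F N i) =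
      (TT F)^[i] (Kop (kk ((j:ℝ)/N)) volume (kk ((i:ℝ)/N))) :=
    (iter_kop gj.wt gi.bm i).symm
  rw [e2, kk_conv (jN_pos hN hi) (jN_pos hN hj), ← Function.iterate_add_apply, fj]
  rw [Nat.add_comm j i]
  congr 2
  push_cast; ring

lemma fj_rep (hF : Adm F) (hN : 1 ≤ N) (hj : 1 ≤ j) :
    CRep (fun t => Fc F t ^ j * (cc m ((j:ℝ)/N) * kk (1/((j:ℝ)/N)) t)) (fj F N j) :=
  CRep.iter hF.symm (kk_rep_int (jN_pos hN hj)) (kk_rep (jN_pos hN hj)) j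

lemma kk1_iter_zero (hF : Adm F) (k : ℕ) : (TT F)^[k] (kk 1) (0 : Euc m) = cc m 1 * ∫ t, Fc F t ^ k * kk 1 t := by
  rw [CRep.iter hF.symm (kk_rep_int one_pos) (kk_rep one_pos) k 0, ← integral_const_mul]
  congr 1; ext t
  simp; ring

lemma fj_self (hN : 1 ≤ N) : fj F N N = (TT F)^[N] (kk 1) := by
  unfold fj
  rw [div_self]
  exact_mod_cast (by omega : N ≠ 0)

lemma fN_zero (hF : Adm F) (hN : 1 ≤ N) : fj F N N 0 = cc m 1 * phi F N := by
  rw [fj_self hN, kk1_iter_zero hF]; rfl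

lemma phi_pos (hF : Adm F) (hN : 1 ≤ N) : 0 < phi F N := by
  have h := fj_pos (F := F) hN hN 0
  rw [fN_zero hF hN] at h
  exact pos_of_mul_pos_right h (cc_pos one_pos).le

lemma Fc_le_one (t : Euc m) : Fc F t ≤ 1 := (le_abs_self _).trans (Fc_abs_le t)

lemma phi_le_one (hF : Adm F) : phi F N ≤ 1 := by
  rw [← kk_integral (m := m) one_pos]
  refine integral_mono (Fc_pow_mul_int (kk_int one_pos) N) (kk_int one_pos) fun t => ?_
  exact mul_le_of_le_one_left (kk_pos one_pos t).le (pow_le_one₀ (hF.pos t) (Fc_le_one t))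

lemma b_low (hF : Adm F) (hN : 1 ≤ N) (j : ℕ) :
    phi F N * (1 - (j:ℝ)/N * Real.log (1/phi F N)) ≤ ∫ t, Fc F t ^ (N+j) * kk 1 t := by
  have hp := phi_pos hF hN
  have hN0 : (0:ℝ) < N := by exact_mod_cast hN
  set p := phi F N with hpd
  set κ : ℝ := (j:ℝ)/N with hκ
  have hκ0 : 0 ≤ κ := by positivity
  have key : ∀ t, (1 + κ * (Real.log p + 1)) * (Fc F t ^ N * kk 1 t) - κ * p * kk 1 t ≤
      Fc F t ^ (N+j) * kk 1 t := by
    intro t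
    have hk := (kk_pos (m := m) one_pos t).le
    have hc : (1 + κ * (Real.log p + 1)) * Fc F t ^ N - κ * p ≤ Fc F t ^ (N+j) := by
      rcases (hF.pos t).eq_or_lt with h0 | h0
      · rw [← h0, zero_pow (by omega), zero_pow (by omega)]
        have : 0 ≤ κ * p := by positivity
        linarith
      · set a := Fc F t
        have hX : 0 < a ^ N := by positivity
        have h1 : 1 + j * Real.log a ≤ a ^ j := by
          have := Real.add_one_le_exp ((j:ℝ) * Real.log a)
          rw [mul_comm (j:ℝ), Real.exp_mul, Real.exp_log h0, Real.rpow_natCast] at this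
          linarith [mul_comm (j:ℝ) (Real.log a)]
        have h2 : (j:ℝ) * Real.log a = κ * Real.log (a^N) := by
          rw [Real.log_pow, hκ]; field_simp
        have h3 : Real.log p - Real.log (a^N) ≤ p / a^N - 1 := by
          rw [← Real.log_div hp.ne' hX.ne']
          exact Real.log_le_sub_one_of_pos (by positivity)
        have h4 : a^N * (Real.log p - Real.log (a^N)) ≤ p - a^N := by
          calc _ ≤ a^N * (p / a^N - 1) := mul_le_mul_of_nonneg_left h3 hX.le
            _ = p - a^N := by field_simp
        rw [pow_add]
        have h5 : a^N * (1 + κ * Real.log (a^N)) ≤ a^N * a^j := by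
          rw [← h2]; exact mul_le_mul_of_nonneg_left h1 hX.le
        nlinarith [mul_le_mul_of_nonneg_left h4 hκ0]
    nlinarith [mul_le_mul_of_nonneg_right hc hk]
  have i1 := Fc_pow_mul_int (F := F) (kk_int (m := m) one_pos) N
  have i2 := kk_int (m := m) one_pos
  have := integral_mono ((i1.const_mul (1 + κ * (Real.log p + 1))).sub (i2.const_mul (κ * p)))
    (Fc_pow_mul_int (F := F) (kk_int one_pos) (N+j)) key
  simp only [Pi.sub_apply] at this
  rw [integral_sub (i1.const_mul _) (i2.const_mul _), integral_const_mul, integral_const_mul,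
    kk_integral one_pos] at this
  change (1 + κ * (Real.log p + 1)) * p - _ ≤ _ at this
  rw [one_div, Real.log_inv]
  nlinarith [this]

lemma log_phi_nonneg (hF : Adm F) (hN : 1 ≤ N) : 0 ≤ Real.log (1/phi F N) := by
  apply Real.log_nonneg
  rw [le_div_iff₀ (phi_pos hF hN), one_mul]
  exact phi_le_one hF

lemma chi_pos (hF : Adm F) (hN : 1 ≤ N) (y : Euc m) : 0 < chi F N y :=
  div_pos (fj_pos hN hN y) (fj_pos hN hN 0)

lemma chi_le (hF : Adm F) (hN : 1 ≤ N) (y : Euc m) : chi F N y ≤ 1 := by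
  have hρ : Integrable (fun t : Euc m => Fc F t ^ N * (cc m ((N:ℝ)/N) * kk (1/((N:ℝ)/N)) t)) :=
    Fc_pow_mul_int (kk_rep_int (jN_pos hN hN)) N
  have := CRep.abs_le hρ (fun t => mul_nonneg (pow_nonneg (hF.pos t) _)
    (mul_nonneg (cc_pos (jN_pos hN hN)).le (kk_pos (one_div_pos.2 (jN_pos hN hN)) t).le))
    (fj_rep hF hN hN) y
  exact (div_le_one (fj_pos hN hN 0)).2 ((le_abs_self _).trans this)

lemma chi_good (hN : 1 ≤ N) : Good (chi F N) := by
  have := (fj_good (F := F) hN hN).const_mul (fj F N N 0)⁻¹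
  unfold chi
  simpa only [div_eq_inv_mul] using this

lemma chi_ev (hF : Adm F) : Ev (chi F N) := fun y => by simp only [chi]; rw [fj_ev hF y]

lemma chi_integral (hN : 1 ≤ N) : ∫ y, chi F N y = 1 / fj F N N 0 := by
  unfold chi
  rw [integral_div, fj_integral hN hN]

/-- δ bound -/
lemma delta_le (hF : Adm F) (hN : 1 ≤ N) (hj : 1 ≤ j) :
    ∫ y, (1 - chi F N y) * fj F N j y ≤ (j:ℝ)/N * (m/2 + Real.log (1/phi F N)) := by
  have hp := phi_pos hF hN
  have hL := log_phi_nonneg hF hN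
  have hκ := jN_pos hN hj
  set L := Real.log (1/phi F N)
  set κ : ℝ := (j:ℝ)/N with hκd
  have hN0 : (0:ℝ) < N := by exact_mod_cast hN
  have gj := fj_good (F := F) hN hj
  have e1 : ∫ y, (1 - chi F N y) * fj F N j y = 1 - fj F N (N+j) 0 / fj F N N 0 := by
    simp_rw [sub_mul, one_mul]
    rw [integral_sub gj.int ((chi_good hN).bm.mul_good gj).int, fj_integral hN hj]
    congr 1
    rw [← fj_conv hF hN hN hj]
    simp only [Kop, chi, zero_add]
    rw [← integral_div]
    congr 1; ext y; ring
  have e2 : fj F N (N+j) 0 ≥ (1+κ)^(-(m:ℝ)/2) * (cc m 1 * (phi F N * (1 - κ * L))) := by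
    have h1 : fj F N (N+j) = (TT F)^[N+j] (kk (1+κ)) := by
      unfold fj; congr 2; push_cast; rw [hκd]; field_simp
    have h2 := iter_mono (F := F) (((kk_good (m := m) one_pos).const_mul ((1+κ)^(-(m:ℝ)/2))).bm)
      (kk_good (m := m) (θ := 1+κ) (by positivity)).bm (kk_cmp hκ.le) (N+j) 0
    rw [h1]
    refine le_trans ?_ h2
    have h3 : ∀ (n : ℕ) (c : ℝ), (TT F)^[n] (fun y : Euc m => c * kk 1 y) = fun y => c * (TT F)^[n] (kk 1) y := by
      intro n c
      induction n with
      | zero => rfl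
      | succ n ih => simp only [Function.iterate_succ_apply', ih]; exact top_const_mul _ _
    rw [h3]
    simp only
    rw [kk1_iter_zero hF]
    gcongr
    · exact (cc_pos one_pos).le
    · exact b_low hF hN j
  rw [e1, fN_zero hF hN]
  have hc := cc_pos (m := m) one_pos
  have e3 : (1+κ)^(-(m:ℝ)/2) * (1 - κ*L) ≤ fj F N (N+j) 0 / (cc m 1 * phi F N) := by
    rw [le_div_iff₀ (by positivity)]
    linarith
  have e4 : 0 ≤ fj F N (N+j) 0 / (cc m 1 * phi F N) :=
    div_nonneg (fj_pos hN (by omega) 0).le (by positivity)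
  have e5 : 1 - (m:ℝ)/2 * κ ≤ (1+κ)^(-(m:ℝ)/2) := by
    rw [Real.rpow_def_of_pos (by positivity)]
    have h1 := Real.add_one_le_exp (Real.log (1+κ) * (-(m:ℝ)/2))
    have h2 := Real.log_le_sub_one_of_pos (show 0 < 1 + κ by positivity)
    have : (0:ℝ) ≤ (m:ℝ)/2 := by positivity
    nlinarith
  by_cases hc : κ * L ≤ 1
  · have h1 := mul_le_mul_of_nonneg_right e5 (sub_nonneg.2 hc)
    have : 0 ≤ (m:ℝ)/2 * κ * (κ * L) := by positivity
    nlinarith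
  · have : 0 ≤ (m:ℝ)/2 * κ := by positivity
    nlinarith

lemma jensen_wt {α : Type*} [MeasurableSpace α] {μ : Measure α} {ρ f : α → ℝ} (h0 : ∀ x, 0 ≤ ρ x)
    (hρ : Integrable ρ μ) (h1 : ∫ x, ρ x ∂μ = 1) (hf : Integrable (fun x => f x * ρ x) μ)
    (hf2 : Integrable (fun x => f x ^ 2 * ρ x) μ) :
    (∫ x, f x * ρ x ∂μ)^2 ≤ ∫ x, f x ^2 * ρ x ∂μ := by
  set c := ∫ x, f x * ρ x ∂μ
  have : 0 ≤ ∫ x, (f x ^ 2 * ρ x - (2 * c) * (f x * ρ x)) + c^2 * ρ x ∂μ := by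
    refine integral_nonneg fun x => ?_
    have : 0 ≤ (f x - c)^2 * ρ x := mul_nonneg (sq_nonneg _) (h0 x)
    simp only [Pi.zero_apply]
    nlinarith
  have i1 : Integrable (fun x => f x ^ 2 * ρ x - (2 * c) * (f x * ρ x)) μ := hf2.sub (hf.const_mul _)
  rw [integral_add i1 (hρ.const_mul _), integral_sub hf2 (hf.const_mul _),
    integral_const_mul, integral_const_mul, h1] at this
  change 0 ≤ _ - 2 * c * c + _ at this
  nlinarith

lemma jensen_prob {f : Euc m → ℝ} (hf : BM f) : (∫ x, f x ∂F)^2 ≤ ∫ x, f x ^ 2 ∂F := by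
  have h2 := (hf.mul hf).wt (μ := F)
  have := jensen_wt (μ := F) (ρ := fun _ => (1:ℝ)) (f := f) (fun _ => zero_le_one)
    (integrable_const _) (by simp) (by simpa using hf.wt.int) (by simpa [pow_two] using h2.int)
  simpa using this

lemma chi_rep (hF : Adm F) (hN : 1 ≤ N) : CRep (fun t => Fc F t ^ N * kk 1 t / phi F N) (chi F N) := by
  intro y
  have hNN : (N:ℝ)/N = 1 := div_self (by exact_mod_cast (by omega : N ≠ 0))
  unfold chi
  rw [fj_rep hF hN hN y, fN_zero hF hN, ← integral_div, hNN]
  congr 1; ext t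
  have := phi_pos hF hN
  have := cc_pos (m := m) one_pos
  simp only [div_one]
  field_simp

lemma chi_shift (hF : Adm F) (hN : 1 ≤ N) (x y : Euc m) : |chi F N (y + x) - chi F N y| ≤ ee F N x := by
  unfold ee
  apply Real.abs_le_sqrt
  have hp := phi_pos hF hN
  have hρ : Integrable (fun t : Euc m => Fc F t ^ N * kk 1 t / phi F N) :=
    (Fc_pow_mul_int (kk_int one_pos) N).div_const _
  have hρ0 : ∀ t : Euc m, 0 ≤ Fc F t ^ N * kk 1 t / phi F N := fun t =>
    div_nonneg (mul_nonneg (pow_nonneg (hF.pos t) _) (kk_pos one_pos t).le) hp.le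
  have hρ1 : ∫ t : Euc m, Fc F t ^ N * kk 1 t / phi F N = 1 := by
    rw [integral_div]; exact div_self hp.ne'
  have i1 := CRep.wt_int hρ (y + x)
  have i2 := CRep.wt_int hρ y
  have i3 := CRep.wt_int hρ x
  have e : chi F N (y + x) - chi F N y =
      ∫ t, (Real.cos ⟪t, y + x⟫ - Real.cos ⟪t, y⟫) * (Fc F t ^ N * kk 1 t / phi F N) := by
    simp_rw [sub_mul]
    rw [integral_sub i1 i2, ← chi_rep hF hN, ← chi_rep hF hN]
  have e2 : 2 * (1 - chi F N x) =
      ∫ t, 2 * (Fc F t ^ N * kk 1 t / phi F N - Real.cos ⟪t, x⟫ * (Fc F t ^ N * kk 1 t / phi F N)) := by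
    rw [integral_const_mul, integral_sub hρ i3, ← chi_rep hF hN, hρ1]
  have i4 : Integrable (fun t : Euc m => (Real.cos ⟪t, y + x⟫ - Real.cos ⟪t, y⟫)^2 * (Fc F t ^ N * kk 1 t / phi F N)) := by
    refine hρ.bdd_mul (c := 4) (by apply Continuous.aestronglyMeasurable; fun_prop) (.of_forall fun t => ?_)
    rw [Real.norm_eq_abs, abs_of_nonneg (sq_nonneg _)]
    have := Real.abs_cos_le_one ⟪t, y+x⟫
    have := Real.abs_cos_le_one ⟪t, y⟫
    rw [abs_le] at *
    nlinarith
  rw [e, e2]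
  refine (jensen_wt hρ0 hρ hρ1 ?_ i4).trans ?_
  · simp_rw [sub_mul]; exact i1.sub i2
  · refine integral_mono i4 ((hρ.sub i3).const_mul 2) fun t => ?_
    have hk : (Real.cos ⟪t, y + x⟫ - Real.cos ⟪t, y⟫)^2 ≤ 2 * (1 - Real.cos ⟪t,x⟫) := by
      rw [inner_add_right, Real.cos_add]
      have h1 := Real.sin_sq_add_cos_sq ⟪t, x⟫
      have h2 := Real.sin_sq_add_cos_sq ⟪t, y⟫
      set a := Real.cos ⟪t, y⟫
      set b := Real.sin ⟪t, y⟫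
      set p := Real.cos ⟪t, x⟫
      set q := Real.sin ⟪t, x⟫
      have h3 : (a*p - b*q - a)^2 + (b*(1-p) - a*q)^2 = 2*(1-p) := by
        linear_combination (a^2+b^2)*h1 + (2-2*p)*h2
      nlinarith [sq_nonneg (b*(1-p) - a*q)]
    have := mul_le_mul_of_nonneg_right hk (hρ0 t)
    simp only [Pi.sub_apply]
    linarith

lemma ee_sq (hF : Adm F) (hN : 1 ≤ N) (x : Euc m) : ee F N x ^ 2 = 2 * (1 - chi F N x) :=
  Real.sq_sqrt (by linarith [chi_le hF hN x])

lemma ee_nonneg (x : Euc m) : 0 ≤ ee F N x := Real.sqrt_nonneg _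

lemma ee_bm (hF : Adm F) (hN : 1 ≤ N) : BM (ee F N) := by
  refine ⟨?_, 2, fun x => ?_⟩
  · unfold ee
    have := (chi_good (F := F) hN).meas
    fun_prop
  · rw [abs_of_nonneg (ee_nonneg x)]
    have h1 := ee_sq hF hN x
    have := chi_pos hF hN x
    nlinarith [ee_nonneg (F := F) (N := N) x]

lemma ee_int (hF : Adm F) (hN : 1 ≤ N) : ∫ x, ee F N x ^ 2 ∂F ≤ 2 * Real.log (1/phi F N) / N := by
  simp_rw [ee_sq hF hN]
  have hw := (chi_good (F := F) hN).bm.wt (μ := F)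
  have hp := phi_pos hF hN
  have hc := cc_pos (m := m) one_pos
  rw [integral_const_mul, integral_sub (integrable_const _) hw.int]
  have e : ∫ x, chi F N x ∂F = (∫ t, Fc F t ^ (N+1) * kk 1 t) / phi F N := by
    unfold chi
    rw [integral_div, fN_zero hF hN]
    have : ∫ x, fj F N N x ∂F = (TT F)^[N+1] (kk 1) 0 := by
      rw [Function.iterate_succ_apply', ← fj_self hN]
      simp [TT]
    rw [this, kk1_iter_zero hF]
    field_simp
  have h := b_low hF hN 1
  rw [e]
  have h2 : 1 - (1:ℝ)/N * Real.log (1/phi F N) ≤ (∫ t, Fc F t ^ (N+1) * kk 1 t) / phi F N := by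
    rw [le_div_iff₀ hp]
    push_cast at h
    linarith
  simp only [integral_const, probReal_univ, smul_eq_mul, mul_one]
  have : (1:ℝ)/N * Real.log (1/phi F N) = Real.log (1/phi F N) / N := by ring
  rw [mul_div_assoc]
  linarith

end S15
end

noncomputable section
namespace S15
open MeasureTheory RealInnerProductSpace
variable {m : ℕ} {g h : Euc m → ℝ}
variable {F : Measure (Euc m)} [IsProbabilityMeasure F]

lemma iadd {α : Type*} [MeasurableSpace α] {μ : Measure α} {f g : α → ℝ} (hf : Integrable f μ)
    (hg : Integrable g μ) : Integrable (fun x => f x + g x) μ := hf.add hg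

lemma isub {α : Type*} [MeasurableSpace α] {μ : Measure α} {f g : α → ℝ} (hf : Integrable f μ)
    (hg : Integrable g μ) : Integrable (fun x => f x - g x) μ := hf.sub hg

lemma lev_aux {k v : Euc m → ℝ} (hk : BM k) (hk0 : ∀ y, 0 < k y) (hv : BM v)
    (hE : BM (fun x => Real.exp (v x / 4))) (i : ℕ) (y : Euc m) (c : ℝ) :
    Real.exp c * ((1 - c) * (TT F)^[i] k y + (1/4) * i * Kop v F ((TT F)^[i-1] k) y) ≤
      (Kop (fun x => Real.exp (v x / 4)) F)^[i] k y := by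
  have hEw : Wt (fun x => Real.exp (v x / 4)) F := hE.wt
  have hH : ∀ i, BM ((Kop (fun x => Real.exp (v x / 4)) F)^[i] k) := by
    intro i
    induction i with
    | zero => exact hk
    | succ i ih => rw [Function.iterate_succ_apply']; exact ih.kop hEw
  induction i generalizing y c with
  | zero =>
    simp only [Function.iterate_zero, id, Nat.cast_zero, mul_zero, zero_mul, add_zero]
    have h1 := Real.add_one_le_exp (-c)
    have h2 : Real.exp c * (1 - c) ≤ 1 := by
      have : Real.exp c * Real.exp (-c) = 1 := by rw [← Real.exp_add]; simp
      nlinarith [Real.exp_pos c]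
    nlinarith [hk0 y]
  | succ i ih =>
    have hTi : BM ((TT F)^[i] k) := hk.iter i
    have hG : BM (Kop v F ((TT F)^[i-1] k)) := (hk.iter (i-1)).kop hv.wt
    have hGT : (i:ℝ) * TT F (Kop v F ((TT F)^[i-1] k)) y = i * Kop v F ((TT F)^[i] k) y := by
      rcases i with _ | i
      · simp
      · rw [top_kop hv.wt (hk.iter _)]
        simp only [Nat.add_sub_cancel]
        rw [← Function.iterate_succ_apply' (TT F)]
    rw [Function.iterate_succ_apply', Function.iterate_succ_apply']
    simp only [Nat.add_sub_cancel]
    have hlow : ∀ x, Real.exp c * (((1 - c) * (TT F)^[i] k (y+x) + (1/4) * (v x * (TT F)^[i] k (y+x)))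
        + (1/4) * i * Kop v F ((TT F)^[i-1] k) (y+x)) ≤
        Real.exp (v x / 4) * (Kop (fun x => Real.exp (v x / 4)) F)^[i] k (y+x) := by
      intro x
      have := mul_le_mul_of_nonneg_left (ih (y+x) (c - v x/4)) (Real.exp_pos (v x/4)).le
      rw [← mul_assoc, ← Real.exp_add, show v x / 4 + (c - v x / 4) = c by ring] at this
      refine le_trans (le_of_eq ?_) this
      ring
    have i1 := top_int (F := F) hTi y
    have i2 := kop_int (μ := F) hv.wt hTi y
    have i3 := top_int (F := F) hG y
    have := integral_mono ((((i1.const_mul (1-c)).add (i2.const_mul (1/4))).add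
      (i3.const_mul ((1/4)*(i:ℝ)))).const_mul (Real.exp c)) (kop_int hEw (hH i) y) hlow
    refine le_trans (le_of_eq ?_) this
    simp only [Pi.add_apply]
    rw [integral_const_mul, integral_add (iadd (i1.const_mul (1-c)) (i2.const_mul (1/4)))
      (i3.const_mul ((1/4)*(i:ℝ))), integral_add (i1.const_mul (1-c)) (i2.const_mul (1/4)),
      integral_const_mul, integral_const_mul, integral_const_mul]
    change _ = Real.exp c * ((1-c) * TT F ((TT F)^[i] k) y + 1/4 * Kop v F ((TT F)^[i] k) y +
      1/4 * i * TT F (Kop v F ((TT F)^[i-1] k)) y)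
    push_cast
    linear_combination (-Real.exp c / 4) * hGT

lemma lev1 {k v : Euc m → ℝ} {C R : ℝ} (hk : BM k) (hk0 : ∀ y, 0 < k y) (hkC : ∀ y, k y ≤ C)
    (hv : BM v) (hv4 : ∀ x, |v x| ≤ 4) (hv0 : ∫ x, v x ∂F = 0) (hR : ∫ x, v x ^ 2 ∂F ≤ R)
    (j : ℕ) (y : Euc m) :
    (1/4) * ((j+1:ℕ) * Kop v F ((TT F)^[j] k) y) ≤
      (TT F)^[j+1] k y * (Real.log (C / (TT F)^[j+1] k y) + (j+1:ℕ) * R / 16) := by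
  have hE : BM (fun x => Real.exp (v x / 4)) := by
    refine ⟨by have := hv.meas; fun_prop, Real.exp 1, fun x => ?_⟩
    rw [abs_of_pos (Real.exp_pos _)]
    apply Real.exp_le_exp.2
    have := (abs_le.1 (hv4 x)).2
    linarith
  have hEw : Wt (fun x => Real.exp (v x / 4)) F := hE.wt
  have hH : ∀ i, BM ((Kop (fun x => Real.exp (v x / 4)) F)^[i] k) := by
    intro i
    induction i with
    | zero => exact hk
    | succ i ih => rw [Function.iterate_succ_apply']; exact ih.kop hEw
  have hC : 0 < C := (hk0 0).trans_le (hkC 0)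
  have hEi : ∫ x, |Real.exp (v x / 4)| ∂F ≤ Real.exp (R/16) := by
    have hvi := (hv.wt (μ := F)).int
    have hv2 := ((hv.mul hv).wt (μ := F)).int
    have h1 : ∀ x, |Real.exp (v x / 4)| ≤ (1 + v x / 4) + (v x * v x) / 16 := by
      intro x
      rw [abs_of_pos (Real.exp_pos _)]
      have h2 := Real.abs_exp_sub_one_sub_id_le (x := v x/4) (by
        rw [abs_div]; have := hv4 x; norm_num; linarith)
      have := (abs_le.1 h2).2
      nlinarith
    have h3 := integral_mono hEw.int.abs
      (((integrable_const (1:ℝ)).add (hvi.div_const 4)).add (hv2.div_const 16)) h1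
    simp only [Pi.add_apply] at h3
    rw [integral_add (iadd (integrable_const (1:ℝ)) (hvi.div_const 4)) (hv2.div_const 16),
      integral_add (integrable_const (1:ℝ)) (hvi.div_const 4), integral_div, integral_div, hv0] at h3
    simp only [pow_two] at hR
    simp only [integral_const, probReal_univ, smul_eq_mul, mul_one, zero_div, add_zero] at h3
    refine h3.trans ?_
    have := Real.add_one_le_exp (R/16)
    linarith
  have hup : ∀ i y, |(Kop (fun x => Real.exp (v x / 4)) F)^[i] k y| ≤ Real.exp (R/16) ^ i * C := by
    intro i
    induction i with
    | zero => intro y; simpa [abs_of_pos (hk0 y)] using hkC y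
    | succ i ih =>
      intro y
      rw [Function.iterate_succ_apply']
      refine (kop_abs_le hEw (hH i) ih y).trans ?_
      rw [pow_succ']
      rw [mul_assoc]
      exact mul_le_mul_of_nonneg_right hEi (by positivity)
  set hh := (TT F)^[j+1] k y with hhd
  have hh0 : 0 < hh := iter_pos hk hk0 _ _
  set K := (1/4) * ((j+1:ℕ) * Kop v F ((TT F)^[j] k) y) with hK
  have h1 := lev_aux (F := F) hk hk0 hv hE (j+1) y (K / hh)
  have h2 := (le_abs_self _).trans (hup (j+1) y)
  have h3 : Real.exp (K/hh) * hh ≤ Real.exp (R/16)^(j+1) * C := by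
    refine le_trans (le_of_eq ?_) (h1.trans h2)
    congr 1
    rw [← hhd, Nat.add_sub_cancel]
    rw [mul_assoc (1/4 : ℝ), ← hK]
    field_simp; ring
  have h4 : K / hh ≤ Real.log (C/hh) + (j+1:ℕ) * R / 16 := by
    rw [← Real.exp_le_exp, Real.exp_add, Real.exp_log (by positivity)]
    rw [← Real.exp_nat_mul] at h3
    rw [div_mul_eq_mul_div, le_div_iff₀ hh0]
    rw [show ((j+1:ℕ):ℝ) * R / 16 = (j+1:ℕ) * (R/16) by ring]
    linarith
  rw [div_le_iff₀ hh0] at h4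
  linarith

/-- centered translation -/
def tau (F : Measure (Euc m)) (x : Euc m) (g : Euc m → ℝ) : Euc m → ℝ := fun y => g (y + x) - TT F g y

lemma tau_good (hg : Good g) (x : Euc m) : Good (tau F x g) := (hg.shift x).sub hg.top

lemma tau_meas (hg : BM g) : Measurable (fun p : Euc m × Euc m => tau F p.1 g p.2) := by
  unfold tau
  exact (hg.meas.comp (measurable_snd.add measurable_fst)).sub ((hg.top (F := F)).meas.comp measurable_snd)

lemma tau_prod_int (hg : Good g) :
    Integrable (fun p : Euc m × Euc m => tau F p.1 g p.2) (F.prod volume) := by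
  unfold tau
  have h1 := kop_prod_int (wt_one (F := F)) hg
  have h2 := (integrable_const (1:ℝ) (μ := F)).mul_prod (hg.top (F := F)).int
  simp only [one_mul] at h1 h2
  exact h1.sub h2

lemma n1_tau_le (hg : Good g) (x : Euc m) : n1 (tau F x g) ≤ 2 * n1 g := by
  have := n1_sub_le (hg.shift x) (hg.top (F := F))
  rw [n1_shift] at this
  have h2 := n1_top_le (F := F) hg
  unfold tau
  linarith

/-- weighted L1 norm of tau -/
def WW (F : Measure (Euc m)) (χ f : Euc m → ℝ) (x : Euc m) : ℝ := ∫ y, χ y * |tau F x f y|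

lemma WW_meas {χ f : Euc m → ℝ} (hχ : BM χ) (hf : BM f) : Measurable (WW F χ f) := by
  have : StronglyMeasurable (fun p : Euc m × Euc m => χ p.2 * |tau F p.1 f p.2|) :=
    ((hχ.meas.comp measurable_snd).mul (tau_meas hf).abs).stronglyMeasurable
  exact this.integral_prod_right.measurable

lemma WW_nonneg {χ f : Euc m → ℝ} (h0 : ∀ y, 0 ≤ χ y) (x : Euc m) : 0 ≤ WW F χ f x :=
  integral_nonneg fun y => mul_nonneg (h0 y) (abs_nonneg _)

lemma WW_le {χ f : Euc m → ℝ} (hχ : BM χ) (h1 : ∀ y, χ y ≤ 1) (hf : Good f) (x : Euc m) :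
    WW F χ f x ≤ n1 (tau F x f) := by
  refine integral_mono (hχ.mul_good (tau_good hf x).abs).int (tau_good hf x).abs.int fun y => ?_
  exact mul_le_of_le_one_left (abs_nonneg _) (h1 y)

lemma lev2 {k χ : Euc m → ℝ} {C A : ℝ} (hk : Good k) (hk0 : ∀ y, 0 < k y) (hkC : ∀ y, k y ≤ C)
    (hk1 : ∫ y, k y = 1)
    (hχ : Good χ) (hχ0 : ∀ y, 0 ≤ χ y) (hχ1 : ∀ y, χ y ≤ 1) (hA : 0 < A) (hAC : A ≤ C)
    (hχA : ∫ y, χ y = 1 / A) (j : ℕ) :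
    ∫ x, WW F χ ((TT F)^[j] k) x ^ 2 ∂F ≤ 6 * (Real.log (C/A) + 1) / (j+1:ℕ) := by
  set f := (TT F)^[j] k with hf
  have hfg : Good f := hk.iter j
  have hf1 : n1 f = 1 := by
    unfold n1
    simp_rw [hf, abs_of_pos (iter_pos (F := F) hk.bm hk0 j _)]
    rw [integral_iter hk, hk1]
  set w := WW F χ f with hw
  have hw0 : ∀ x, 0 ≤ w x := WW_nonneg hχ0
  have hw2 : ∀ x, w x ≤ 2 := fun x => (WW_le hχ.bm hχ1 hfg x).trans ((n1_tau_le hfg x).trans (by rw [hf1]; norm_num))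
  have hwb : BM w := ⟨WW_meas hχ.bm hfg.bm, 2, fun x => by rw [abs_of_nonneg (hw0 x)]; exact hw2 x⟩
  set r := ∫ x, w x ^ 2 ∂F with hr
  have hr0 : 0 ≤ r := integral_nonneg fun x => sq_nonneg _
  have hh : Good (TT F f) := hfg.top
  have hhpos : ∀ y, 0 < TT F f y := top_pos hfg.bm (iter_pos hk.bm hk0 j)
  have hl : 0 ≤ Real.log (C/A) := Real.log_nonneg (by rw [le_div_iff₀ hA]; linarith)
  -- pointwise
  have key : ∀ y, (1/4) * ((j+1:ℕ) * ∫ x, w x * |tau F x f y| ∂F) ≤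
      TT F f y * (Real.log (C/A) + (j+1:ℕ) * r / 16) + A := by
    intro y
    have hτ : BM (fun x => tau F x f y) := by
      obtain ⟨M, hM⟩ := hfg.bdd
      refine ⟨(tau_meas hfg.bm).comp (measurable_id.prodMk measurable_const), M + |TT F f y|, fun x => ?_⟩
      exact (abs_sub _ _).trans (add_le_add (hM _) le_rfl)
    set v0 : Euc m → ℝ := fun x => w x * SignType.sign (tau F x f y) with hv0
    have hsg : ∀ x, |((SignType.sign (tau F x f y) : SignType) : ℝ)| ≤ 1 := by
      intro x
      rcases lt_trichotomy (tau F x f y) 0 with h | h | h <;> simp [h]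
    have hsb : BM (fun x => ((SignType.sign (tau F x f y) : SignType) : ℝ)) := by
      refine ⟨?_, 1, hsg⟩
      have h1 : Measurable (fun a : ℝ => ((SignType.sign a : SignType) : ℝ)) := by
        have : (fun a : ℝ => ((SignType.sign a : SignType) : ℝ)) =
          fun a => (if 0 < a then (1:ℝ) else 0) - (if a < 0 then 1 else 0) := by
          ext a
          rcases lt_trichotomy a 0 with h | h | h <;> simp [h, not_lt.2 h.le]
        rw [this]
        exact (Measurable.ite measurableSet_Ioi measurable_const measurable_const).sub
          (Measurable.ite measurableSet_Iio measurable_const measurable_const)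
      exact h1.comp hτ.meas
    have hv0b : BM v0 := hwb.mul hsb
    have hv0a : ∀ x, |v0 x| ≤ w x := by
      intro x
      rw [hv0]; simp only [abs_mul, abs_of_nonneg (hw0 x)]
      exact mul_le_of_le_one_right (hw0 x) (hsg x)
    set a := ∫ x, v0 x ∂F with ha
    have haa : |a| ≤ 2 := by
      refine abs_integral_le_integral_abs.trans ?_
      calc _ ≤ ∫ x, (2:ℝ) ∂F := integral_mono hv0b.wt.int.abs (integrable_const _) fun x => (hv0a x).trans (hw2 x)
        _ = 2 := by simp
    have hvb : BM (fun x => v0 x - a) := hv0b.sub (BM.const a)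
    have hvi := (hv0b.wt (μ := F)).int
    have hv2i : Integrable (fun x => v0 x ^ 2) F := by simpa [pow_two] using ((hv0b.mul hv0b).wt (μ := F)).int
    have hw2i : Integrable (fun x => w x ^ 2) F := by simpa [pow_two] using ((hwb.mul hwb).wt (μ := F)).int
    have q1 : ∫ x, (v0 x - a) ∂F = 0 := by
      rw [integral_sub hvi (integrable_const _)]; simp [← ha]
    have q2 : ∫ x, (v0 x - a)^2 ∂F ≤ r := by
      have e : ∀ x, (v0 x - a)^2 = v0 x ^ 2 - 2 * a * v0 x + a^2 := fun x => by ring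
      simp_rw [e]
      have i1 : Integrable (fun x => v0 x ^ 2 - 2 * a * v0 x) F := hv2i.sub (hvi.const_mul _)
      rw [integral_add i1 (integrable_const _), integral_sub hv2i (hvi.const_mul _), integral_const_mul]
      have : ∫ x, v0 x ^ 2 ∂F ≤ r := integral_mono hv2i hw2i fun x => by
        have := hv0a x
        simp only []
        rw [← sq_abs (v0 x)]
        exact pow_le_pow_left₀ (abs_nonneg _) this 2
      simp only [← ha, integral_const, probReal_univ, smul_eq_mul, one_mul]
      nlinarith [sq_nonneg a]
    have q3 := lev1 (F := F) hk.bm hk0 hkC hvb (fun x => by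
      have h1 := hv0a x
      have h2 := hw2 x
      exact (abs_sub _ _).trans (by linarith)) q1 q2 j y
    have q4 : Kop (fun x => v0 x - a) F f y = ∫ x, w x * |tau F x f y| ∂F := by
      have e1 : ∀ x, w x * |tau F x f y| = (v0 x - a) * f (y + x) - (v0 x - a) * TT F f y + a * tau F x f y := by
        intro x
        have : |tau F x f y| = SignType.sign (tau F x f y) * tau F x f y := (sign_mul_self _).symm
        rw [this, hv0]
        simp only [tau]
        ring
      simp_rw [e1]
      have i0 := kop_int (μ := F) hvb.wt hfg.bm y
      have i1 : Integrable (fun x => (v0 x - a) * TT F f y) F := (hvb.wt (μ := F)).int.mul_const _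
      have i2 : Integrable (fun x => a * tau F x f y) F := (hτ.wt (μ := F)).int.const_mul _
      have i3 : Integrable (fun x => (v0 x - a) * f (y + x) - (v0 x - a) * TT F f y) F := i0.sub i1
      rw [integral_add i3 i2, integral_sub i0 i1, integral_mul_const, q1, integral_const_mul]
      have : ∫ x, tau F x f y ∂F = 0 := by
        unfold tau
        rw [integral_sub (top_int hfg.bm y) (integrable_const _)]
        simp [TT]
      rw [this]
      simp [Kop]
    rw [← hf, q4, Function.iterate_succ_apply', ← hf] at q3
    refine q3.trans ?_
    have hp := hhpos y
    set hy := TT F f y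
    have l1 : Real.log (C/hy) = Real.log (C/A) + Real.log (A/hy) := by
      rw [← Real.log_mul (by have := hA.trans_le hAC; positivity) (by positivity)]
      congr 1; field_simp
    have l2 := Real.log_le_sub_one_of_pos (show 0 < A/hy by positivity)
    have l3 : hy * Real.log (A/hy) ≤ A := by
      calc _ ≤ hy * (A/hy - 1) := mul_le_mul_of_nonneg_left l2 hp.le
        _ = A - hy := by field_simp
        _ ≤ A := by linarith
    rw [l1]
    nlinarith
  -- integrate
  have hInt : Integrable (fun p : Euc m × Euc m => χ p.2 * (w p.1 * |tau F p.1 f p.2|)) (F.prod volume) := by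
    have := (tau_prod_int (F := F) hfg).abs
    refine Integrable.mono' (this.const_mul 2) ?_ (.of_forall fun p => ?_)
    · exact ((hχ.meas.comp measurable_snd).mul ((hwb.meas.comp measurable_fst).mul (tau_meas hfg.bm).abs)).aestronglyMeasurable
    · rw [Real.norm_eq_abs, abs_mul, abs_mul, abs_abs, abs_of_nonneg (hχ0 _), abs_of_nonneg (hw0 _)]
      have a1 := mul_le_mul (hχ1 p.2) (hw2 p.1) (hw0 p.1) zero_le_one
      have a2 := mul_le_mul_of_nonneg_right a1 (abs_nonneg (tau F p.1 f p.2))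
      linarith
  have hfub : ∫ y, χ y * ∫ x, w x * |tau F x f y| ∂F = r := by
    simp_rw [← integral_const_mul]
    rw [← integral_integral_swap hInt, hr]
    congr 1; ext x
    rw [pow_two]
    nth_rewrite 3 [hw]
    unfold WW
    rw [← integral_const_mul]
    congr 1; ext y; ring
  have il : Integrable (fun y => χ y * ∫ x, w x * |tau F x f y| ∂F) := by
    have := hInt.integral_prod_right
    refine this.congr (.of_forall fun y => ?_)
    exact integral_const_mul (χ y) (fun x => w x * |tau F x f y|)
  have key2 : ∀ y, (1/4 * (j+1:ℕ)) * (χ y * ∫ x, w x * |tau F x f y| ∂F) ≤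
      (Real.log (C/A) + (j+1:ℕ) * r / 16) * TT F f y + A * χ y := by
    intro y
    have a1 := mul_le_mul_of_nonneg_left (key y) (hχ0 y)
    have a2 : χ y * (TT F f y * (Real.log (C/A) + (j+1:ℕ) * r / 16)) ≤ (TT F f y * (Real.log (C/A) + (j+1:ℕ) * r / 16)) :=
      mul_le_of_le_one_left (mul_nonneg (hhpos y).le (by positivity)) (hχ1 y)
    linarith
  have fin := integral_mono (il.const_mul (1/4 * ((j+1:ℕ):ℝ))) ((hh.int.const_mul (Real.log (C/A) + (j+1:ℕ) * r / 16)).add (hχ.int.const_mul A)) key2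
  simp only [Pi.add_apply] at fin
  rw [integral_const_mul, hfub, integral_add (hh.int.const_mul _) (hχ.int.const_mul A), integral_const_mul,
    integral_const_mul, hχA, integral_top hfg, hf, integral_iter hk, hk1] at fin
  have : (0:ℝ) < (j+1:ℕ) := by positivity
  rw [le_div_iff₀ this]
  have hA1 : A * (1/A) = 1 := by field_simp
  rw [hA1] at fin
  nlinarith

end S15
end

noncomputable section
namespace S15
open MeasureTheory RealInnerProductSpace
variable {m : ℕ} {g h w f χ e : Euc m → ℝ}
variable {F : Measure (Euc m)} [IsProbabilityMeasure F]

lemma tau_kop (hw : Wt w volume) (hg : BM g) (x : Euc m) :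
    tau F x (Kop w volume g) = Kop w volume (tau F x g) := by
  unfold tau
  rw [kop_sub hw (hg.shift x) hg.top, kop_shift, top_kop hw hg]

/-- L1-error of commuting T and multiplication -/
lemma comm_T (hχ : BM χ) (he : BM e) (hsh : ∀ x y, |χ (y + x) - χ y| ≤ e x) (hg : Good g) :
    n1 (fun y => TT F (fun z => χ z * g z) y - χ y * TT F g y) ≤ (∫ x, e x ∂F) * n1 g := by
  have he0 : ∀ x, 0 ≤ e x := fun x => (abs_nonneg _).trans (hsh x 0)
  have hp := hχ.mul_good hg
  have h1 : ∀ y, |TT F (fun z => χ z * g z) y - χ y * TT F g y| ≤ Kop e F (fun y => |g y|) y := by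
    intro y
    have : TT F (fun z => χ z * g z) y - χ y * TT F g y = ∫ x, (χ (y+x) - χ y) * g (y+x) ∂F := by
      unfold TT
      rw [← integral_const_mul, ← integral_sub (top_int hp.bm y) ((top_int hg.bm y).const_mul _)]
      congr 1; ext x; ring
    rw [this]
    refine abs_integral_le_integral_abs.trans ?_
    refine integral_mono_of_nonneg (.of_forall fun x => abs_nonneg _) (kop_int he.wt hg.abs.bm y) (.of_forall fun x => ?_)
    simp only [abs_mul]
    exact mul_le_mul_of_nonneg_right (hsh x y) (abs_nonneg _)
  unfold n1
  refine (integral_mono (hp.top.sub (hχ.mul_good hg.top)).abs.int (hg.abs.kop (he.wt (μ := F))).int h1).trans ?_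
  rw [integral_kop he.wt hg.abs]

lemma tau_p (hχ : BM χ) (hχ0 : ∀ y, 0 ≤ χ y) (he : BM e) (hsh : ∀ x y, |χ (y + x) - χ y| ≤ e x) (hg : Good g) (x : Euc m) :
    n1 (tau F x (fun z => χ z * g z)) ≤ WW F χ g x + e x * n1 g + (∫ x, e x ∂F) * n1 g := by
  have he0 : ∀ x, 0 ≤ e x := fun x => (abs_nonneg _).trans (hsh x 0)
  have hp := hχ.mul_good hg
  have e1 : tau F x (fun z => χ z * g z) = fun y => (χ y * tau F x g y + (χ (y+x) - χ y) * g (y+x)) -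
      (TT F (fun z => χ z * g z) y - χ y * TT F g y) := by
    ext y; simp only [tau]; ring
  have g1 : Good (fun y => χ y * tau F x g y) := hχ.mul_good (tau_good hg x)
  have g2 : Good (fun y => (χ (y+x) - χ y) * g (y+x)) := ((hχ.shift x).sub hχ).mul_good (hg.shift x)
  have g3 : Good (fun y => TT F (fun z => χ z * g z) y - χ y * TT F g y) := hp.top.sub (hχ.mul_good hg.top)
  rw [e1]
  have b1 := n1_sub_le (g1.add g2) g3
  have b2 := n1_add_le g1 g2
  have b3 := comm_T (F := F) hχ he hsh hg
  have b4 : n1 (fun y => χ y * tau F x g y) = WW F χ g x := by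
    unfold n1 WW
    congr 1; ext y; rw [abs_mul, abs_of_nonneg (hχ0 y)]
  have b5 : n1 (fun y => (χ (y+x) - χ y) * g (y+x)) ≤ e x * n1 g := by
    rw [← n1_shift g x]
    have : e x * n1 (fun y => g (y+x)) = n1 (fun y => e x * g (y+x)) := by
      rw [n1_const_mul, abs_of_nonneg (he0 x)]
    rw [this]
    refine n1_mono g2 ((hg.shift x).const_mul _) fun y => ?_
    rw [abs_mul, abs_mul, abs_of_nonneg (he0 x)]
    exact mul_le_mul_of_nonneg_right (hsh x y) (abs_nonneg _)
  linarith

lemma split_f (hχ : BM χ) (hχe : Ev χ) (hf : Good f) (hfe : Ev f) :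
    Kop f volume f = fun y => Kop f volume (fun z => χ z * f z) y +
      Kop (fun z => (1 - χ z) * f z) volume f y := by
  have g1 := hχ.mul_good hf
  have g2 : Good (fun z => (1 - χ z) * f z) := ((BM.const 1).sub hχ).mul_good hf
  have e2 : Ev (fun z => (1 - χ z) * f z) := fun y => by simp only []; rw [hχe, hfe]
  rw [kop_swap e2 hfe, ← kop_add hf.wt g1.bm g2.bm]
  congr 1; ext y; ring

lemma q_n1 (hχ1 : ∀ y, χ y ≤ 1) (hf0 : ∀ y, 0 ≤ f y) :
    ∫ z, |(1 - χ z) * f z| = ∫ z, (1 - χ z) * f z := by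
  congr 1; ext z
  exact abs_of_nonneg (mul_nonneg (by linarith [hχ1 z]) (hf0 z))

lemma n1_of_nonneg (hf0 : ∀ y, 0 ≤ f y) (hf1 : ∫ y, f y = 1) : n1 f = 1 := by
  unfold n1; simp_rw [abs_of_nonneg (hf0 _)]; exact hf1

lemma step4 (hχ : BM χ) (hχe : Ev χ) (hχ0 : ∀ y, 0 ≤ χ y) (hχ1 : ∀ y, χ y ≤ 1)
    (he : BM e) (hsh : ∀ x y, |χ (y + x) - χ y| ≤ e x)
    (hf : Good f) (hfe : Ev f) (hf0 : ∀ y, 0 ≤ f y) (hf1 : ∫ y, f y = 1) (x : Euc m) :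
    n1 (tau F x (Kop f volume f)) ≤ WW F χ f x + e x + (∫ x, e x ∂F) +
      (∫ y, (1 - χ y) * f y) * n1 (tau F x f) := by
  have g1 := hχ.mul_good hf
  have g2 : Good (fun z => (1 - χ z) * f z) := ((BM.const 1).sub hχ).mul_good hf
  have e1 : tau F x (Kop f volume f) = fun y => Kop f volume (tau F x (fun z => χ z * f z)) y +
      Kop (fun z => (1 - χ z) * f z) volume (tau F x f) y := by
    rw [← tau_kop hf.wt g1.bm, ← tau_kop g2.wt hf.bm, split_f hχ hχe hf hfe]
    ext y
    simp only [tau]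
    rw [top_add (g1.kop hf.wt).bm (hf.kop g2.wt).bm]
    ring
  rw [e1]
  have b0 := n1_of_nonneg hf0 hf1
  have b1 := n1_add_le ((tau_good (F := F) g1 x).kop hf.wt) ((tau_good (F := F) hf x).kop g2.wt)
  have b2 := n1_kop_le hf.wt (tau_good (F := F) g1 x)
  have b3 := n1_kop_le g2.wt (tau_good (F := F) hf x)
  have b4 := tau_p (F := F) hχ hχ0 he hsh hf x
  rw [q_n1 hχ1 hf0] at b3
  change _ ≤ n1 f * _ at b2
  rw [b0] at b2 b4
  linarith

/-- quadratic functional -/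
def QQ (F : Measure (Euc m)) (f : Euc m → ℝ) : ℝ := ∫ x, n1 (tau F x f) ^ 2 ∂F

lemma n1tau_bm (hf : Good f) : BM (fun x => n1 (tau F x f)) := by
  refine ⟨?_, 2 * n1 f, fun x => ?_⟩
  · have := WW_meas (F := F) (BM.const 1) hf.bm
    convert this using 2
    simp [WW, n1]
  · rw [abs_of_nonneg (n1_nonneg _)]; exact n1_tau_le hf x

lemma BM.sq_int (hg : BM g) : Integrable (fun x => g x ^ 2) F := by
  simpa [pow_two] using ((hg.mul hg).wt (μ := F)).int

lemma QQ_le (hf : Good f) : QQ F f ≤ (2 * n1 f)^2 := by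
  unfold QQ
  calc _ ≤ ∫ x, (2 * n1 f)^2 ∂F := integral_mono (n1tau_bm hf).sq_int (integrable_const _) fun x =>
        pow_le_pow_left₀ (n1_nonneg _) (n1_tau_le hf x) 2
    _ = _ := by simp

lemma QQ_rec (hχ : BM χ) (hχe : Ev χ) (hχ0 : ∀ y, 0 ≤ χ y) (hχ1 : ∀ y, χ y ≤ 1)
    (he : BM e) (hsh : ∀ x y, |χ (y + x) - χ y| ≤ e x)
    (hf : Good f) (hfe : Ev f) (hf0 : ∀ y, 0 ≤ f y) (hf1 : ∫ y, f y = 1) :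
    QQ F (Kop f volume f) ≤ 6 * (∫ x, WW F χ f x ^ 2 ∂F) + 12 * (∫ x, e x ^ 2 ∂F) +
      2 * (∫ y, (1 - χ y) * f y)^2 * QQ F f := by
  set δ := ∫ y, (1 - χ y) * f y
  set eb := ∫ x, e x ∂F with heb
  have hj := jensen_prob (F := F) he
  have hWb : BM (WW F χ f) := by
    refine ⟨WW_meas hχ hf.bm, 2 * n1 f, fun x => ?_⟩
    rw [abs_of_nonneg (WW_nonneg hχ0 x)]
    exact (WW_le hχ hχ1 hf x).trans (n1_tau_le hf x)
  have hb : ∀ x, n1 (tau F x (Kop f volume f))^2 ≤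
      ((6 * WW F χ f x ^ 2 + 6 * e x ^ 2) + 6 * eb ^ 2) + 2 * δ^2 * n1 (tau F x f)^2 := by
    intro x
    have h1 := step4 (F := F) hχ hχe hχ0 hχ1 he hsh hf hfe hf0 hf1 x
    refine (pow_le_pow_left₀ (n1_nonneg _) h1 2).trans ?_
    set a := WW F χ f x
    set b := e x
    set d := δ * n1 (tau F x f) with hd
    have : 2 * δ^2 * n1 (tau F x f)^2 = 2 * d^2 := by rw [hd]; ring
    rw [this]
    nlinarith [sq_nonneg (a + b + eb - d), sq_nonneg (a-b), sq_nonneg (b-eb), sq_nonneg (a-eb)]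
  have i1 := (hWb.sq_int (F := F)).const_mul 6
  have i2 := (he.sq_int (F := F)).const_mul 6
  have i4 := ((n1tau_bm (F := F) hf).sq_int (F := F)).const_mul (2 * δ^2)
  have := integral_mono (n1tau_bm (hf.kop hf.wt)).sq_int (iadd (iadd (iadd i1 i2) (integrable_const (6 * eb^2))) i4) hb
  rw [integral_add (iadd (iadd i1 i2) (integrable_const (6 * eb^2))) i4, integral_add (iadd i1 i2) (integrable_const _),
    integral_add i1 i2, integral_const_mul, integral_const_mul, integral_const_mul] at this
  simp only [integral_const, probReal_univ, smul_eq_mul, one_mul, integral_const_mul] at this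
  unfold QQ at *
  rw [← heb] at hj
  linarith

/-- (1-T)/2 -/
def SS (F : Measure (Euc m)) (g : Euc m → ℝ) : Euc m → ℝ := fun y => (1/2) * (g y - TT F g y)

lemma Good.ss (hg : Good g) : Good (SS F g) := (hg.sub hg.top).const_mul _
lemma Good.ssi (hg : Good g) (n : ℕ) : Good ((SS F)^[n] g) := by
  induction n with
  | zero => exact hg
  | succ n ih => rw [Function.iterate_succ_apply']; exact ih.ss
lemma n1_ss_le (hg : Good g) : n1 (SS F g) ≤ n1 g := by
  unfold SS
  rw [n1_const_mul]
  have := n1_sub_le hg (hg.top (F := F))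
  have := n1_top_le (F := F) hg
  rw [abs_of_pos (by norm_num)]
  linarith
lemma n1_ssi_le (hg : Good g) (n : ℕ) : n1 ((SS F)^[n] g) ≤ n1 g := by
  induction n with
  | zero => exact le_rfl
  | succ n ih => rw [Function.iterate_succ_apply']; exact (n1_ss_le (hg.ssi n)).trans ih
lemma ss_kop (hw : Wt w volume) (hg : BM g) : SS F (Kop w volume g) = Kop w volume (SS F g) := by
  unfold SS
  rw [kop_const_mul, kop_sub hw hg hg.top, top_kop hw hg]
lemma ssi_kop (hw : Wt w volume) (hg : Good g) (n : ℕ) :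
    (SS F)^[n] (Kop w volume g) = Kop w volume ((SS F)^[n] g) := by
  induction n with
  | zero => rfl
  | succ n ih => simp only [Function.iterate_succ_apply', ih]; exact ss_kop hw (hg.ssi n).bm
lemma ss_add (hg : BM g) (hh : BM h) : SS F (fun y => g y + h y) = fun y => SS F g y + SS F h y := by
  unfold SS; rw [top_add hg hh]; ext y; ring
lemma ssi_add (hg : Good g) (hh : Good h) (n : ℕ) :
    (SS F)^[n] (fun y => g y + h y) = fun y => (SS F)^[n] g y + (SS F)^[n] h y := by
  induction n with
  | zero => rfl
  | succ n ih => simp only [Function.iterate_succ_apply', ih]; exact ss_add (hg.ssi n).bm (hh.ssi n).bm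
lemma ss_sub (hg : BM g) (hh : BM h) : SS F (fun y => g y - h y) = fun y => SS F g y - SS F h y := by
  unfold SS; rw [top_sub hg hh]; ext y; ring
lemma Ev.ssi (hF : F.map (fun x => -x) = F) (hg : Ev g) (n : ℕ) : Ev ((SS F)^[n] g) := by
  induction n with
  | zero => exact hg
  | succ n ih =>
    rw [Function.iterate_succ_apply']
    intro y
    simp only [SS]
    rw [ih y, ih.top hF y]

lemma comm_S (hχ : BM χ) (he : BM e) (hsh : ∀ x y, |χ (y + x) - χ y| ≤ e x) (hg : Good g) (D : ℕ) :
    n1 (fun y => (SS F)^[D] (fun z => χ z * g z) y - χ y * (SS F)^[D] g y) ≤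
      D * ((∫ x, e x ∂F) / 2) * n1 g := by
  have he0 : ∀ x, 0 ≤ e x := fun x => (abs_nonneg _).trans (hsh x 0)
  have heb : 0 ≤ ∫ x, e x ∂F := integral_nonneg he0
  have hp := hχ.mul_good hg
  induction D with
  | zero => simp [n1]
  | succ D ih =>
    have hG := hg.ssi (F := F) D
    have hP := hp.ssi (F := F) D
    set G := (SS F)^[D] g
    set P := (SS F)^[D] (fun z => χ z * g z)
    have hχG := hχ.mul_good hG
    have e1 : (fun y => (SS F)^[D+1] (fun z => χ z * g z) y - χ y * (SS F)^[D+1] g y) =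
        fun y => SS F (fun z => P z - χ z * G z) y +
          (-1/2) * (TT F (fun z => χ z * G z) y - χ y * TT F G y) := by
      ext y
      rw [ss_sub hP.bm hχG.bm]
      simp only [Function.iterate_succ_apply']
      change SS F P y - χ y * SS F G y = _
      simp only [SS]
      ring
    rw [e1]
    have g3 : Good (fun y => TT F (fun z => χ z * G z) y - χ y * TT F G y) := hχG.top.sub (hχ.mul_good hG.top)
    refine (n1_add_le (hP.sub hχG).ss (g3.const_mul _)).trans ?_
    have b1 := n1_ss_le (F := F) (hP.sub hχG)
    have b2 := comm_T (F := F) hχ he hsh hG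
    have b3 := n1_ssi_le (F := F) hg D
    rw [n1_const_mul]
    have : |(-1/2 : ℝ)| = 1/2 := by norm_num [abs_div]
    rw [this]
    have b4 := mul_le_mul_of_nonneg_left b3 heb
    push_cast
    change _ ≤ n1 (fun y => P y - χ y * G y) at b1
    nlinarith

lemma step5 (hχ : BM χ) (hχe : Ev χ) (hχ1 : ∀ y, χ y ≤ 1)
    (he : BM e) (hsh : ∀ x y, |χ (y + x) - χ y| ≤ e x)
    (hf : Good f) (hfe : Ev f) (hf0 : ∀ y, 0 ≤ f y) (hf1 : ∫ y, f y = 1) (D : ℕ) :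
    n1 ((SS F)^[D] (Kop f volume f)) ≤ n1 (fun y => χ y * (SS F)^[D] f y) + D * ((∫ x, e x ∂F) / 2) +
      (∫ y, (1 - χ y) * f y) * n1 ((SS F)^[D] f) := by
  have g1 := hχ.mul_good hf
  have g2 : Good (fun z => (1 - χ z) * f z) := ((BM.const 1).sub hχ).mul_good hf
  rw [split_f hχ hχe hf hfe, ssi_add (g1.kop hf.wt) (hf.kop g2.wt), ssi_kop hf.wt g1, ssi_kop g2.wt hf]
  refine (n1_add_le ((g1.ssi D).kop hf.wt) ((hf.ssi D).kop g2.wt)).trans ?_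
  have b0 := n1_of_nonneg hf0 hf1
  have b2 := n1_kop_le hf.wt (g1.ssi (F := F) D)
  have b3 := n1_kop_le g2.wt (hf.ssi (F := F) D)
  rw [q_n1 hχ1 hf0] at b3
  change _ ≤ n1 f * _ at b2
  have b4 := comm_S (F := F) hχ he hsh hf D
  rw [b0] at b2 b4
  have b5 := n1_add_le ((g1.ssi (F := F) D).sub (hχ.mul_good (hf.ssi (F := F) D))) (hχ.mul_good (hf.ssi (F := F) D))
  simp only [sub_add_cancel] at b5
  linarith

lemma cs_int {a b : Euc m → ℝ} (ha : Good a) (hb : Good b) :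
    (∫ y, a y * b y)^2 ≤ (∫ y, a y ^ 2) * ∫ y, b y ^ 2 := by
  have ia : Integrable (fun y => a y ^ 2) := by simpa [pow_two] using (ha.bm.mul_good ha).int
  have ib : Integrable (fun y => b y ^ 2) := by simpa [pow_two] using (hb.bm.mul_good hb).int
  have iab := (ha.bm.mul_good hb).int
  have : ∀ s : ℝ, 0 ≤ (∫ y, b y ^ 2) * (s * s) + (-2 * ∫ y, a y * b y) * s + ∫ y, a y ^ 2 := by
    intro s
    have h0 : 0 ≤ ∫ y, (s*s) * b y ^ 2 + (-2 * s) * (a y * b y) + a y ^ 2 :=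
      integral_nonneg fun y => by
        have := sq_nonneg (a y - s * b y)
        simp only [Pi.zero_apply]
        nlinarith
    rw [integral_add (iadd (ib.const_mul _) (iab.const_mul _)) ia, integral_add (ib.const_mul _) (iab.const_mul _),
      integral_const_mul, integral_const_mul] at h0
    linarith
  have h := discrim_le_zero this
  unfold discrim at h
  nlinarith

lemma pow_mul_le {a : ℝ} (h0 : 0 ≤ a) (h1 : a ≤ 1) {n : ℕ} (hn : 1 ≤ n) : (1 - a) * a ^ n ≤ 1 / n := by
  have hn0 : (0:ℝ) < n := by exact_mod_cast hn
  rw [le_div_iff₀ hn0]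
  have h2 : (n:ℝ) * a^n ≤ ∑ i ∈ Finset.range n, a ^ i := by
    rw [← nsmul_eq_mul]
    have := Finset.card_nsmul_le_sum (Finset.range n) (fun i => a^i) (a^n) (fun i hi => by
      exact pow_le_pow_of_le_one h0 h1 (Finset.mem_range.1 hi).le)
    simpa using this
  have h3 := mul_neg_geom_sum a n
  have h4 : 0 ≤ a^n := by positivity
  nlinarith [mul_le_mul_of_nonneg_left h2 (sub_nonneg.2 h1)]

lemma CRep.ss {ρ : Euc m → ℝ} (hF : Adm F) (hρ : Integrable ρ) (h : CRep ρ g) :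
    CRep (fun t => ((1 - Fc F t)/2) * ρ t) (SS F g) := by
  intro y
  unfold SS
  rw [h y, CRep.top hF.symm hρ h y, ← integral_sub (CRep.wt_int hρ y) (CRep.wt_int (Fc_mul_int hρ) y), ← integral_const_mul]
  congr 1; ext t; ring

lemma Fs_int {ρ : Euc m → ℝ} (hF : Adm F) (hρ : Integrable ρ) (n : ℕ) :
    Integrable (fun t => ((1 - Fc F t)/2)^n * ρ t) := by
  refine hρ.bdd_mul (c := 1) ?_ (.of_forall fun t => ?_)
  · have := Fc_meas (F := F); exact (by fun_prop : Measurable fun t => ((1 - Fc F t)/2)^n).aestronglyMeasurable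
  · rw [norm_pow]
    apply pow_le_one₀ (norm_nonneg _)
    rw [Real.norm_eq_abs, abs_of_nonneg] <;> linarith [hF.pos t, Fc_le_one (F := F) t]

lemma CRep.ssi {ρ : Euc m → ℝ} (hF : Adm F) (hρ : Integrable ρ) (h : CRep ρ g) (n : ℕ) :
    CRep (fun t => ((1 - Fc F t)/2)^n * ρ t) ((SS F)^[n] g) := by
  induction n with
  | zero => simpa using h
  | succ n ih =>
    rw [Function.iterate_succ_apply']
    have := CRep.ss hF (Fs_int hF hρ n) ih
    convert this using 2
    ring

lemma ss_sq_eq (hF : Adm F) (hf : Good f) (hfe : Ev f) (D : ℕ) :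
    Kop ((SS F)^[D] f) volume ((SS F)^[D] f) = (SS F)^[2*D] (Kop f volume f) := by
  rw [← ssi_kop (hf.ssi D).wt hf, kop_swap (hfe.ssi hF.symm D) hfe, ← ssi_kop hf.wt hf,
    ← Function.iterate_add_apply, two_mul]

lemma ss_sq (hF : Adm F) {N j : ℕ} (hN : 1 ≤ N) (hj : 1 ≤ j) {D : ℕ} (hD : 1 ≤ D) :
    ∫ y, ((SS F)^[D] (fj F N j)) y ^ 2 ≤ cc m ((2*j:ℕ)/N) * ((1/4)^D / (2*j:ℕ)) := by
  have hf := fj_good (F := F) hN hj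
  have hj2 : 1 ≤ 2 * j := by omega
  have e1 : ∫ y, ((SS F)^[D] (fj F N j)) y ^ 2 = (SS F)^[2*D] (fj F N (2*j)) 0 := by
    rw [two_mul j, ← fj_conv hF hN hj hj, ← ss_sq_eq hF hf (fj_ev hF)]
    simp [Kop, pow_two]
  have hρ : Integrable (fun t : Euc m => Fc F t ^ (2*j) * (cc m (((2*j:ℕ):ℝ)/N) * kk (1/(((2*j:ℕ):ℝ)/N)) t)) :=
    Fc_pow_mul_int (kk_rep_int (jN_pos hN hj2)) _
  rw [e1, CRep.ssi hF hρ (fj_rep hF hN hj2) (2*D) 0]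
  have hc := cc_pos (m := m) (jN_pos hN hj2)
  have hk := kk_int (m := m) (one_div_pos.2 (jN_pos hN hj2))
  have := integral_mono (CRep.wt_int (Fs_int hF hρ (2*D)) 0)
    (hk.const_mul (cc m (((2*j:ℕ):ℝ)/N) * ((1/4)^D / (2*j:ℕ)))) fun t => by
      simp only [inner_zero_right, Real.cos_zero, one_mul]
      have hk0 := (kk_pos (m := m) (one_div_pos.2 (jN_pos hN hj2)) t).le
      have h0 := hF.pos t
      have h1 := Fc_le_one (F := F) t
      have : ((1 - Fc F t)/2)^(2*D) * Fc F t ^ (2*j) ≤ (1/4)^D / (2*j:ℕ) := by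
        rw [div_pow, pow_mul 2, div_mul_eq_mul_div, div_le_iff₀ (by positivity)]
        have h2 := pow_mul_le h0 h1 hj2
        have h3 : (1 - Fc F t)^(2*D) ≤ 1 - Fc F t := by
          apply pow_le_of_le_one <;> [linarith; linarith; omega]
        have h4 := mul_le_mul_of_nonneg_right h3 (pow_nonneg h0 (2*j))
        refine (h4.trans h2).trans (le_of_eq ?_)
        rw [div_mul_eq_mul_div, ← mul_pow]
        norm_num
      calc _ = (((1 - Fc F t)/2)^(2*D) * Fc F t ^ (2*j)) * (cc m (((2*j:ℕ):ℝ)/N) * kk (1/(((2*j:ℕ):ℝ)/N)) t) := by ring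
        _ ≤ ((1/4)^D / (2*j:ℕ)) * (cc m (((2*j:ℕ):ℝ)/N) * kk (1/(((2*j:ℕ):ℝ)/N)) t) :=
          mul_le_mul_of_nonneg_right this (mul_nonneg hc.le hk0)
        _ = _ := by ring
  rw [integral_const_mul, kk_integral (one_div_pos.2 (jN_pos hN hj2)), mul_one] at this
  exact this

lemma step7 (hF : Adm F) (hf : Good f) (hfe : Ev f) :
    n1 (fun y => Kop f volume f y - TT F (TT F (Kop f volume f)) y) ≤ QQ F f := by
  have hT := hf.top (F := F)
  have hTe : Ev (TT F f) := hfe.top hF.symm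
  set A := Kop f volume (TT F f) with hA
  have gA : Good A := hT.kop hf.wt
  have gf := hf.kop hf.wt
  have gC : Good (Kop (TT F f) volume (TT F f)) := hT.kop hT.wt
  -- T^2 f2
  have eT : TT F A = TT F (TT F (Kop f volume f)) := by
    rw [top_kop hf.wt hf.bm]
  have eC : Kop (TT F f) volume (TT F f) = TT F A := by
    rw [← top_kop hT.wt hf.bm, kop_swap hTe hfe]
  have eB : Kop (TT F f) volume f = A := kop_swap hTe hfe
  have eK : ∀ x y, Kop (tau F x f) volume (tau F x f) y =
      (Kop f volume f y - A (y - x) - A (y + x)) + Kop (TT F f) volume (TT F f) y := by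
    intro x y
    have w1 := (hf.shift x).wt
    have : Kop (tau F x f) volume (tau F x f) y =
      (Kop (fun z => f (z+x)) volume (fun z => f (z + x)) y - Kop (fun z => f (z+x)) volume (TT F f) y) -
      (Kop (TT F f) volume (fun z => f (z+x)) y - Kop (TT F f) volume (TT F f) y) := by
      unfold tau
      rw [kop_sub_wt w1 hT.wt ((hf.shift x).sub hT).bm, kop_sub w1 (hf.shift x).bm hT.bm,
        kop_sub hT.wt (hf.shift x).bm hT.bm]
    rw [this, kop_shift (TT F f), eB]
    have a1 : Kop (fun z => f (z+x)) volume (fun z => f (z + x)) y = Kop f volume f y := by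
      unfold Kop
      rw [← integral_add_right_eq_self (fun z => f z * f (y + z)) x]
      simp only [add_assoc]
    have a2 : Kop (fun z => f (z+x)) volume (TT F f) y = A (y - x) := by
      rw [hA]; unfold Kop
      rw [← integral_add_right_eq_self (fun z => f z * TT F f (y - x + z)) x]
      congr 1; ext z
      rw [show y - x + (z + x) = y + z by abel]
    rw [a1, a2]; ring
  have iA1 := kop_prod_int (wt_one (F := F)) gA
  have iA2 : Integrable (fun p : Euc m × Euc m => A (p.2 - p.1)) (F.prod volume) := by
    have hm : AEStronglyMeasurable (fun p : Euc m × Euc m => A (p.2 - p.1)) (F.prod volume) :=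
      (gA.meas.comp (measurable_snd.sub measurable_fst)).aestronglyMeasurable
    rw [integrable_prod_iff hm]
    have hs : ∀ x : Euc m, Integrable (fun y => A (y - x)) := fun x => by
      simpa [sub_eq_add_neg] using (gA.shift (-x)).int
    refine ⟨.of_forall hs, ?_⟩
    have : ∀ x : Euc m, ∫ y, ‖A (y - x)‖ = n1 A := fun x => by
      rw [← n1_shift A (-x)]; simp [sub_eq_add_neg, n1]
    simp only [this]
    exact integrable_const _
  have iG : ∀ g : Euc m → ℝ, Good g → Integrable (fun p : Euc m × Euc m => g p.2) (F.prod volume) := by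
    intro g hg
    simpa using (integrable_const (1:ℝ) (μ := F)).mul_prod hg.int
  simp only [one_mul] at iA1
  have iK : Integrable (fun p : Euc m × Euc m => Kop (tau F p.1 f) volume (tau F p.1 f) p.2) (F.prod volume) := by
    simp_rw [eK]
    exact (((iG _ gf).sub iA2).sub iA1).add (iG _ gC)
  have eM : ∀ y, Kop f volume f y - TT F (TT F (Kop f volume f)) y =
      ∫ x, Kop (tau F x f) volume (tau F x f) y ∂F := by
    intro y
    simp_rw [eK]
    have j1 := top_int (F := F) gA.bm y
    have j2 : Integrable (fun x => A (y - x)) F := by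
      refine (BM.wt (μ := F) (g := fun x => A (y - x)) ⟨gA.meas.comp (measurable_const_sub y), ?_⟩).int
      obtain ⟨M, hM⟩ := gA.bdd
      exact ⟨M, fun x => hM _⟩
    have j3 : Integrable (fun _ : Euc m => Kop f volume f y) F := integrable_const _
    rw [integral_add (isub (isub j3 j2) j1) (integrable_const _), integral_sub (isub j3 j2) j1,
      integral_sub j3 j2]
    have a1 : ∫ x, A (y + x) ∂F = TT F A y := rfl
    have a2 : ∫ x, A (y - x) ∂F = TT F A y := by
      conv_lhs => rw [← hF.symm]
      rw [integral_neg_map]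
      simp [TT]
    rw [a1, a2, eC, ← eT]
    simp
  calc n1 (fun y => Kop f volume f y - TT F (TT F (Kop f volume f)) y)
      = ∫ y, |∫ x, Kop (tau F x f) volume (tau F x f) y ∂F| := by unfold n1; simp_rw [eM]
    _ ≤ ∫ y, ∫ x, |Kop (tau F x f) volume (tau F x f) y| ∂F := by
        refine integral_mono_of_nonneg (.of_forall fun y => abs_nonneg _) iK.abs.integral_prod_right (.of_forall fun y => ?_)
        exact abs_integral_le_integral_abs
    _ = ∫ x, n1 (Kop (tau F x f) volume (tau F x f)) ∂F := by
        rw [← integral_integral_swap iK.abs]; rfl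
    _ ≤ QQ F f := by
        refine integral_mono_of_nonneg (.of_forall fun y => n1_nonneg _) (n1tau_bm hf).sq_int (.of_forall fun x => ?_)
        have := n1_kop_le (tau_good (F := F) hf x).wt (tau_good (F := F) hf x)
        simp only [pow_two]
        exact this

lemma step7b (hg : Good g) (K : ℕ) :
    n1 (fun y => g y - TT F g y) ≤ (K/2) * n1 (fun y => g y - TT F (TT F g) y) + 2 * n1 ((SS F)^[K+1] g) := by
  have hX : Good (fun y => g y - TT F (TT F g) y) := hg.sub hg.top.top
  induction K with
  | zero =>
    simp only [Nat.cast_zero, zero_div, zero_mul, zero_add, Function.iterate_one]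
    unfold SS
    rw [n1_const_mul, abs_of_pos (by norm_num)]
    linarith
  | succ K ih =>
    have e0 : ∀ n, (SS F)^[n] (fun y => (1/4) * (g y - TT F (TT F g) y)) =
        fun y => (SS F)^[n+1] g y - (SS F)^[n+2] g y := by
      intro n
      induction n with
      | zero =>
        ext y
        simp only [Function.iterate_zero, id, Function.iterate_succ, Function.comp, SS]
        have hh : TT F (SS F g) y = 1/2 * (TT F g y - TT F (TT F g) y) := by
          change TT F (fun y => (1/2) * (g y - TT F g y)) y = _
          rw [top_const_mul, top_sub hg.bm hg.top.bm]
        rw [hh]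
        ring
      | succ n ihn =>
        rw [Function.iterate_succ_apply', ihn, ss_sub (hg.ssi _).bm (hg.ssi _).bm]
        simp only [Function.iterate_succ_apply']
    have b1 := n1_ssi_le (F := F) (hX.const_mul (1/4)) K
    rw [e0, n1_const_mul, abs_of_pos (by norm_num)] at b1
    have b2 := n1_add_le ((hg.ssi (F := F) (K+1)).sub (hg.ssi (F := F) (K+2))) (hg.ssi (F := F) (K+2))
    simp only [sub_add_cancel] at b2
    push_cast
    change n1 ((SS F)^[K+1] g) ≤ _ at b2
    linarith

lemma step7c (hF : Adm F) (hf : Good f) (hfe : Ev f) {D : ℕ} (hD : 1 ≤ D) :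
    n1 (fun y => Kop f volume f y - TT F (Kop f volume f) y) ≤ D * QQ F f + 2 * n1 ((SS F)^[D] f) ^ 2 := by
  have h1 := step7b (F := F) (hf.kop hf.wt) (2*D-1)
  have h2 := step7 hF hf hfe
  rw [show 2*D-1+1 = 2*D by omega, ← ss_sq_eq hF hf hfe] at h1
  have h3 := n1_kop_le (hf.ssi (F := F) D).wt (hf.ssi (F := F) D)
  have h4 : ((2*D-1:ℕ):ℝ)/2 ≤ D := by
    rw [div_le_iff₀ (by norm_num)]
    have : ((2*D-1:ℕ):ℝ) ≤ ((2*D:ℕ):ℝ) := by exact_mod_cast (by omega)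
    push_cast at this ⊢; linarith
  have h5 : 0 ≤ n1 (fun y => Kop f volume f y - TT F (TT F (Kop f volume f)) y) := n1_nonneg _
  have h6 := mul_le_mul h4 h2 h5 (by positivity)
  change _ ≤ n1 ((SS F)^[D] f) * _ at h3
  nlinarith

end S15
end

noncomputable section
namespace S15
open MeasureTheory RealInnerProductSpace

variable {m : ℕ} {F : Measure (Euc m)} [IsProbabilityMeasure F]

lemma cc_eq {θ : ℝ} (hθ : 0 < θ) : cc m (1/θ) = cc m 1 * θ ^ ((m:ℝ)/2) := by
  unfold cc
  rw [Real.mul_rpow (by positivity) (by positivity), mul_one, one_div, Real.inv_rpow hθ.le, neg_div,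
    Real.rpow_neg hθ.le, inv_inv]

lemma rpow_half_le {ρ : ℝ} (hρ : 1 ≤ ρ) : ρ ^ ((m:ℝ)/2) ≤ ρ ^ m := by
  rw [← Real.rpow_natCast]
  exact Real.rpow_le_rpow_of_exponent_le hρ (by linarith [(Nat.cast_nonneg m : (0:ℝ) ≤ m)])

variable {N j : ℕ}

lemma WW_bound (hF : Adm F) (hN : 1 ≤ N) (hj : 1 ≤ j) (hjN : j ≤ N) :
    ∫ x, WW F (chi F N) (fj F N j) x ^ 2 ∂F ≤
      6 * (m+1) * (1 + Real.log (1/phi F N)) * ((N:ℝ)/j)^2 / N := by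
  have hN' : (0:ℝ) < N := by exact_mod_cast hN
  have hj' : (0:ℝ) < j := by exact_mod_cast hj
  have hρ : 1 ≤ (N:ℝ)/j := by rw [one_le_div hj']; exact_mod_cast hjN
  have hL := log_phi_nonneg (F := F) hF hN
  have hphi := phi_pos (F := F) hF hN
  set L := Real.log (1/phi F N) with hLd
  set ρ := (N:ℝ)/j with hρd
  have hθ : (j:ℝ)/N = 1/ρ := by rw [hρd]; field_simp
  have hρ0 : 0 < ρ := by linarith
  have hC : cc m ((j:ℝ)/N) = cc m 1 * ρ ^ ((m:ℝ)/2) := by rw [hθ, cc_eq hρ0]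
  have hA : fj F N N 0 = cc m 1 * phi F N := fN_zero hF hN
  have hc1 : 0 < cc m 1 := cc_pos one_pos
  have hrp : 1 ≤ ρ ^ ((m:ℝ)/2) := Real.one_le_rpow hρ (by positivity)
  have h := lev2 (F := F) (kk_good (m := m) (jN_pos hN hj)) (kk_pos (jN_pos hN hj)) (kk_le (jN_pos hN hj))
    (kk_integral (jN_pos hN hj)) (chi_good hN) (fun y => (chi_pos hF hN y).le) (chi_le hF hN)
    (A := fj F N N 0) (fj_pos hN hN 0) (by
      rw [hA, hC]
      have := phi_le_one (F := F) (N := N) hF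
      exact mul_le_mul_of_nonneg_left (by linarith) hc1.le) (chi_integral hN) j
  have hlog : Real.log (cc m ((j:ℝ)/N) / fj F N N 0) = (m:ℝ)/2 * Real.log ρ + L := by
    rw [hC, hA, mul_div_mul_left _ _ hc1.ne', Real.log_div (by positivity) hphi.ne', Real.log_rpow hρ0, hLd,
      one_div, Real.log_inv]; ring
  rw [hlog] at h
  have hlr : Real.log ρ ≤ ρ := (Real.log_le_sub_one_of_pos hρ0).trans (by linarith)
  have hm : (0:ℝ) ≤ m := Nat.cast_nonneg m
  have hnum : (m:ℝ)/2 * Real.log ρ + L + 1 ≤ (m+1) * (1+L) * ρ := by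
    have : (m:ℝ)/2 * Real.log ρ ≤ m/2*ρ := mul_le_mul_of_nonneg_left hlr (by positivity)
    have h3 : 0 ≤ (ρ - 1) * (1+L) := mul_nonneg (by linarith) (by linarith)
    have h4 : 0 ≤ m * L * ρ := by positivity
    have h5 : 0 ≤ m * ρ := by positivity
    nlinarith
  have hnn : 0 ≤ (m:ℝ)/2 * Real.log ρ + L + 1 := by
    have := Real.log_nonneg hρ
    positivity
  refine h.trans ?_
  calc 6 * ((m:ℝ)/2 * Real.log ρ + L + 1) / (j+1:ℕ) ≤ 6 * ((m:ℝ)/2 * Real.log ρ + L + 1) / j := by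
        apply div_le_div_of_nonneg_left (by positivity) hj'
        push_cast; linarith
    _ ≤ 6 * ((m+1) * (1+L) * ρ) / j := by gcongr
    _ = _ := by rw [hρd]; field_simp

lemma delta_nonneg (hF : Adm F) (hN : 1 ≤ N) (hj : 1 ≤ j) : 0 ≤ ∫ y, (1 - chi F N y) * fj F N j y :=
  integral_nonneg fun y => mul_nonneg (by linarith [chi_le hF hN y]) (fj_pos hN hj y).le

lemma QQ_bound (hF : Adm F) (hN : 1 ≤ N) (hj : 1 ≤ j) (hjN : j ≤ N) :
    QQ F (fj F N (2*j)) ≤ 60 * (m+1) * (1 + Real.log (1/phi F N))^3 * ((N:ℝ)/j)^(m+2) / N +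
      2 * (∫ y, (1 - chi F N y) * fj F N j y)^2 * QQ F (fj F N j) := by
  have h := QQ_rec (F := F) (chi_good hN).bm (chi_ev hF) (fun y => (chi_pos hF hN y).le) (chi_le hF hN)
    (ee_bm hF hN) (chi_shift hF hN) (fj_good hN hj) (fj_ev hF) (fun y => (fj_pos hN hj y).le) (fj_integral hN hj)
  rw [fj_conv hF hN hj hj, ← two_mul] at h
  refine h.trans ?_
  have h1 := WW_bound hF hN hj hjN
  have h2 := ee_int (F := F) hF hN
  have hN' : (0:ℝ) < N := by exact_mod_cast hN
  have hj' : (0:ℝ) < j := by exact_mod_cast hj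
  have hρ : 1 ≤ (N:ℝ)/j := by rw [one_le_div hj']; exact_mod_cast hjN
  have hL := log_phi_nonneg (F := F) hF hN
  set L := Real.log (1/phi F N)
  set ρ := (N:ℝ)/j
  have e1 : 6 * (6 * (m+1) * (1 + L) * ρ^2 / N) + 12 * (2 * L / N) ≤
      60 * (m+1) * (1 + L)^3 * ρ^(m+2) / N := by
    rw [mul_div_assoc', mul_div_assoc', ← add_div]
    gcongr
    have p1 : ρ^2 ≤ ρ^(m+2) := pow_le_pow_right₀ hρ (by omega)
    have p2 : (1+L) ≤ (1+L)^3 := le_self_pow₀ (by linarith) (by norm_num)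
    have p3 : 1 ≤ ρ^(m+2) := one_le_pow₀ hρ
    have hm : (0:ℝ) ≤ m := Nat.cast_nonneg m
    have q1 : (m+1) * (1+L) * ρ^2 ≤ (m+1) * (1+L)^3 * ρ^(m+2) := by gcongr
    have q2 : L ≤ (m+1) * (1+L)^3 * ρ^(m+2) := by
      calc L ≤ 1 * (1+L) * 1 := by linarith
        _ ≤ _ := by gcongr; linarith
    linarith
  linarith

lemma vv_bound (hF : Adm F) (hN : 1 ≤ N) (hj : 1 ≤ j) (hjN : j ≤ N) {D : ℕ} (hD : 1 ≤ D)
    (hDl : 1 + Real.log (1/phi F N) ≤ D) (hDu : (D:ℝ) ≤ 2 * (1 + Real.log (1/phi F N))) :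
    n1 ((SS F)^[D] (fj F N (2*j)))^2 ≤ 60 * (m+1) * (1 + Real.log (1/phi F N))^3 * ((N:ℝ)/j)^(m+2) / N +
      2 * (∫ y, (1 - chi F N y) * fj F N j y)^2 * n1 ((SS F)^[D] (fj F N j))^2 := by
  have h := step5 (F := F) (chi_good hN).bm (chi_ev hF) (chi_le hF hN)
    (ee_bm hF hN) (chi_shift hF hN) (fj_good hN hj) (fj_ev hF) (fun y => (fj_pos hN hj y).le) (fj_integral hN hj) D
  rw [fj_conv hF hN hj hj, ← two_mul] at h
  have hsq := ss_sq hF hN hj hD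
  have hN' : (0:ℝ) < N := by exact_mod_cast hN
  have hj' : (0:ℝ) < j := by exact_mod_cast hj
  have hρ : 1 ≤ (N:ℝ)/j := by rw [one_le_div hj']; exact_mod_cast hjN
  have hL := log_phi_nonneg (F := F) hF hN
  have hphi := phi_pos (F := F) hF hN
  have hgS := (fj_good (F := F) hN hj).ssi (F := F) D
  have hcs := cs_int (chi_good (F := F) hN) hgS.abs
  have hδ := delta_nonneg hF hN hj
  have h2 := ee_int (F := F) hF hN
  have h3 := jensen_prob (F := F) (ee_bm hF hN)
  have h0 : 0 ≤ ∫ x, ee F N x ∂F := integral_nonneg fun x => ee_nonneg x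
  have hn : n1 (fun y => chi F N y * (SS F)^[D] (fj F N j) y) = ∫ y, chi F N y * |(SS F)^[D] (fj F N j) y| := by
    unfold n1
    simp_rw [abs_mul, abs_of_pos (chi_pos hF hN _)]
  have hchi2 : ∫ y, chi F N y ^ 2 ≤ 1 / (cc m 1 * phi F N) := by
    rw [← fN_zero hF hN, ← chi_integral hN]
    refine integral_mono ?_ (chi_good hN).int fun y => ?_
    · simp_rw [pow_two]; exact ((chi_good hN).bm.mul_good (chi_good hN)).int
    · have := chi_pos hF hN y; have := chi_le hF hN y
      simp only []; nlinarith
  simp only [sq_abs] at hcs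
  rw [← hn] at hcs
  have hn0 := n1_nonneg (fun y => chi F N y * (SS F)^[D] (fj F N j) y)
  set a := n1 (fun y => chi F N y * (SS F)^[D] (fj F N j) y)
  set eb := ∫ x, ee F N x ∂F
  set δ := ∫ y, (1 - chi F N y) * fj F N j y
  set v := n1 ((SS F)^[D] (fj F N j))
  have hexp : (1/4:ℝ)^D ≤ phi F N := by
    have : Real.exp (-(D:ℝ)) ≤ phi F N := by
      rw [← Real.exp_log hphi]
      apply Real.exp_le_exp.2
      rw [one_div, Real.log_inv] at hDl
      linarith
    refine le_trans ?_ this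
    rw [← mul_one (D:ℝ), ← mul_neg, Real.exp_nat_mul]
    apply pow_le_pow_left₀ (by norm_num)
    rw [Real.exp_neg, one_div]
    apply inv_anti₀ (Real.exp_pos _)
    linarith [Real.exp_one_lt_d9]
  set L := Real.log (1/phi F N)
  set ρ := (N:ℝ)/j with hρd
  have hρ0 : 0 < ρ := by linarith
  have hc1 : 0 < cc m 1 := cc_pos one_pos
  have hcc : cc m ((2*j:ℕ)/N) ≤ cc m 1 * ρ^m := by
    have : ((2*j:ℕ):ℝ)/N = 1/(ρ/2) := by rw [hρd]; push_cast; field_simp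
    rw [this, cc_eq (by positivity)]
    apply mul_le_mul_of_nonneg_left _ hc1.le
    refine le_trans ?_ (rpow_half_le hρ)
    exact Real.rpow_le_rpow (by positivity) (by linarith) (by positivity)
  have ha : a^2 ≤ ρ^(m+1) / (2*N) := by
    calc a^2 ≤ _ := hcs
      _ ≤ (1 / (cc m 1 * phi F N)) * (cc m 1 * ρ^m * (phi F N / (2*j:ℕ))) := by
          refine mul_le_mul hchi2 (hsq.trans ?_) (integral_nonneg fun y => sq_nonneg _) (by positivity)
          gcongr
      _ = ρ^(m+1) / (2*N) := by
          push_cast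
          rw [pow_succ, hρd]
          field_simp
  have he : eb^2 ≤ 2 * L / N := h3.trans h2
  have hv0 : 0 ≤ n1 ((SS F)^[D] (fj F N (2*j))) := n1_nonneg _
  have hvv0 : 0 ≤ v := n1_nonneg _
  have hmain : n1 ((SS F)^[D] (fj F N (2*j)))^2 ≤ 4 * a^2 + D^2 * eb^2 + 2*δ^2*v^2 := by
    refine (pow_le_pow_left₀ hv0 h 2).trans ?_
    nlinarith [sq_nonneg (a + D * (eb/2) - δ*v), sq_nonneg (a - D*(eb/2))]
  refine hmain.trans ?_
  gcongr
  have hD2 : (D:ℝ)^2 ≤ 4 * (1+L)^2 := by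
    calc (D:ℝ)^2 ≤ (2*(1+L))^2 := pow_le_pow_left₀ (by positivity) hDu 2
      _ = _ := by ring
  have hDe : (D:ℝ)^2 * eb^2 ≤ 4 * (1+L)^2 * (2*L/N) := by gcongr
  calc 4 * a^2 + (D:ℝ)^2 * eb^2 ≤ 4 * (ρ^(m+1)/(2*N)) + 4 * (1+L)^2 * (2*L/N) := by linarith
    _ = (2 * ρ^(m+1) + 8 * (1+L)^2 * L)/N := by field_simp; ring
    _ ≤ _ := by
      gcongr
      have p1 : ρ^(m+1) ≤ ρ^(m+2) := pow_le_pow_right₀ hρ (by omega)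
      have p2 : 1 ≤ (1+L)^3 := one_le_pow₀ (by linarith)
      have p3 : 1 ≤ ρ^(m+2) := one_le_pow₀ hρ
      have hm : (0:ℝ) ≤ m := Nat.cast_nonneg m
      have q1 : ρ^(m+1) ≤ (m+1) * (1+L)^3 * ρ^(m+2) := by
        calc ρ^(m+1) ≤ 1 * 1 * ρ^(m+2) := by linarith
          _ ≤ _ := by gcongr; linarith
      have q2 : (1+L)^2 * L ≤ (m+1) * (1+L)^3 * ρ^(m+2) := by
        calc (1+L)^2 * L ≤ 1 * (1+L)^3 * 1 := by nlinarith [sq_nonneg (1+L)]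
          _ ≤ _ := by gcongr; linarith
      have q3 : 0 ≤ (m+1) * (1+L)^3 * ρ^(m+2) := by positivity
      linarith

lemma recur {u : ℕ → ℝ} {B J Nr : ℝ} {a : ℕ} (ha : 1 ≤ a) (hB : 4 ≤ B) (hN : 1 ≤ Nr) (hu : u 1 ≤ 4)
    (h : ∀ j : ℕ, 1 ≤ j → (j:ℝ) ≤ J → u (2*j) ≤ B * (Nr/j)^a/Nr + (1/2)^(a+1) * u j) (i : ℕ) :
    (2:ℝ)^i ≤ 2 * J → u (2^i) ≤ B * 2^(a+1) * (Nr/2^i)^a / Nr := by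
  have hN0 : 0 < Nr := by linarith
  induction i with
  | zero =>
    intro _
    simp only [pow_zero, div_one]
    refine hu.trans ?_
    obtain ⟨b, rfl⟩ := Nat.exists_eq_add_of_le' ha
    have : B * 2^(b+1+1) * Nr^(b+1)/Nr = B * (2^(b+1+1) * Nr^b) := by rw [pow_succ Nr]; field_simp
    rw [this]
    have h1 : (1:ℝ) ≤ 2^(b+1+1) * Nr^b := one_le_mul_of_one_le_of_one_le (one_le_pow₀ (by norm_num)) (one_le_pow₀ hN)
    nlinarith
  | succ i ih =>
    intro hi
    have hi' : (2:ℝ)^i ≤ J := by rw [pow_succ] at hi; linarith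
    have h1 := h (2^i) Nat.one_le_two_pow (by push_cast; exact hi')
    have h2 := ih (by linarith [pow_pos (two_pos : (0:ℝ) < 2) i])
    rw [← pow_succ'] at h1
    push_cast at h1
    refine h1.trans ?_
    have h3 : (1/2:ℝ)^(a+1) * u (2^i) ≤ (1/2)^(a+1) * (B * 2^(a+1) * (Nr/2^i)^a / Nr) := by gcongr
    have h4 : (1/2:ℝ)^(a+1) * (B * 2^(a+1) * (Nr/2^i)^a / Nr) = B * (Nr/2^i)^a/Nr := by
      have : (1/2:ℝ)^(a+1) * 2^(a+1) = 1 := by rw [← mul_pow]; norm_num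
      linear_combination (B * (Nr/2^i)^a/Nr) * this
    have h5 : B * 2^(a+1) * (Nr/2^(i+1))^a / Nr = 2 * (B * (Nr/2^i)^a/Nr) := by
      have : (Nr/2^(i+1))^a = (Nr/2^i)^a / 2^a := by rw [pow_succ 2 i, ← div_div, div_pow _ (2:ℝ)]
      rw [this, pow_succ 2 a]
      field_simp
    linarith

/-- exponent and constant for the core bound -/
def core_const (m : ℕ) : ℝ := 240 * (m+1) * 2^(m+3) * (2*(m+1)*2^(m+4))^(m+2)

lemma core_const_pos (m : ℕ) : 0 < core_const m := by unfold core_const; positivity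

theorem core (hF : Adm F) (hN : 1 ≤ N) :
    n1 (fun y => (TT F)^[N] (kk 1) y - (TT F)^[N+1] (kk 1) y) ≤
      core_const m * (1 + Real.log (1/phi F N))^(m+6) / N := by
  have hN' : (1:ℝ) ≤ N := by exact_mod_cast hN
  have hN0 : (0:ℝ) < N := by linarith
  have hL := log_phi_nonneg (F := F) hF hN
  set L := Real.log (1/phi F N) with hLd
  set l := 1 + L with hl
  have hl1 : 1 ≤ l := by linarith
  have hm : (0:ℝ) ≤ m := Nat.cast_nonneg m
  rw [Function.iterate_succ_apply', ← fj_self hN]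
  set E : ℝ := 2^(m+4) with hE
  have hE1 : 1 ≤ E := one_le_pow₀ (by norm_num)
  set J : ℝ := N / (E * (m+1) * l) with hJ
  set B : ℝ := 60 * (m+1) * l^3 with hB
  have hl3 : 1 ≤ l^3 := one_le_pow₀ hl1
  have hB4 : 4 ≤ B := by
    have : 1 ≤ (m+1) * l^3 := one_le_mul_of_one_le_of_one_le (by linarith) hl3
    rw [hB]; linarith
  have hden : 1 ≤ E * (m+1) * l := by
    apply one_le_mul_of_one_le_of_one_le _ hl1
    exact one_le_mul_of_one_le_of_one_le hE1 (by linarith)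
  have hJN : J ≤ N := div_le_self hN0.le hden
  have hgN := fj_good (F := F) hN hN
  -- constant comparison
  have hcc : core_const m = 240 * (m+1) * 2^(m+3) * (2*(m+1)*E)^(m+2) := rfl
  rcases lt_or_ge J 1 with hJ1 | hJ1
  · have h1 : n1 (fun y => fj F N N y - TT F (fj F N N) y) ≤ 2 := by
      have a1 := n1_sub_le hgN (hgN.top (F := F))
      have a2 := n1_top_le (F := F) hgN
      rw [fj_n1 hN hN] at a1 a2
      linarith
    refine h1.trans ?_
    rw [le_div_iff₀ hN0]
    have h2 : (N:ℝ) ≤ E * (m+1) * l := by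
      rw [hJ, div_lt_one (by linarith)] at hJ1; exact hJ1.le
    have h3 : l ≤ l^(m+6) := le_self_pow₀ hl1 (by omega)
    have h4 : (2*(m+1)*E) ≤ (2*(m+1)*E)^(m+2) := le_self_pow₀ (by nlinarith) (by omega)
    have h5 : (1:ℝ) ≤ 240 * (m+1) * 2^(m+3) := by
      apply one_le_mul_of_one_le_of_one_le (by linarith) (one_le_pow₀ (by norm_num))
    calc 2 * (N:ℝ) ≤ 2 * (E * (m+1) * l) := by linarith
      _ = 1 * (2 * (m+1) * E) * l := by ring
      _ ≤ core_const m * l^(m+6) := by rw [hcc]; gcongr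
  · obtain ⟨i, hi1, hi2⟩ := exists_nat_pow_near hJ1 (one_lt_two)
    set j := 2^i with hj
    have hj1 : 1 ≤ j := Nat.one_le_two_pow
    have hjc : (j:ℝ) = 2^i := by rw [hj]; push_cast; rfl
    set D := ⌈l⌉₊ with hD
    have hD1 : 1 ≤ D := Nat.one_le_ceil_iff.2 (by linarith)
    have hDl : l ≤ D := Nat.le_ceil l
    have hDu : (D:ℝ) ≤ 2 * l := by have := Nat.ceil_lt_add_one (show 0 ≤ l by linarith); linarith
    have hstep : ∀ j : ℕ, 1 ≤ j → (j:ℝ) ≤ J → j ≤ N ∧ 2 * (∫ y, (1 - chi F N y) * fj F N j y)^2 ≤ (1/2)^(m+2+1) := by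
      intro j hj hjJ
      refine ⟨by exact_mod_cast hjJ.trans hJN, ?_⟩
      have h1 := delta_le (F := F) hF hN hj
      have h2 := delta_nonneg hF hN hj
      have h3 : ∫ y, (1 - chi F N y) * fj F N j y ≤ (1/2)^(m+4) := by
        refine h1.trans ?_
        rw [← hLd]
        calc (j:ℝ)/N * (m/2+L) ≤ J/N * ((m+1)*l) := by
              gcongr; nlinarith
          _ = 1 / E := by rw [hJ]; field_simp
          _ = _ := by rw [hE]; rw [one_div_pow]
      calc 2 * (∫ y, (1 - chi F N y) * fj F N j y)^2 ≤ 2 * ((1/2)^(m+4))^2 := by gcongr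
        _ = (1/2)^(m+2+1) * (2 * (1/2)^(m+5)) := by ring
        _ ≤ (1/2)^(m+2+1) * 1 := by
          gcongr
          rw [pow_succ]
          have : (1/2:ℝ)^(m+4) ≤ 1 := pow_le_one₀ (by norm_num) (by norm_num)
          linarith
        _ = _ := mul_one _
    have hQ := recur (u := fun j => QQ F (fj F N j)) (B := B) (J := J) (Nr := N) (a := m+2) (by omega) hB4 hN' (by
      have := QQ_le (F := F) (fj_good (F := F) hN le_rfl)
      rw [fj_n1 hN le_rfl] at this; linarith) (by
      intro j hj hjJ
      obtain ⟨hjN, hd⟩ := hstep j hj hjJ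
      refine (QQ_bound hF hN hj hjN).trans ?_
      have : 0 ≤ QQ F (fj F N j) := integral_nonneg fun x => sq_nonneg _
      gcongr) i (by linarith [pow_pos (two_pos : (0:ℝ) < 2) i])
    have hV := recur (u := fun j => n1 ((SS F)^[D] (fj F N j))^2) (B := B) (J := J) (Nr := N) (a := m+2) (by omega) hB4 hN' (by
      have := n1_ssi_le (F := F) (fj_good (F := F) hN le_rfl) D
      rw [fj_n1 hN le_rfl] at this
      have h0 := n1_nonneg ((SS F)^[D] (fj F N 1))
      nlinarith) (by
      intro j hj hjJ
      obtain ⟨hjN, hd⟩ := hstep j hj hjJ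
      refine (vv_bound hF hN hj hjN hD1 hDl hDu).trans ?_
      gcongr) i (by linarith [pow_pos (two_pos : (0:ℝ) < 2) i])
    rw [← hj, ← hjc] at hQ hV
    have h7 := step7c (F := F) hF (fj_good hN hj1) (fj_ev hF) hD1
    rw [fj_conv hF hN hj1 hj1] at h7
    have hjj : j + j < N := by
      have : (j:ℝ) + j < N := by
        have h1 : J ≤ N / 16 := by
          rw [hJ]
          apply div_le_div_of_nonneg_left hN0.le (by norm_num)
          have : (16:ℝ) ≤ E := by
            rw [hE, pow_add]; have : (1:ℝ) ≤ 2^m := one_le_pow₀ (by norm_num)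
            linarith
          calc (16:ℝ) ≤ E * 1 * 1 := by linarith
            _ ≤ _ := by gcongr; linarith
        rw [hjc]; linarith
      exact_mod_cast this
    obtain ⟨r, hr, hrN⟩ : ∃ r, 1 ≤ r ∧ r + (j+j) = N := ⟨N - (j+j), by omega, by omega⟩
    have hg2 := fj_good (F := F) hN (show 1 ≤ j + j by omega)
    have hcv := fj_conv hF hN hr (show 1 ≤ j + j by omega)
    rw [hrN] at hcv
    have hfin : n1 (fun y => fj F N N y - TT F (fj F N N) y) ≤
        n1 (fun y => fj F N (j+j) y - TT F (fj F N (j+j)) y) := by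
      have e : (fun y => fj F N N y - TT F (fj F N N) y) =
          Kop (fj F N r) volume (fun y => fj F N (j+j) y - TT F (fj F N (j+j)) y) := by
        rw [kop_sub (fj_good hN hr).wt hg2.bm hg2.top.bm, ← top_kop (fj_good hN hr).wt hg2.bm, hcv]
      rw [e]
      refine (n1_kop_le (fj_good hN hr).wt (hg2.sub hg2.top)).trans ?_
      change n1 (fj F N r) * _ ≤ _
      rw [fj_n1 hN hr, one_mul]
    refine hfin.trans (h7.trans ?_)
    have hK : (N:ℝ)/j ≤ 2*(m+1)*E*l := by
      rw [div_le_iff₀ (by rw [hjc]; positivity), hjc]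
      have h1 : J < 2 * 2^i := by rw [pow_succ] at hi2; linarith
      rw [hJ, div_lt_iff₀ (by linarith)] at h1
      nlinarith
    set M := B * 2^(m+2+1) * ((N:ℝ)/j)^(m+2) / N with hM
    have hMM : M ≤ B * 2^(m+3) * (2*(m+1)*E*l)^(m+2)/N := by rw [hM]; gcongr
    have hM0 : 0 ≤ M := by rw [hM]; positivity
    calc (D:ℝ) * QQ F (fj F N j) + 2 * n1 ((SS F)^[D] (fj F N j))^2 ≤ (D:ℝ) * M + 2 * M := by gcongr
      _ ≤ 4 * l * M := by nlinarith
      _ ≤ 4 * l * (B * 2^(m+3) * (2*(m+1)*E*l)^(m+2)/N) := by gcongr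
      _ = _ := by
        rw [hcc, hB, mul_pow _ l]
        ring

end S15
end

noncomputable section
namespace S15
open MeasureTheory RealInnerProductSpace

variable {m d : ℕ}

/-- linear map with coordinates given by inner products -/
def LL (t : Fin m → Euc d) : Euc d →L[ℝ] Euc m :=
  LinearMap.toContinuousLinearMap
    { toFun := fun x => WithLp.toLp 2 (fun j => ⟪t j, x⟫)
      map_add' := fun x y => by ext j; simp [inner_add_right]
      map_smul' := fun c x => by ext j; simp [inner_smul_right] }

lemma LL_apply (t : Fin m → Euc d) (x : Euc d) (j : Fin m) : LL t x j = ⟪t j, x⟫ := rfl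

lemma Fc_map (F : Measure (Euc d)) (L : Euc d →L[ℝ] Euc m) (s : Euc m) :
    Fc (F.map L) s = Fc F (ContinuousLinearMap.adjoint L s) := by
  unfold Fc
  rw [integral_map L.continuous.measurable.aemeasurable (by
    apply Continuous.aestronglyMeasurable; fun_prop)]
  simp_rw [ContinuousLinearMap.adjoint_inner_left]

lemma Adm.map {F : Measure (Euc d)} (hF : Adm F) (L : Euc d →L[ℝ] Euc m) : Adm (F.map L) := by
  have := hF.prob
  refine ⟨Measure.isProbabilityMeasure_map L.continuous.measurable.aemeasurable, ?_, fun t => ?_⟩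
  · rw [Measure.map_map (by fun_prop) L.continuous.measurable]
    conv_rhs => rw [← hF.symm, Measure.map_map L.continuous.measurable (by fun_prop)]
    congr 1; ext x; simp
  · rw [Fc_map]; exact hF.pos _

lemma top_map {F : Measure (Euc d)} (L : Euc d →L[ℝ] Euc m) {h : Euc m → ℝ} (hh : BM h) (x : Euc d) :
    TT (F.map L) h (L x) = TT F (fun z => h (L z)) x := by
  unfold TT
  rw [integral_map L.continuous.measurable.aemeasurable (by
    apply Measurable.aestronglyMeasurable; exact hh.meas.comp (by fun_prop))]
  simp_rw [map_add]

lemma iter_map {F : Measure (Euc d)} [IsProbabilityMeasure F] (L : Euc d →L[ℝ] Euc m) {h : Euc m → ℝ} (hh : BM h) (n : ℕ)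
    (x : Euc d) : (TT (F.map L))^[n] h (L x) = (TT F)^[n] (fun z => h (L z)) x := by
  have : IsProbabilityMeasure (F.map L) := Measure.isProbabilityMeasure_map L.continuous.measurable.aemeasurable
  induction n generalizing h with
  | zero => rfl
  | succ n ih =>
    rw [Function.iterate_succ_apply, Function.iterate_succ_apply, ih hh.top]
    have : (fun z => TT (F.map L) h (L z)) = TT F (fun z => h (L z)) := by ext z; exact top_map L hh z
    rw [this]

lemma kop_top {F : Measure (Euc m)} [IsProbabilityMeasure F] (hF : F.map (fun x => -x) = F) {w g : Euc m → ℝ}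
    (hw : Good w) (hg : BM g) : Kop (TT F w) volume g = TT F (Kop w volume g) := by
  ext y
  rw [top_kop hw.wt hg]
  unfold Kop TT
  have hi : Integrable (fun p : Euc m × Euc m => g (y + p.2) * w (p.2 + p.1)) (F.prod volume) := by
    have h1 := kop_prod_int (μ := F) wt_one hw
    simp only [one_mul] at h1
    obtain ⟨C, hC⟩ := hg.bdd
    refine h1.bdd_mul (c := C) ?_ (.of_forall fun p => ?_)
    · exact (hg.meas.comp (by fun_prop)).aestronglyMeasurable
    · exact hC _
  have hi2 : Integrable (fun p : Euc m × Euc m => w p.2 * g (y + p.2 + p.1)) (F.prod volume) := by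
    have h1 : Integrable (fun p : Euc m × Euc m => w p.2) (F.prod volume) := hw.int.comp_snd F
    obtain ⟨C, hC⟩ := hg.bdd
    simp_rw [mul_comm (w _)]
    refine h1.bdd_mul (c := C) ?_ (.of_forall fun p => ?_)
    · exact (hg.meas.comp (by fun_prop)).aestronglyMeasurable
    · exact hC _
  calc ∫ x, (∫ z, w (x + z) ∂F) * g (y + x) = ∫ x, ∫ z, g (y + x) * w (x + z) ∂F := by
        congr 1; ext x; rw [integral_const_mul, mul_comm]
    _ = ∫ z, (∫ x, g (y + x) * w (x + z)) ∂F := by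
        rw [integral_integral_swap]; exact hi.swap
    _ = ∫ z, (∫ x, w x * g (y + x + -z)) ∂F := by
        congr 1; ext z
        rw [← integral_add_right_eq_self (fun x => w x * g (y + x + -z)) z]
        congr 1; ext x
        rw [mul_comm]; congr 2; abel
    _ = ∫ z, (∫ x, w x * g (y + x + z)) ∂F := by
        rw [← integral_neg_map (fun z => ∫ x, w x * g (y + x + z)), hF]
    _ = ∫ x, ∫ z, w x * g (y + x + z) ∂F := integral_integral_swap hi2
    _ = _ := by
        congr 1; ext x; rw [integral_const_mul]

lemma kop_iter {F : Measure (Euc m)} [IsProbabilityMeasure F] (hF : F.map (fun x => -x) = F) {w g : Euc m → ℝ}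
    (hw : Good w) (hg : BM g) (n : ℕ) : Kop ((TT F)^[n] w) volume g = (TT F)^[n] (Kop w volume g) := by
  induction n with
  | zero => rfl
  | succ n ih => rw [Function.iterate_succ_apply', kop_top hF (hw.iter n) hg, ih, Function.iterate_succ_apply']

/-- product integral -/
lemma prod_integral (f : Fin m → ℝ → ℝ) : ∫ t : Euc m, ∏ i, f i (t i) = ∏ i, ∫ s, f i s := by
  rw [← integral_fintype_prod_volume_eq_prod]
  exact (EuclideanSpace.volume_preserving_symm_measurableEquiv_toLp (Fin m)).integral_comp' (fun x : Fin m → ℝ => ∏ i, f i (x i))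

/-- standard normal density -/
def g1 (s : ℝ) : ℝ := (2 * Real.pi) ^ (-(1:ℝ)/2) * Real.exp (-s^2/2)

lemma g1_pos (s : ℝ) : 0 < g1 s := by unfold g1; positivity

lemma kk_prod (t : Euc m) : kk 1 t = ∏ i, g1 (t i) := by
  unfold kk cc g1
  rw [Finset.prod_mul_distrib, ← Real.exp_sum, EuclideanSpace.real_norm_sq_eq]
  congr 1
  · simp only [mul_one, Finset.prod_const, Finset.card_univ, Fintype.card_fin]
    rw [← Real.rpow_mul_natCast (by positivity)]
    congr 1; ring
  · rw [mul_one, neg_div, Finset.sum_div, ← Finset.sum_neg_distrib]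
    simp_rw [neg_div]

lemma g1_eq : g1 = ProbabilityTheory.gaussianPDFReal 0 1 := by
  ext s
  unfold g1 ProbabilityTheory.gaussianPDFReal
  simp only [NNReal.coe_one, mul_one, sub_zero]
  congr 1
  rw [Real.sqrt_eq_rpow, ← Real.rpow_neg (by positivity)]
  congr 1; ring

lemma g1_int : Integrable g1 := by rw [g1_eq]; exact ProbabilityTheory.integrable_gaussianPDFReal 0 1
lemma g1_one : ∫ s, g1 s = 1 := by rw [g1_eq]; exact ProbabilityTheory.integral_gaussianPDFReal_eq_one 0 one_ne_zero

/-- coordinate projections -/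
def pr (i : Fin m) : Euc m →L[ℝ] Euc 1 := LL (fun _ => EuclideanSpace.single i 1)

lemma pr_apply (i : Fin m) (x : Euc m) (k : Fin 1) : pr i x k = x i := by
  simp [pr, LL_apply, EuclideanSpace.inner_single_left]

lemma inner_pr (i : Fin m) (t : Euc 1) (x : Euc m) : ⟪t, pr i x⟫ = t 0 * x i := by
  simp [PiLp.inner_apply, pr_apply, mul_comm]

/-- coordinate characteristic function -/
def uu (F : Measure (Euc m)) (i : Fin m) (s : ℝ) : ℝ := ∫ x, Real.cos (s * x i) ∂F

lemma Fc_pr (F : Measure (Euc m)) (i : Fin m) (t : Euc 1) : Fc (F.map (pr i)) t = uu F i (t 0) := by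
  unfold Fc uu
  rw [integral_map (pr i).continuous.measurable.aemeasurable (by
    apply Continuous.aestronglyMeasurable; fun_prop)]
  simp_rw [inner_pr]

lemma phi_pr (F : Measure (Euc m)) (i : Fin m) (N : ℕ) : phi (F.map (pr i)) N = ∫ s, uu F i s ^ N * g1 s := by
  have := prod_integral (m := 1) (fun _ s => uu F i s ^ N * g1 s)
  simp only [Finset.univ_unique, Finset.prod_singleton, Fin.default_eq_zero] at this
  rw [← this]
  unfold phi
  congr 1; ext t
  rw [Fc_pr, kk_prod]; simp

lemma abs_sin_sum_le {ι : Type*} (s : Finset ι) (x : ι → ℝ) : |Real.sin (∑ i ∈ s, x i)| ≤ ∑ i ∈ s, |Real.sin (x i)| := by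
  classical
  induction s using Finset.induction_on with
  | empty => simp
  | insert a s ha ih =>
    rw [Finset.sum_insert ha, Finset.sum_insert ha, Real.sin_add]
    refine (abs_add_le _ _).trans ?_
    rw [abs_mul, abs_mul]
    have h1 := Real.abs_cos_le_one (∑ i ∈ s, x i)
    have h2 := Real.abs_cos_le_one (x a)
    have h3 := abs_nonneg (Real.sin (x a))
    have h4 := abs_nonneg (Real.sin (∑ i ∈ s, x i))
    nlinarith

lemma one_sub_cos (x : ℝ) : 1 - Real.cos x = 2 * Real.sin (x/2)^2 := by
  have := Real.cos_sq_add_sin_sq (x/2)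
  have h2 := Real.cos_two_mul (x/2)
  rw [mul_div_cancel₀ _ two_ne_zero] at h2
  rw [h2]; linarith

lemma cos_sum_le (x : Fin m → ℝ) : 1 - Real.cos (∑ i, x i) ≤ m * ∑ i, (1 - Real.cos (x i)) := by
  simp_rw [one_sub_cos]
  rw [Finset.sum_div]
  have h1 := abs_sin_sum_le Finset.univ (fun i => x i / 2)
  have h2 := sq_sum_le_card_mul_sum_sq (s := Finset.univ) (f := fun i : Fin m => |Real.sin (x i/2)|)
  simp only [sq_abs, Finset.card_univ, Fintype.card_fin] at h2
  have h3 : Real.sin (∑ i, x i/2)^2 ≤ (∑ i, |Real.sin (x i/2)|)^2 := by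
    rw [← sq_abs]; exact pow_le_pow_left₀ (abs_nonneg _) h1 2
  rw [← Finset.mul_sum]
  linarith

variable {F : Measure (Euc m)} [IsProbabilityMeasure F]

lemma uu_int (i : Fin m) (s : ℝ) : Integrable (fun x : Euc m => Real.cos (s * x i)) F := by
  refine Integrable.of_bound (by apply Continuous.aestronglyMeasurable; fun_prop) 1 (.of_forall fun x => ?_)
  exact Real.abs_cos_le_one _

lemma Fc_sub_le (t : Euc m) : 1 - Fc F t ≤ m * ∑ i, (1 - uu F i (t i)) := by
  have hi : ∀ i : Fin m, Integrable (fun x : Euc m => 1 - Real.cos (t i * x i)) F :=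
    fun i => (integrable_const 1).sub (uu_int i _)
  have h1 : ∀ s, 1 - uu F s (t s) = ∫ x, (1 - Real.cos (t s * x s)) ∂F := by
    intro s
    rw [integral_sub (integrable_const _) (uu_int s _)]
    simp [uu]
  have h2 : 1 - Fc F t = ∫ x, (1 - Real.cos ⟪t, x⟫) ∂F := by
    rw [integral_sub (integrable_const _) (cos_int t)]
    simp [Fc]
  simp_rw [h1]
  rw [h2, ← integral_finsetSum _ (fun i _ => hi i), ← integral_const_mul]
  refine integral_mono ((integrable_const _).sub (cos_int t)) ((integrable_finsetSum _ (fun i _ => hi i)).const_mul _) fun x => ?_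
  have := cos_sum_le (fun i => t i * x i)
  have e : ⟪t, x⟫ = ∑ i, t i * x i := by simp [PiLp.inner_apply, mul_comm]
  rw [e]; exact this

lemma uu_meas (i : Fin m) : Measurable (uu F i) := by
  have : StronglyMeasurable (fun p : ℝ × Euc m => Real.cos (p.1 * p.2 i)) := by
    apply Continuous.stronglyMeasurable; fun_prop
  exact this.integral_prod_right'.measurable

lemma uu_nonneg (hF : Adm F) (i : Fin m) (s : ℝ) : 0 ≤ uu F i s := by
  have := (hF.map (pr i)).pos (EuclideanSpace.single 0 s)
  rw [Fc_pr] at this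
  simpa using this

lemma uu_le_one (i : Fin m) (s : ℝ) : uu F i s ≤ 1 := by
  have := integral_mono (uu_int (F := F) i s) (integrable_const 1) (fun x => Real.cos_le_one _)
  simpa [uu] using this

lemma pr_prob (i : Fin m) : IsProbabilityMeasure (F.map (pr i)) :=
  Measure.isProbabilityMeasure_map (pr i).continuous.measurable.aemeasurable

lemma exp_two_le {x : ℝ} (h0 : 0 ≤ x) (h1 : x ≤ 1/2) : Real.exp (-(2*x)) ≤ 1 - x := by
  rw [Real.exp_neg]
  apply inv_le_of_inv_le₀ (by linarith)
  have := Real.add_one_le_exp (2*x)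
  refine le_trans ?_ this
  rw [inv_le_iff_one_le_mul₀ (by linarith)]
  nlinarith

lemma philow (hF : Adm F) {N : ℕ} (hN : 1 ≤ N)
    (hx : (m:ℝ)/N * ∑ i, Real.log (2 / phi (F.map (pr i)) N) ≤ 1/2) :
    Real.log (1/phi F N) ≤ (2*m+1) * ∑ i, Real.log (2 / phi (F.map (pr i)) N) := by
  have hp := fun i => pr_prob (F := F) i
  have hN0 : (0:ℝ) < N := by exact_mod_cast hN
  have hψ : ∀ i : Fin m, 0 < phi (F.map (pr i)) N := fun i => phi_pos (hF.map _) hN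
  have hψ1 : ∀ i : Fin m, phi (F.map (pr i)) N ≤ 1 := fun i => phi_le_one (hF.map _)
  have hψd : ∀ i : Fin m, phi (F.map (pr i)) N = ∫ s, uu F i s ^ N * g1 s := fun i => phi_pr F i N
  set ψ : Fin m → ℝ := fun i => phi (F.map (pr i)) N
  change ∀ i, 0 < ψ i at hψ
  change ∀ i, ψ i ≤ 1 at hψ1
  change ∀ i, ψ i = _ at hψd
  change (m:ℝ)/N * ∑ i, Real.log (2 / ψ i) ≤ 1/2 at hx
  change _ ≤ (2*m+1) * ∑ i, Real.log (2 / ψ i)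
  have hlog : ∀ i, 0 ≤ Real.log (2 / ψ i) := fun i => Real.log_nonneg (by
    rw [le_div_iff₀ (hψ i)]; linarith [hψ1 i])
  set x := (m:ℝ)/N * ∑ i, Real.log (2 / ψ i) with hxd
  have hx0 : 0 ≤ x := mul_nonneg (by positivity) (Finset.sum_nonneg fun i _ => hlog i)
  set A : Fin m → Set ℝ := fun i => {s | ψ i / 2 ≤ uu F i s ^ N}
  have hA : ∀ i, MeasurableSet (A i) := fun i => measurableSet_le measurable_const ((uu_meas i).pow_const N)
  have hAg : ∀ i, ψ i / 2 ≤ ∫ s, (A i).indicator g1 s := by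
    intro i
    have h1 : ψ i ≤ ∫ s, ((A i).indicator g1 s + ψ i / 2 * g1 s) := by
      rw [hψd i]
      refine integral_mono_of_nonneg (.of_forall fun s => mul_nonneg (pow_nonneg (uu_nonneg hF i s) _) (g1_pos s).le)
        ((g1_int.indicator (hA i)).add (g1_int.const_mul _)) (.of_forall fun s => ?_)
      simp only [← hψd i]
      by_cases hs : s ∈ A i
      · rw [Set.indicator_of_mem hs]
        have h2 : uu F i s ^ N ≤ 1 := pow_le_one₀ (uu_nonneg hF i s) (uu_le_one i s)
        have h3 := g1_pos s
        have := hψ i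
        nlinarith [mul_pos this h3]
      · rw [Set.indicator_of_notMem hs, zero_add]
        have h2 : uu F i s ^ N ≤ ψ i / 2 := (not_le.1 hs).le
        exact mul_le_mul_of_nonneg_right h2 (g1_pos s).le
    rw [integral_add (g1_int.indicator (hA i)) (g1_int.const_mul _), integral_const_mul, g1_one] at h1
    linarith
  have hlow : ∀ i s, s ∈ A i → 1 - uu F i s ≤ (1/N) * Real.log (2/ψ i) := by
    intro i s hs
    have h1 : ψ i / 2 ≤ uu F i s ^ N := hs
    have h2 : 0 < uu F i s := by
      rcases (uu_nonneg hF i s).lt_or_eq with h | h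
      · exact h
      · rw [← h, zero_pow (by omega)] at h1; linarith [hψ i]
    have h3 := Real.log_le_sub_one_of_pos h2
    have h4 := Real.log_le_log (by have := hψ i; positivity) h1
    rw [Real.log_pow] at h4
    have h5 : Real.log (2/ψ i) = - Real.log (ψ i/2) := by rw [← Real.log_inv, inv_div]
    rw [h5, one_div, ← sub_nonneg]
    have : (N:ℝ) * ((N:ℝ)⁻¹ * -Real.log (ψ i/2) - (1 - uu F i s)) ≥ 0 := by
      have e : (N:ℝ) * ((N:ℝ)⁻¹ * -Real.log (ψ i/2) - (1 - uu F i s)) = -Real.log (ψ i/2) - N * (1 - uu F i s) := by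
        field_simp
      rw [e]; nlinarith
    exact nonneg_of_mul_nonneg_right this hN0
  have hmain : (1 - x)^N * ∏ i, ∫ s, (A i).indicator g1 s ≤ phi F N := by
    rw [← prod_integral, ← integral_const_mul]
    unfold phi
    refine integral_mono_of_nonneg (.of_forall fun t => ?_) (Fc_pow_mul_int (kk_int one_pos) N) (.of_forall fun t => ?_)
    · exact mul_nonneg (pow_nonneg (by linarith) _) (Finset.prod_nonneg fun i _ => Set.indicator_nonneg (fun s _ => (g1_pos s).le) _)
    · simp only []
      by_cases ht : ∀ i, t i ∈ A i
      · rw [kk_prod, Finset.prod_congr rfl (fun i _ => Set.indicator_of_mem (ht i) g1)]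
        apply mul_le_mul_of_nonneg_right _ (Finset.prod_nonneg fun i _ => (g1_pos _).le)
        apply pow_le_pow_left₀ (by linarith)
        have h1 := Fc_sub_le (F := F) t
        have h2 : ∑ i, (1 - uu F i (t i)) ≤ ∑ i, (1/N) * Real.log (2/ψ i) := Finset.sum_le_sum fun i _ => hlow i _ (ht i)
        rw [← Finset.mul_sum] at h2
        have h3 := mul_le_mul_of_nonneg_left h2 (Nat.cast_nonneg m : (0:ℝ) ≤ m)
        have h4 : (m:ℝ) * (1/N * ∑ i, Real.log (2/ψ i)) = x := by rw [hxd]; ring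
        linarith
      · push Not at ht
        obtain ⟨i, hi⟩ := ht
        rw [Finset.prod_eq_zero (Finset.mem_univ i) (Set.indicator_of_notMem hi g1), mul_zero]
        exact mul_nonneg (pow_nonneg (hF.pos t) _) (kk_pos one_pos t).le
  have hP : ∏ i, (ψ i / 2) ≤ ∏ i, ∫ s, (A i).indicator g1 s :=
    Finset.prod_le_prod (fun i _ => by have := hψ i; positivity) fun i _ => hAg i
  have h6 : Real.exp (-(2*x))^N * ∏ i, (ψ i/2) ≤ phi F N := by
    refine le_trans ?_ hmain
    have : 0 ≤ ∏ i, (ψ i / 2) := Finset.prod_nonneg fun i _ => by have := hψ i; positivity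
    have := exp_two_le hx0 hx
    have h1x : 0 ≤ 1 - x := by linarith
    gcongr
  have hPp : 0 < ∏ i, (ψ i / 2) := Finset.prod_pos fun i _ => by have := hψ i; positivity
  have h7 := Real.log_le_log (by positivity) h6
  rw [Real.log_mul (by positivity) hPp.ne', Real.log_pow, Real.log_exp, Real.log_prod (fun i _ => by have := hψ i; positivity)] at h7
  rw [one_div, Real.log_inv]
  have h8 : ∑ i, Real.log (ψ i/2) = - ∑ i, Real.log (2/ψ i) := by
    rw [← Finset.sum_neg_distrib]
    congr 1; ext i; rw [← Real.log_inv, inv_div]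
  rw [h8] at h7
  have h9 : (N:ℝ) * x = m * ∑ i, Real.log (2/ψ i) := by rw [hxd]; field_simp
  linear_combination h7 + 2 * h9

/-- constant of the smoothed bound -/
def cD (m : ℕ) : ℝ := core_const m * (1 + 2*m*(2*m+1))^(m+6) + 8*m^2

lemma cD_pos (m : ℕ) : 0 < cD m := by have := core_const_pos m; unfold cD; positivity

lemma n1_bound (hF : Adm F) {N : ℕ} (hN : 1 ≤ N) (q : Fin m → ℕ)
    (hq : ∀ i, (1/2:ℝ)^(2^(q i)) ≤ phi (F.map (pr i)) N) :
    n1 (fun y => (TT F)^[N] (kk 1) y - (TT F)^[N+1] (kk 1) y) ≤ cD m * (∏ i, (2:ℝ)^(q i))^(m+6) / N := by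
  have hN0 : (0:ℝ) < N := by exact_mod_cast hN
  set Q : ℝ := ∏ i, (2:ℝ)^(q i) with hQ
  have hqQ : ∀ i, (2:ℝ)^(q i) ≤ Q := fun i => by
    rw [hQ, Finset.prod_pow_eq_pow_sum]
    exact pow_le_pow_right₀ (by norm_num) (Finset.single_le_sum (fun j _ => Nat.zero_le (q j)) (Finset.mem_univ i))
  have hQ1 : 1 ≤ Q := by
    rw [hQ, Finset.prod_pow_eq_pow_sum]
    exact one_le_pow₀ (by norm_num)
  set s := ∑ i, Real.log (2 / phi (F.map (pr i)) N) with hs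
  have hm : (0:ℝ) ≤ m := Nat.cast_nonneg m
  have hsQ : s ≤ m * (2 * Q) := by
    have : s ≤ ∑ i : Fin m, 2 * Q := by
      refine Finset.sum_le_sum fun i _ => ?_
      have hp : (0:ℝ) < (1/2)^(2^(q i)) := by positivity
      have h1 : Real.log (2 / phi (F.map (pr i)) N) ≤ Real.log (2 / (1/2)^(2^(q i))) := by
        apply Real.log_le_log (by have := hp.trans_le (hq i); positivity)
        exact div_le_div_of_nonneg_left (by norm_num) hp (hq i)
      rw [Real.log_div two_ne_zero hp.ne', Real.log_pow, one_div, Real.log_inv] at h1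
      have h2 := Real.log_two_lt_d9
      have h3 := Real.log_two_gt_d9
      have h4 := hqQ i
      push_cast at h1
      have h5 : (2:ℝ)^(q i) * Real.log 2 ≤ Q * 1 := by gcongr; linarith
      linarith
    simpa using this
  have hCp := core_const_pos m
  have hQp : Q ≤ Q^(m+6) := le_self_pow₀ hQ1 (by omega)
  by_cases hx : (m:ℝ)/N * s ≤ 1/2
  · have hL := philow hF hN hx
    refine (core hF hN).trans ?_
    have hl0 := log_phi_nonneg (F := F) hF hN
    refine div_le_div_of_nonneg_right ?_ hN0.le
    have h1 : 1 + Real.log (1/phi F N) ≤ (1 + 2*m*(2*m+1)) * Q := by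
      rw [← hs] at hL
      have h2 : (2*(m:ℝ)+1) * s ≤ (2*m+1) * (m*(2*Q)) := by gcongr
      nlinarith
    calc core_const m * (1 + Real.log (1/phi F N))^(m+6) ≤ core_const m * ((1 + 2*m*(2*m+1)) * Q)^(m+6) := by
          gcongr
      _ = core_const m * (1 + 2*m*(2*m+1))^(m+6) * Q^(m+6) := by rw [mul_pow]; ring
      _ ≤ _ := by
        unfold cD
        apply mul_le_mul_of_nonneg_right _ (by positivity)
        have : (0:ℝ) ≤ 8 * m^2 := by positivity
        linarith
  · have hg := (kk_good (m := m) one_pos).iter (F := F) N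
    have h1 : n1 (fun y => (TT F)^[N] (kk 1) y - (TT F)^[N+1] (kk 1) y) ≤ 2 := by
      rw [Function.iterate_succ_apply', ← fj_self hN]
      have hgN := fj_good (F := F) hN hN
      have a1 := n1_sub_le hgN (hgN.top (F := F))
      have a2 := n1_top_le (F := F) hgN
      rw [fj_n1 hN hN] at a1 a2
      linarith
    refine h1.trans ?_
    rw [le_div_iff₀ hN0]
    rw [not_le, div_mul_eq_mul_div, lt_div_iff₀ hN0] at hx
    have h2 : (m:ℝ) * s ≤ m * (m * (2*Q)) := by gcongr
    have h3 : 2 * (N:ℝ) ≤ 8*m^2 * Q := by nlinarith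
    refine h3.trans ?_
    have : 0 ≤ core_const m * (1 + 2*(m:ℝ)*(2*m+1))^(m+6) := by positivity
    unfold cD
    gcongr
    linarith

end S15
end

noncomputable section
namespace S15
open MeasureTheory RealInnerProductSpace ProbabilityTheory

/-- Gaussian smoothing on the line -/
def PP (a : ℝ) (g : ℝ → ℝ) (x : ℝ) : ℝ := ∫ z, g (x + z) ∂gaussianReal 0 a.toNNReal

lemma PP_zero (g : ℝ → ℝ) : PP 0 g = g := by
  funext x; simp [PP, gaussianReal_zero_var]

lemma PP_int {g : ℝ → ℝ} (hg : Measurable g) {M : ℝ} (hM : ∀ x, |g x| ≤ M) (a x : ℝ) :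
    Integrable (fun z => g (x + z)) (gaussianReal 0 a.toNNReal) :=
  Integrable.of_bound (hg.comp (measurable_const_add x)).aestronglyMeasurable M
    (Filter.Eventually.of_forall fun z => hM _)

lemma PP_eq {a : ℝ} (ha : 0 ≤ a) {g : ℝ → ℝ} (hg : Measurable g) (x : ℝ) :
    PP a g x = ∫ z, g1 z * g (x + √a * z) := by
  unfold PP
  have h := gaussianReal_map_const_mul (μ := 0) (v := 1) (√a)
  have h2 : gaussianReal 0 a.toNNReal = (gaussianReal 0 1).map (fun x => √a * x) := by
    rw [h, mul_zero]; congr 1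
    apply NNReal.eq
    simp [Real.sq_sqrt ha, ha]
  rw [h2, integral_map (measurable_const_mul _).aemeasurable
    (show AEStronglyMeasurable (fun z => g (x + z)) _ from
      (hg.comp (measurable_const_add x)).aestronglyMeasurable),
    integral_gaussianReal_eq_integral_smul one_ne_zero, g1_eq]
  rfl

lemma PP_semi {a b : ℝ} (ha : 0 ≤ a) (hb : 0 ≤ b) {g : ℝ → ℝ} (hg : Measurable g) {M : ℝ}
    (hM : ∀ x, |g x| ≤ M) : PP a (PP b g) = PP (a + b) g := by
  funext x
  unfold PP
  have h : gaussianReal 0 (a+b).toNNReal = gaussianReal 0 a.toNNReal ∗ gaussianReal 0 b.toNNReal := by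
    rw [gaussianReal_conv_gaussianReal, add_zero, Real.toNNReal_add ha hb]
  have hi := PP_int hg hM (a+b) x
  rw [h] at hi ⊢
  rw [integral_conv hi]
  simp only [add_assoc]

lemma PP_meas {g : ℝ → ℝ} (hg : Measurable g) (a : ℝ) : Measurable (PP a g) := by
  have : StronglyMeasurable (fun p : ℝ × ℝ => g (p.1 + p.2)) :=
    (hg.comp (measurable_fst.add measurable_snd)).stronglyMeasurable
  exact this.integral_prod_right.measurable

lemma PP_bound {g : ℝ → ℝ} {M : ℝ} (hM : ∀ x, |g x| ≤ M) (a x : ℝ) : |PP a g x| ≤ M := by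
  unfold PP
  have := norm_integral_le_of_norm_le_const (μ := gaussianReal 0 a.toNNReal) (f := fun z => g (x+z)) (C := M)
    (Filter.Eventually.of_forall fun z => hM _)
  simpa using this

lemma PP_sub {g h : ℝ → ℝ} (hg : Measurable g) (hh : Measurable h) {M M' : ℝ} (hM : ∀ x, |g x| ≤ M)
    (hM' : ∀ x, |h x| ≤ M') (a : ℝ) : PP a (fun x => g x - h x) = fun x => PP a g x - PP a h x := by
  funext x
  exact integral_sub (PP_int hg hM a x) (PP_int hh hM' a x)

lemma PP_mem {g : ℝ → ℝ} (hg : Measurable g) (h0 : ∀ x, 0 ≤ g x) (h1 : ∀ x, g x ≤ 1) (a x : ℝ) :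
    0 ≤ PP a g x ∧ PP a g x ≤ 1 := by
  refine ⟨integral_nonneg fun z => h0 _, ?_⟩
  exact (le_abs_self _).trans (PP_bound (fun x => by rw [abs_of_nonneg (h0 x)]; exact h1 x) a x)

/-- indicator of an interval -/
def ii (l r x : ℝ) : ℝ := (Set.Icc l r).indicator (fun _ => (1:ℝ)) x

lemma ii_meas (l r : ℝ) : Measurable (ii l r) := measurable_const.indicator measurableSet_Icc
lemma ii_nonneg (l r x : ℝ) : 0 ≤ ii l r x := Set.indicator_nonneg (fun _ _ => zero_le_one) x
lemma ii_le (l r x : ℝ) : ii l r x ≤ 1 := Set.indicator_le_self' (fun _ _ => zero_le_one) x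
lemma ii_abs (l r x : ℝ) : |ii l r x| ≤ 1 := by rw [abs_of_nonneg (ii_nonneg _ _ _)]; exact ii_le _ _ _

lemma cher_ge {s : ℝ} (hs : 0 < s) {u : ℝ} (hu : 0 ≤ u) :
    (gaussianReal 0 s.toNNReal).real {z | u ≤ z} ≤ Real.exp (-u^2/(2*s)) := by
  have h := measure_ge_le_exp_mul_mgf (X := id) (μ := gaussianReal 0 s.toNNReal) (t := u/s) u (by positivity)
    (integrable_exp_mul_gaussianReal _)
  rw [mgf_id_gaussianReal, ← Real.exp_add, Real.coe_toNNReal _ hs.le] at h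
  refine h.trans (Real.exp_le_exp.2 (le_of_eq ?_))
  field_simp; ring

lemma cher_le {s : ℝ} (hs : 0 < s) {u : ℝ} (hu : u ≤ 0) :
    (gaussianReal 0 s.toNNReal).real {z | z ≤ u} ≤ Real.exp (-u^2/(2*s)) := by
  have h := measure_le_le_exp_mul_mgf (X := id) (μ := gaussianReal 0 s.toNNReal) (t := u/s) u
    (div_nonpos_of_nonpos_of_nonneg hu hs.le)
    (integrable_exp_mul_gaussianReal _)
  rw [mgf_id_gaussianReal, ← Real.exp_add, Real.coe_toNNReal _ hs.le] at h
  refine h.trans (Real.exp_le_exp.2 (le_of_eq ?_))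
  field_simp; ring

lemma PP_ii (s l r x : ℝ) :
    PP s (ii l r) x = (gaussianReal 0 s.toNNReal).real {z | l ≤ x + z ∧ x + z ≤ r} := by
  unfold PP ii
  have : (fun z => (Set.Icc l r).indicator (fun _ => (1:ℝ)) (x + z)) =
    Set.indicator {z | l ≤ x + z ∧ x + z ≤ r} 1 := by
    funext z
    simp [Set.indicator, Set.mem_Icc]
  rw [this, integral_indicator_one]
  exact (measurableSet_Icc (a := l) (b := r)).preimage (measurable_const_add x)

lemma cher {s : ℝ} (hs : 0 < s) (l r x : ℝ) :
    |ii l r x - PP s (ii l r) x| ≤ Real.exp (-(x-l)^2/(2*s)) + Real.exp (-(x-r)^2/(2*s)) := by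
  have hm := PP_mem (ii_meas l r) (ii_nonneg l r) (ii_le l r) s x
  have e1 := Real.exp_pos (-(x-l)^2/(2*s))
  have e2 := Real.exp_pos (-(x-r)^2/(2*s))
  by_cases hx : x ∈ Set.Icc l r
  · have h1 : ii l r x = 1 := by unfold ii; exact Set.indicator_of_mem hx _
    rw [h1, abs_of_nonneg (by linarith), PP_ii]
    have hl := cher_le hs (u := l - x) (by linarith [hx.1])
    have hr := cher_ge hs (u := r - x) (by linarith [hx.2])
    have hc : (gaussianReal 0 s.toNNReal).real Set.univ ≤
      (gaussianReal 0 s.toNNReal).real {z | l ≤ x + z ∧ x + z ≤ r} +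
      ((gaussianReal 0 s.toNNReal).real {z | z ≤ l - x} + (gaussianReal 0 s.toNNReal).real {z | r - x ≤ z}) := by
      refine le_trans ?_ ((measureReal_union_le _ _).trans (add_le_add_right (measureReal_union_le _ _) _))
      apply measureReal_mono
      · intro z _
        by_cases h1 : z ≤ l - x
        · right; left; exact h1
        by_cases h2 : r - x ≤ z
        · right; right; exact h2
        left
        push Not at h1 h2
        exact ⟨by linarith, by linarith⟩
      · exact measure_ne_top _ _
    rw [probReal_univ] at hc
    rw [show (x-l)^2 = (l-x)^2 by ring, show (x-r)^2=(r-x)^2 by ring]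
    linarith
  · have h1 : ii l r x = 0 := by unfold ii; exact Set.indicator_of_notMem hx _
    rw [h1, zero_sub, abs_neg, abs_of_nonneg hm.1, PP_ii]
    by_cases h2 : x < l
    · have hl := cher_ge hs (u := l - x) (by linarith)
      have : (gaussianReal 0 s.toNNReal).real {z | l ≤ x + z ∧ x + z ≤ r} ≤ (gaussianReal 0 s.toNNReal).real {z | l - x ≤ z} :=
        measureReal_mono (fun z hz => by have := hz.1; simp only [Set.mem_setOf_eq]; linarith) (measure_ne_top _ _)
      rw [show (x-l)^2 = (l-x)^2 by ring]
      linarith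
    · have h3 : r < x := by
        by_contra h; push Not at h h2; exact hx ⟨h2, h⟩
      have hl := cher_le hs (u := r - x) (by linarith)
      have : (gaussianReal 0 s.toNNReal).real {z | l ≤ x + z ∧ x + z ≤ r} ≤ (gaussianReal 0 s.toNNReal).real {z | z ≤ r - x} :=
        measureReal_mono (fun z hz => by have := hz.2; simp only [Set.mem_setOf_eq]; linarith) (measure_ne_top _ _)
      rw [show (x-r)^2 = (r-x)^2 by ring]
      linarith

/-- one dimensional chain -/
lemma chain {Φ : ℝ → ℝ} (hc : ContinuousOn Φ (Set.Ioi 0)) (hm : MonotoneOn Φ (Set.Ioi 0))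
    (hp : ∀ a, 0 < a → 0 < Φ a) (hl : Filter.Tendsto Φ Filter.atTop (nhds 1)) {ε : ℝ} (hε : 0 < ε) (l r : ℝ) :
    ∃ (J : ℕ) (a : ℕ → ℝ) (c : ℕ → ℝ → ℝ),
      (∀ q, ε ≤ a q) ∧ (∀ q, (1/2:ℝ)^(2^q) ≤ Φ (a q)) ∧ (∀ q, Measurable (c q)) ∧ (∀ q x, |c q x| ≤ 1) ∧
      (∀ x, PP ε (ii l r) x = ∑ q ∈ Finset.range (J+1), PP (a q) (c q) x) ∧
      ∀ q, (∀ x, c (q+1) x = 0) ∨ (Φ (a q) = (1/2:ℝ)^(2^q) ∧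
        ∀ x, |c (q+1) x| ≤ Real.exp (-(x-l)^2/(2*a q)) + Real.exp (-(x-r)^2/(2*a q))) := by
  have hv1 : ∀ q : ℕ, (1/2:ℝ)^(2^q) < 1 := fun q => pow_lt_one₀ (by norm_num) (by norm_num) (by positivity)
  have hanti : ∀ q : ℕ, (1/2:ℝ)^(2^(q+1)) < (1/2:ℝ)^(2^q) := fun q =>
    pow_lt_pow_right_of_lt_one₀ (by norm_num) (by norm_num) (Nat.pow_lt_pow_right (by norm_num) (Nat.lt_succ_self q))
  have hex : ∀ q : ℕ, ∃ a, ε ≤ a ∧ (((1/2:ℝ)^(2^q) ≤ Φ ε ∧ a = ε) ∨ (Φ ε < (1/2:ℝ)^(2^q) ∧ Φ a = (1/2:ℝ)^(2^q))) := by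
    intro q
    by_cases h : (1/2:ℝ)^(2^q) ≤ Φ ε
    · exact ⟨ε, le_rfl, Or.inl ⟨h, rfl⟩⟩
    · push Not at h
      have h2 := (hl.eventually (lt_mem_nhds (hv1 q))).and (Filter.eventually_ge_atTop ε)
      obtain ⟨b, hb1, hb2⟩ := h2.exists
      obtain ⟨a, ha, hae⟩ := intermediate_value_Icc hb2 (hc.mono (fun x hx => hε.trans_le hx.1)) ⟨h.le, hb1.le⟩
      exact ⟨a, ha.1, Or.inr ⟨h, hae⟩⟩
  choose a ha1 ha2 using hex
  have ha0 : ∀ q, 0 < a q := fun q => hε.trans_le (ha1 q)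
  have hstep : ∀ q, a (q+1) ≤ a q := by
    intro q
    rcases ha2 (q+1) with h | h
    · rw [h.2]; exact ha1 q
    · rcases ha2 q with h' | h'
      · linarith [hanti q, h.1, h'.1]
      · by_contra hcon
        push Not at hcon
        have := hm (ha0 q) (ha0 (q+1)) hcon.le
        rw [h.2, h'.2] at this
        linarith [hanti q]
  obtain ⟨J, hJ⟩ : ∃ J : ℕ, (1/2:ℝ)^(2^J) ≤ Φ ε := by
    obtain ⟨J, hJ⟩ := exists_pow_lt_of_lt_one (hp ε hε) (show (1/2:ℝ) < 1 by norm_num)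
    refine ⟨J, le_trans ?_ hJ.le⟩
    exact pow_le_pow_of_le_one (by norm_num) (by norm_num) Nat.lt_two_pow_self.le
  have hJa : a J = ε := by
    rcases ha2 J with h | h
    · exact h.2
    · linarith [h.1]
  let c : ℕ → ℝ → ℝ := fun q => match q with
    | 0 => ii l r
    | q+1 => fun x => ii l r x - PP (a q - a (q+1)) (ii l r) x
  have hPm : ∀ s, Measurable (PP s (ii l r)) := fun s => PP_meas (ii_meas l r) s
  have hPb : ∀ s x, |PP s (ii l r) x| ≤ 1 := fun s x => PP_bound (ii_abs l r) s x
  refine ⟨J, a, c, ha1, ?_, ?_, ?_, ?_, ?_⟩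
  · intro q
    rcases ha2 q with h | h
    · rw [h.2]; exact h.1
    · exact h.2.ge
  · intro q
    cases q with
    | zero => exact ii_meas l r
    | succ q => exact (ii_meas l r).sub (hPm _)
  · intro q x
    cases q with
    | zero => exact ii_abs l r x
    | succ q =>
      have h1 := PP_mem (ii_meas l r) (ii_nonneg l r) (ii_le l r) (a q - a (q+1)) x
      have h2 := ii_nonneg l r x
      have h3 := ii_le l r x
      show |ii l r x - PP (a q - a (q+1)) (ii l r) x| ≤ 1
      rw [abs_le]; constructor <;> linarith
  · intro x
    have key : ∀ q, PP (a (q+1)) (c (q+1)) x = PP (a (q+1)) (ii l r) x - PP (a q) (ii l r) x := by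
      intro q
      have := PP_sub (ii_meas l r) (hPm (a q - a (q+1))) (ii_abs l r) (hPb _) (a (q+1))
      show PP (a (q+1)) (fun x => ii l r x - PP (a q - a (q+1)) (ii l r) x) x = _
      rw [this]
      rw [PP_semi (ha0 (q+1)).le (by linarith [hstep q]) (ii_meas l r) (ii_abs l r)]
      rw [add_sub_cancel]
    have tel : ∀ n, ∑ q ∈ Finset.range (n+1), PP (a q) (c q) x = PP (a n) (ii l r) x := by
      intro n
      induction n with
      | zero => simp [c]
      | succ n ih => rw [Finset.sum_range_succ, ih, key]; ring
    rw [tel, hJa]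
  · intro q
    by_cases hs : a q = a (q+1)
    · left; intro x
      show ii l r x - PP (a q - a (q+1)) (ii l r) x = 0
      rw [hs, sub_self, PP_zero, sub_self]
    · have hs' : 0 < a q - a (q+1) := by
        have := lt_of_le_of_ne (hstep q) (Ne.symm hs); linarith
      rcases ha2 q with h | h
      · exfalso
        rw [h.2] at hs'; linarith [ha1 (q+1)]
      · right
        refine ⟨h.2, fun x => (cher hs' l r x).trans ?_⟩
        have hle : ∀ u : ℝ, Real.exp (-u^2/(2*(a q - a (q+1)))) ≤ Real.exp (-u^2/(2*a q)) := by
          intro u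
          apply Real.exp_le_exp.2
          rw [neg_div, neg_div, neg_le_neg_iff]
          apply div_le_div_of_nonneg_left (sq_nonneg u) (by linarith)
          linarith [ha0 (q+1)]
        exact add_le_add (hle _) (hle _)

/-- the Laplace type functional -/
def Ph (μ : Measure ℝ) (a : ℝ) : ℝ := ∫ x, Real.exp (-x^2/(2*a)) ∂μ

variable {μ : Measure ℝ} [IsProbabilityMeasure μ]

lemma Ph_m (a : ℝ) : Measurable (fun x : ℝ => Real.exp (-x^2/(2*a))) := by fun_prop

lemma Ph_b {a : ℝ} (ha : 0 < a) (x : ℝ) : ‖Real.exp (-x^2/(2*a))‖ ≤ 1 := by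
  rw [Real.norm_of_nonneg (Real.exp_pos _).le, Real.exp_le_one_iff, neg_div]
  have : 0 ≤ x^2/(2*a) := by positivity
  linarith

lemma Ph_int {a : ℝ} (ha : 0 < a) : Integrable (fun x : ℝ => Real.exp (-x^2/(2*a))) μ :=
  Integrable.of_bound (Ph_m a).aestronglyMeasurable 1 (Filter.Eventually.of_forall (Ph_b ha))

lemma Ph_cont : ContinuousOn (Ph μ) (Set.Ioi 0) := by
  unfold Ph
  apply continuousOn_of_dominated (bound := fun _ => 1)
  · intro a _; exact (Ph_m a).aestronglyMeasurable
  · intro a ha; exact Filter.Eventually.of_forall (Ph_b ha)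
  · exact integrable_const _
  · refine Filter.Eventually.of_forall fun x => ?_
    apply Real.continuous_exp.comp_continuousOn
    apply ContinuousOn.div continuousOn_const (by fun_prop)
    intro a ha
    have : (0:ℝ) < a := ha
    positivity

lemma Ph_mono : MonotoneOn (Ph μ) (Set.Ioi 0) := by
  intro a ha b hb hab
  have ha' : (0:ℝ) < a := ha
  have hb' : (0:ℝ) < b := hb
  apply integral_mono (Ph_int ha') (Ph_int hb')
  intro x
  apply Real.exp_le_exp.2
  rw [neg_div, neg_div, neg_le_neg_iff]
  apply div_le_div_of_nonneg_left (sq_nonneg x) (by linarith)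
  linarith

lemma Ph_pos {a : ℝ} (ha : 0 < a) : 0 < Ph μ a := by
  exact integral_exp_pos (Ph_int ha)

lemma Ph_lim : Filter.Tendsto (Ph μ) Filter.atTop (nhds 1) := by
  have : (1:ℝ) = ∫ x, (1:ℝ) ∂μ := by simp
  rw [this]
  unfold Ph
  apply tendsto_integral_filter_of_dominated_convergence (fun _ => (1:ℝ))
  · exact Filter.Eventually.of_forall fun a => (Ph_m a).aestronglyMeasurable
  · filter_upwards [Filter.eventually_gt_atTop 0] with a ha
    exact Filter.Eventually.of_forall (Ph_b ha)
  · exact integrable_const _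
  · refine Filter.Eventually.of_forall fun x => ?_
    have h1 : Filter.Tendsto (fun a : ℝ => -x^2/(2*a)) Filter.atTop (nhds 0) := by
      apply Filter.Tendsto.div_atTop tendsto_const_nhds
      exact Filter.Tendsto.const_mul_atTop (by norm_num) Filter.tendsto_id
    have := (Real.continuous_exp.tendsto 0).comp h1
    rw [Real.exp_zero] at this
    exact this

end S15
end

noncomputable section
namespace S15
open MeasureTheory RealInnerProductSpace ProbabilityTheory

variable {m : ℕ} {F : Measure (Euc m)} [IsProbabilityMeasure F]

lemma convPow_prob (F : Measure (Euc m)) [IsProbabilityMeasure F] (n : ℕ) : IsProbabilityMeasure (convPow F n) := by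
  induction n with
  | zero => unfold convPow; infer_instance
  | succ n ih =>
    unfold convPow mconv
    exact Measure.isProbabilityMeasure_map (by fun_prop)

lemma convPow_integral (n : ℕ) : ∀ {g : Euc m → ℝ}, BM g → ∫ x, g x ∂(convPow F n) = (TT F)^[n] g 0 := by
  induction n with
  | zero => intro g hg; simp [convPow]
  | succ n ih =>
    intro g hg
    have := convPow_prob F n
    rw [Function.iterate_succ_apply, ← ih hg.top]
    have hcp : convPow F (n+1) = ((convPow F n).prod F).map (fun p => p.1 + p.2) := rfl
    rw [hcp, integral_map (by fun_prop) hg.meas.aestronglyMeasurable]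
    obtain ⟨C, hC⟩ := hg.bdd
    rw [integral_prod]
    · rfl
    · exact Integrable.of_bound (hg.meas.comp (measurable_fst.add measurable_snd)).aestronglyMeasurable C
        (Filter.Eventually.of_forall fun z => hC _)

lemma iter_const_mul (c : ℝ) (g : Euc m → ℝ) (n : ℕ) :
    (TT F)^[n] (fun y => c * g y) = fun y => c * (TT F)^[n] g y := by
  induction n generalizing g with
  | zero => rfl
  | succ n ih => rw [Function.iterate_succ_apply, top_const_mul, ih]; rfl

lemma iter_zero (n : ℕ) : (TT F)^[n] (fun _ => (0:ℝ)) = fun _ => 0 := by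
  have := iter_const_mul (F := F) 0 (fun _ => 0) n
  simpa using this

lemma BM.sum {ι : Type*} (s : Finset ι) {f : ι → Euc m → ℝ} (h : ∀ i ∈ s, BM (f i)) : BM (fun y => ∑ i ∈ s, f i y) := by
  classical
  induction s using Finset.induction_on with
  | empty => simpa using BM.const 0
  | insert a s ha ih =>
    simp only [Finset.sum_insert ha]
    exact (h a (by simp)).add (ih fun i hi => h i (by simp [hi]))

lemma BM.prod {ι : Type*} (s : Finset ι) {f : ι → Euc m → ℝ} (h : ∀ i ∈ s, BM (f i)) : BM (fun y => ∏ i ∈ s, f i y) := by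
  classical
  induction s using Finset.induction_on with
  | empty => simpa using BM.const 1
  | insert a s ha ih =>
    simp only [Finset.prod_insert ha]
    exact (h a (by simp)).mul (ih fun i hi => h i (by simp [hi]))

lemma iter_sum {ι : Type*} (s : Finset ι) {f : ι → Euc m → ℝ} (h : ∀ i ∈ s, BM (f i)) (n : ℕ) :
    (TT F)^[n] (fun y => ∑ i ∈ s, f i y) = fun y => ∑ i ∈ s, (TT F)^[n] (f i) y := by
  classical
  induction s using Finset.induction_on with
  | empty => simpa using iter_zero n
  | insert a s ha ih =>
    simp only [Finset.sum_insert ha]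
    rw [iter_add (h a (by simp)) (BM.sum s fun i hi => h i (by simp [hi])), ih fun i hi => h i (by simp [hi])]

lemma BM.coord {c : ℝ → ℝ} (hc : Measurable c) {M : ℝ} (hM : ∀ x, |c x| ≤ M) (i : Fin m) :
    BM (fun z : Euc m => c (z i)) := ⟨hc.comp (by fun_prop), ⟨M, fun z => hM _⟩⟩

/-- coordinate functional -/
def Pf (F : Measure (Euc m)) (N : ℕ) (i : Fin m) (a : ℝ) : ℝ := Ph ((convPow F N).map (fun x => x i)) a

lemma exp_bm {a : ℝ} (ha : 0 < a) (e : ℝ) (i : Fin m) : BM (fun z : Euc m => Real.exp (-(z i - e)^2/(2*a))) :=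
  BM.coord (c := fun x => Real.exp (-(x - e)^2/(2*a))) (by fun_prop) (M := 1) (fun x => Ph_b ha (x - e)) i

lemma Pf_prob (N : ℕ) (i : Fin m) : IsProbabilityMeasure ((convPow F N).map (fun x : Euc m => x i)) := by
  have := convPow_prob F N
  exact Measure.isProbabilityMeasure_map (by fun_prop)

lemma Pf_eq (N : ℕ) (i : Fin m) {a : ℝ} (ha : 0 < a) :
    Pf F N i a = (TT F)^[N] (fun z => Real.exp (-(z i)^2/(2*a))) 0 := by
  have h := exp_bm (m := m) ha 0 i
  simp only [sub_zero] at h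
  rw [← convPow_integral N h]
  unfold Pf Ph
  rw [integral_map (by fun_prop) (Ph_m a).aestronglyMeasurable]

lemma norm_pr (i : Fin m) (x : Euc m) : ‖pr i x‖^2 = (x i)^2 := by
  rw [EuclideanSpace.norm_sq_eq]; simp [pr_apply]

lemma Pf_sup (hF : Adm F) (N : ℕ) (i : Fin m) {a : ℝ} (ha : 0 < a) (e : ℝ) (y : Euc m) :
    (TT F)^[N] (fun z => Real.exp (-(z i - e)^2/(2*a))) y ≤ Pf F N i a := by
  have := pr_prob (F := F) i
  have hF' := hF.map (pr i)
  have hk : ∀ x : Euc m, (TT (F.map (pr i)))^[N] (kk a) (pr i x) =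
      cc 1 a * (TT F)^[N] (fun z => Real.exp (-(z i)^2/(2*a))) x := by
    intro x
    rw [iter_map (pr i) (kk_good ha).bm]
    have : (fun z : Euc m => kk a (pr i z)) = fun z => cc 1 a * Real.exp (-(z i)^2/(2*a)) := by
      funext z; unfold kk; rw [norm_pr]
    rw [this, iter_const_mul]
  have hr := (kk_rep (m := 1) ha).iter hF'.symm (kk_rep_int ha) N
  have hs : (fun z : Euc m => Real.exp (-(z i - e)^2/(2*a))) =
      fun z => (fun z : Euc m => Real.exp (-(z i)^2/(2*a))) (z + EuclideanSpace.single i (-e)) := by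
    funext z; simp [sub_eq_add_neg]
  rw [hs, iter_shift (EuclideanSpace.single i (-e)) (fun z : Euc m => Real.exp (-(z i)^2/(2*a))), Pf_eq N i ha]
  set w := y + EuclideanSpace.single i (-e)
  have h := hr.abs_le (Fc_pow_mul_int (kk_rep_int ha) N) (fun t => mul_nonneg (pow_nonneg (hF'.pos t) _)
    (mul_nonneg (cc_pos ha).le (kk_pos (by positivity) t).le)) (pr i w)
  have h0 := hk 0
  rw [map_zero] at h0
  rw [hk, h0, abs_mul, abs_of_pos (cc_pos ha)] at h
  exact (le_abs_self _).trans (le_of_mul_le_mul_left h (cc_pos ha))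

/-- diagonal scaling -/
def DD (a : Fin m → ℝ) : Euc m →L[ℝ] Euc m := LL (fun j => EuclideanSpace.single j (1/√(a j)))

lemma DD_apply (a : Fin m → ℝ) (x : Euc m) (j : Fin m) : DD a x j = x j / √(a j) := by
  unfold DD; rw [LL_apply]; simp [EuclideanSpace.inner_single_left]; ring

lemma map_prob {d : ℕ} (L : Euc m →L[ℝ] Euc d) : IsProbabilityMeasure (F.map L) :=
  Measure.isProbabilityMeasure_map L.continuous.measurable.aemeasurable

lemma phi_scale (hF : Adm F) (N : ℕ) {a : Fin m → ℝ} (ha : ∀ i, 0 < a i) (i : Fin m) :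
    phi ((F.map (DD a)).map (pr i)) N = Pf F N i (a i) := by
  have := map_prob (F := F) (DD a)
  have := pr_prob (F := F.map (DD a)) i
  have h1 := kk1_iter_zero (F := (F.map (DD a)).map (pr i)) ((hF.map (DD a)).map (pr i)) N
  have h2 : (TT ((F.map (DD a)).map (pr i)))^[N] (kk 1) (pr i (DD a 0)) =
      cc 1 1 * (TT F)^[N] (fun z => Real.exp (-(z i)^2/(2*a i))) 0 := by
    rw [iter_map (pr i) (kk_good one_pos).bm, iter_map (DD a)]
    · have : (fun z : Euc m => kk 1 (pr i (DD a z))) = fun z => cc 1 1 * Real.exp (-(z i)^2/(2*a i)) := by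
        funext z; unfold kk
        rw [norm_pr, DD_apply, div_pow, Real.sq_sqrt (ha i).le]
        congr 2; have := (ha i).ne'; field_simp
      rw [this, iter_const_mul]
    · exact ⟨(kk_meas 1).comp (pr i).continuous.measurable, by
        obtain ⟨C, hC⟩ := (kk_good (m := 1) one_pos).bdd
        exact ⟨C, fun y => hC _⟩⟩
  rw [map_zero, map_zero, h1, ← Pf_eq N i (ha i)] at h2
  exact mul_left_cancel₀ (cc_pos one_pos).ne' h2

lemma BM.lin {d : ℕ} (L : Euc d →L[ℝ] Euc m) {g : Euc m → ℝ} (hg : BM g) : BM (fun z => g (L z)) :=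
  ⟨hg.meas.comp L.continuous.measurable, by
    obtain ⟨C, hC⟩ := hg.bdd
    exact ⟨C, fun y => hC _⟩⟩

lemma term (hF : Adm F) {N n : ℕ} (hN : 1 ≤ N) (hn : 2 * N ≤ n) {a : Fin m → ℝ} (ha : ∀ i, 0 < a i)
    {c : Fin m → ℝ → ℝ} (hc : ∀ i, Measurable (c i)) (hb : ∀ i x, |c i x| ≤ 1) (q : Fin m → ℕ)
    (hq : ∀ i, (1/2:ℝ)^(2^(q i)) ≤ Pf F N i (a i)) {S : ℝ}
    (hS : ∀ y, |(TT F)^[N] (fun z => ∏ i, c i (z i)) y| ≤ S) :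
    |(TT F)^[n] (fun z => ∏ i, PP (a i) (c i) (z i)) 0 - (TT F)^[n+1] (fun z => ∏ i, PP (a i) (c i) (z i)) 0|
      ≤ cD m * (∏ i, (2:ℝ)^(q i))^(m+6) / N * S := by
  have hp := map_prob (F := F) (DD a)
  have hF' := hF.map (DD a)
  set F' := F.map (DD a) with hF'd
  set c' : Euc m → ℝ := fun y => ∏ i, c i (√(a i) * y i) with hc'd
  have hsa : ∀ i, 0 < √(a i) := fun i => Real.sqrt_pos.2 (ha i)
  have hc'b : BM c' := BM.prod _ fun i _ => BM.coord (c := fun x => c i (√(a i) * x))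
    ((hc i).comp (measurable_const_mul _)) (fun x => hb i _) i
  have hg : Good (kk 1 : Euc m → ℝ) := kk_good one_pos
  have hB : (fun z : Euc m => ∏ i, PP (a i) (c i) (z i)) = fun z => Kop (kk 1) volume c' (DD a z) := by
    funext z
    unfold Kop
    have : ∀ x : Euc m, kk 1 x * c' (DD a z + x) = ∏ i, g1 (x i) * c i (z i + √(a i) * x i) := by
      intro x
      rw [kk_prod, hc'd, Finset.prod_mul_distrib]
      congr 1
      refine Finset.prod_congr rfl fun i _ => ?_
      congr 1
      simp only [PiLp.add_apply, DD_apply]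
      have := (hsa i).ne'
      field_simp
    simp only [this]
    rw [prod_integral (fun i s => g1 s * c i (z i + √(a i) * s))]
    exact Finset.prod_congr rfl fun i _ => PP_eq (ha i).le (hc i) _
  have hKb : BM (Kop (kk 1) volume c') := BM.kop hg.wt hc'b
  rw [hB, ← iter_map (DD a) hKb n 0, ← iter_map (DD a) hKb (n+1) 0, map_zero]
  obtain ⟨k, rfl⟩ : ∃ k, n = (k + N) + N := ⟨n - 2*N, by omega⟩
  have e1 : ∀ M, (TT F')^[(k+N)+M] (Kop (kk 1) volume c') = Kop ((TT F')^[M] (kk 1)) volume ((TT F')^[k+N] c') := by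
    intro M
    rw [Function.iterate_add_apply, ← kop_iter hF'.symm hg hc'b, iter_kop (hg.iter M).wt hc'b]
  rw [add_assoc (k+N) N 1, e1, e1]
  have hcb2 : BM ((TT F')^[k+N] c') := hc'b.iter _
  have e2 := kop_sub_wt (hg.iter (F := F') N).wt (hg.iter (F := F') (N+1)).wt hcb2
  have e3 := congrFun e2 0
  rw [← e3]
  have hsup : ∀ y, |(TT F')^[k+N] c' y| ≤ S := by
    rw [Function.iterate_add_apply]
    apply iter_abs_le (hc'b.iter N)
    intro y
    have hy : y = DD a (WithLp.toLp 2 fun i => √(a i) * y i) := by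
      ext i; rw [DD_apply]; simp; rw [mul_div_cancel_left₀ _ (hsa i).ne']
    rw [hy, iter_map (DD a) hc'b]
    have : (fun z => c' (DD a z)) = fun z => ∏ i, c i (z i) := by
      funext z; rw [hc'd]
      refine Finset.prod_congr rfl fun i _ => ?_
      rw [DD_apply, mul_div_cancel₀ _ (hsa i).ne']
    rw [this]
    exact hS _
  have hS0 : 0 ≤ S := (abs_nonneg _).trans (hS 0)
  refine (kop_abs_le ((hg.iter N).sub (hg.iter (N+1))).wt hcb2 hsup 0).trans ?_
  apply mul_le_mul_of_nonneg_right _ hS0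
  exact n1_bound hF' hN q (fun i => by rw [phi_scale hF N ha i]; exact hq i)

end S15
end

noncomputable section
namespace S15
open MeasureTheory RealInnerProductSpace ProbabilityTheory

variable {m : ℕ} {F : Measure (Euc m)} [IsProbabilityMeasure F]

/-- bounds on the pieces -/
def MM : ℕ → ℝ
  | 0 => 1
  | q+1 => 2 * (1/2:ℝ)^(2^q)

lemma half_pow_le (r q : ℕ) : (1/2:ℝ)^(2^q) * ((2:ℝ)^q)^r ≤ r.factorial * (1/Real.log 2)^r := by
  have hl : 0 < Real.log 2 := Real.log_pos (by norm_num)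
  set x : ℝ := (2:ℝ)^q * Real.log 2 with hx
  have hx0 : 0 ≤ x := by positivity
  have h1 := Real.pow_div_factorial_le_exp x hx0 r
  have h2 : Real.exp x = (2:ℝ)^(2^q) := by
    rw [hx, mul_comm, ← Real.rpow_natCast 2 (2^q), Real.rpow_def_of_pos (by norm_num)]
    push_cast; rfl
  rw [h2, hx, mul_pow] at h1
  have hf : (0:ℝ) < r.factorial := by exact_mod_cast Nat.factorial_pos r
  rw [div_le_iff₀ hf] at h1
  have h3 : (0:ℝ) < 2^(2^q) := by positivity
  rw [one_div_pow, one_div_pow, one_div_mul_eq_div, div_le_iff₀ h3, mul_one_div, div_mul_eq_mul_div, le_div_iff₀ (by positivity)]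
  linarith

lemma exK (m : ℕ) (hm : 1 ≤ m) : ∃ K : ℝ, 1 ≤ K ∧ ∀ q, MM q ≤ (K * (1/2:ℝ)^(q*(m+7)))^m := by
  set r := m*(m+7) with hr
  have hl : 0 < Real.log 2 := Real.log_pos (by norm_num)
  set K : ℝ := max 1 (2 * 2^r * (r.factorial * (1/Real.log 2)^r)) with hK
  have hK1 : 1 ≤ K := le_max_left _ _
  refine ⟨K, hK1, fun q => ?_⟩
  cases q with
  | zero => simp [MM]; exact one_le_pow₀ hK1
  | succ q =>
    rw [mul_pow, ← pow_mul, show (q+1)*(m+7)*m = q * r + r by rw [hr]; ring]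
    have hKm : K ≤ K^m := le_self_pow₀ hK1 (by omega)
    have h := half_pow_le r q
    rw [← pow_mul] at h
    have h2 : 2 * 2^r * ((1/2:ℝ)^(2^q) * 2^(q*r)) ≤ K^m := by
      refine le_trans ?_ hKm
      refine le_trans ?_ (le_max_right _ _)
      gcongr
    show 2 * (1/2:ℝ)^(2^q) ≤ _
    rw [one_div_pow, one_div_pow, mul_one_div, mul_one_div, le_div_iff₀ (by positivity)]
    refine le_trans (le_of_eq ?_) h2
    rw [pow_add]; field_simp
    rw [← mul_pow]; norm_num

/-- the constant -/
def KK (m : ℕ) : ℝ := if h : 1 ≤ m then (exK m h).choose else 1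

lemma KK_one (m : ℕ) : 1 ≤ KK m := by
  unfold KK; split_ifs with h
  · exact (exK m h).choose_spec.1
  · exact le_rfl

lemma KK_spec (hm : 1 ≤ m) (q : ℕ) : MM q ≤ (KK m * (1/2:ℝ)^(q*(m+7)))^m := by
  unfold KK; rw [dif_pos hm]; exact (exK m hm).choose_spec.2 q

def cE (m : ℕ) : ℝ := cD m * (2 * KK m)^m

lemma cE_pos (m : ℕ) : 0 < cE m := by
  have := cD_pos m; have := KK_one m
  unfold cE; positivity

lemma S_bound (hF : Adm F) {N : ℕ} {c : Fin m → ℝ → ℝ} (hc : ∀ i, Measurable (c i)) (hb : ∀ i x, |c i x| ≤ 1)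
    (i : Fin m) {a l r v : ℝ} (ha : 0 < a) (hv : Pf F N i a = v)
    (h : ∀ x, |c i x| ≤ Real.exp (-(x-l)^2/(2*a)) + Real.exp (-(x-r)^2/(2*a))) (y : Euc m) :
    |(TT F)^[N] (fun z => ∏ i, c i (z i)) y| ≤ 2 * v := by
  have hB : BM (fun z : Euc m => ∏ i, c i (z i)) := BM.prod _ fun i _ => BM.coord (hc i) (hb i) i
  have hE : BM (fun z : Euc m => Real.exp (-(z i-l)^2/(2*a)) + Real.exp (-(z i-r)^2/(2*a))) :=
    (exp_bm ha l i).add (exp_bm ha r i)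
  have hpt : ∀ z : Euc m, |∏ i, c i (z i)| ≤ Real.exp (-(z i-l)^2/(2*a)) + Real.exp (-(z i-r)^2/(2*a)) := by
    intro z
    refine le_trans ?_ (h (z i))
    rw [Finset.abs_prod, ← Finset.mul_prod_erase _ _ (Finset.mem_univ i)]
    exact mul_le_of_le_one_right (abs_nonneg _) (Finset.prod_le_one (fun _ _ => abs_nonneg _) fun j _ => hb j _)
  have hE2 : (TT F)^[N] (fun z : Euc m => Real.exp (-(z i-l)^2/(2*a)) + Real.exp (-(z i-r)^2/(2*a))) y ≤ 2 * v := by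
    rw [iter_add (exp_bm ha l i) (exp_bm ha r i)]
    have h1 := Pf_sup hF N i ha l y
    have h2 := Pf_sup hF N i ha r y
    rw [hv] at h1 h2
    linarith
  have hN : (TT F)^[N] (fun z : Euc m => -1 * ∏ i, c i (z i)) y = - (TT F)^[N] (fun z : Euc m => ∏ i, c i (z i)) y := by
    rw [iter_const_mul]; ring
  have hB' : BM (fun z : Euc m => -1 * ∏ i, c i (z i)) := (BM.const (-1)).mul hB
  have u1 := iter_mono (F := F) hB hE (fun z => (le_abs_self _).trans (hpt z)) N y
  have u2 := iter_mono (F := F) hB' hE (fun z => by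
    have := (neg_le_abs _).trans (hpt z); linarith) N y
  rw [hN] at u2
  rw [abs_le]; constructor <;> linarith

lemma smooth_box (hm : 1 ≤ m) (hF : Adm F) {N n : ℕ} (hN : 1 ≤ N) (hn : 2 * N ≤ n) (l r : Fin m → ℝ) {ε : ℝ} (hε : 0 < ε) :
    |(TT F)^[n] (fun z => ∏ i, PP ε (ii (l i) (r i)) (z i)) 0 - (TT F)^[n+1] (fun z => ∏ i, PP ε (ii (l i) (r i)) (z i)) 0|
      ≤ cE m / N := by
  have hch : ∀ i : Fin m, _ := fun i =>
    have := Pf_prob (F := F) N i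
    chain (Φ := Pf F N i) (Ph_cont) Ph_mono (fun a ha => Ph_pos ha) Ph_lim hε (l i) (r i)
  choose J a c h1 h2 h3 h4 h5 h6 using hch
  set Q : Finset (Fin m → ℕ) := Fintype.piFinset (fun i => Finset.range (J i + 1)) with hQ
  set B : (Fin m → ℕ) → Euc m → ℝ := fun q z => ∏ i, PP (a i (q i)) (c i (q i)) (z i) with hBd
  have hB : (fun z : Euc m => ∏ i, PP ε (ii (l i) (r i)) (z i)) = fun z => ∑ q ∈ Q, B q z := by
    funext z
    simp only [h5]
    rw [Finset.prod_univ_sum]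
  have hBb : ∀ q ∈ Q, BM (B q) := fun q _ => BM.prod _ fun i _ =>
    BM.coord (PP_meas (h3 i (q i)) _) (fun x => PP_bound (h4 i (q i)) _ x) i
  rw [hB, iter_sum Q hBb, iter_sum Q hBb]
  simp only
  rw [← Finset.sum_sub_distrib]
  refine (Finset.abs_sum_le_sum_abs _ _).trans ?_
  have hK := KK_one m
  have hterm : ∀ q : Fin m → ℕ, |(TT F)^[n] (B q) 0 - (TT F)^[n+1] (B q) 0| ≤
      cD m / N * ∏ i, (KK m * (1/2:ℝ)^(q i)) := by
    intro q
    have hMb : ∀ i y, |(TT F)^[N] (fun z => ∏ i, c i (q i) (z i)) y| ≤ MM (q i) := by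
      intro i y
      have hBM : BM (fun z : Euc m => ∏ i, c i (q i) (z i)) := BM.prod _ fun i _ => BM.coord (h3 i _) (h4 i _) i
      rcases hqi : q i with _ | p
      · apply iter_abs_le hBM
        intro z
        rw [Finset.abs_prod]
        exact Finset.prod_le_one (fun _ _ => abs_nonneg _) fun j _ => h4 _ _ _
      · rcases h6 i p with h | h
        · have : (fun z : Euc m => ∏ i, c i (q i) (z i)) = fun _ => 0 := by
            funext z
            apply Finset.prod_eq_zero (Finset.mem_univ i)
            rw [hqi]; exact h _
          rw [this, iter_zero, abs_zero]
          unfold MM; positivity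
        · exact S_bound hF (fun i => h3 i (q i)) (fun i => h4 i (q i)) i (hε.trans_le (h1 i p)) h.1
            (fun x => by rw [hqi]; exact h.2 x) y
    set R : ℕ → ℝ := fun q => KK m * (1/2:ℝ)^(q*(m+7)) with hR
    have hR0 : ∀ q, 0 ≤ R q := fun q => by positivity
    have hS : ∀ y, |(TT F)^[N] (fun z => ∏ i, c i (q i) (z i)) y| ≤ ∏ i, R (q i) := by
      intro y
      apply le_of_pow_le_pow_left₀ (n := m) (by omega) (Finset.prod_nonneg fun i _ => hR0 _)
      rw [← Finset.prod_pow]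
      calc |(TT F)^[N] (fun z => ∏ i, c i (q i) (z i)) y|^m
          = ∏ i : Fin m, |(TT F)^[N] (fun z => ∏ i, c i (q i) (z i)) y| := by simp
        _ ≤ ∏ i, R (q i)^m := Finset.prod_le_prod (fun _ _ => abs_nonneg _) fun i _ =>
            (hMb i y).trans (KK_spec hm (q i))
    have ht := term hF hN hn (fun i => hε.trans_le (h1 i (q i))) (fun i => h3 i (q i)) (fun i => h4 i (q i)) q
      (fun i => h2 i (q i)) hS
    refine ht.trans (le_of_eq ?_)
    rw [← Finset.prod_pow, mul_div_right_comm, mul_assoc, ← Finset.prod_mul_distrib]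
    congr 1
    refine Finset.prod_congr rfl fun i _ => ?_
    rw [hR]
    simp only
    rw [show q i * (m+7) = q i * (m+6) + q i by ring, pow_add (1/2:ℝ), ← pow_mul]
    have : (2:ℝ)^(q i*(m+6)) * (1/2)^(q i*(m+6)) = 1 := by rw [← mul_pow]; norm_num
    calc (2:ℝ)^(q i*(m+6)) * (KK m * ((1/2)^(q i*(m+6)) * (1/2)^(q i)))
        = ((2:ℝ)^(q i*(m+6)) * (1/2)^(q i*(m+6))) * (KK m * (1/2)^(q i)) := by ring
      _ = _ := by rw [this, one_mul]
  refine (Finset.sum_le_sum fun q _ => hterm q).trans ?_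
  rw [← Finset.mul_sum, hQ, ← Finset.prod_univ_sum (fun i => Finset.range (J i + 1)) (fun _ q => KK m * (1/2:ℝ)^q)]
  have hD := cD_pos m
  calc cD m / N * ∏ i : Fin m, ∑ q ∈ Finset.range (J i + 1), KK m * (1/2:ℝ)^q
      ≤ cD m / N * ∏ i : Fin m, (2 * KK m) := by
        gcongr with i
        rw [← Finset.mul_sum, mul_comm]
        gcongr
        have := geom_sum_Ico_le_of_lt_one (x := (1/2:ℝ)) (m := 0) (n := J i + 1) (by norm_num) (by norm_num)
        norm_num at this ⊢
        exact this
    _ = cE m / N := by unfold cE; simp; ring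

end S15
end

noncomputable section
namespace S15
open MeasureTheory RealInnerProductSpace ProbabilityTheory Filter

/-- margins -/
def dl (k : ℕ) : ℝ := 1/((k:ℝ)+1)

lemma dl_pos (k : ℕ) : 0 < dl k := by unfold dl; positivity
lemma dl_le (k : ℕ) : dl k ≤ 1 := by
  unfold dl; rw [div_le_one (by positivity)]; linarith [(Nat.cast_nonneg k : (0:ℝ) ≤ k)]
lemma dl_lim : Tendsto dl atTop (nhds 0) := tendsto_one_div_add_atTop_nhds_zero_nat

lemma left_end (α : EReal) : ∃ l : ℕ → ℝ, ∀ x : ℝ,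
    (α ≤ x → ∀ᶠ k in atTop, l k + dl k ≤ x) ∧ (¬ α ≤ x → ∀ᶠ k in atTop, x + dl k ≤ l k) := by
  have hk : ∀ y : ℝ, ∀ᶠ k : ℕ in atTop, y ≤ (k:ℝ) := fun y =>
    tendsto_natCast_atTop_atTop.eventually (eventually_ge_atTop y)
  induction α with
  | bot =>
    refine ⟨fun k => -k, fun x => ⟨fun _ => ?_, fun h => absurd bot_le h⟩⟩
    filter_upwards [hk (1 - x)] with k h
    linarith [dl_le k]
  | top =>
    refine ⟨fun k => k, fun x => ⟨fun h => ?_, fun _ => ?_⟩⟩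
    · exact absurd (top_le_iff.1 h) (EReal.coe_ne_top x)
    · filter_upwards [hk (1 + x)] with k h
      linarith [dl_le k]
  | coe v =>
    refine ⟨fun k => v - dl k, fun x => ⟨fun h => ?_, fun h => ?_⟩⟩
    · have := EReal.coe_le_coe_iff.1 h
      exact Eventually.of_forall fun k => by linarith
    · have h' : x < v := by
        by_contra hc; exact h (EReal.coe_le_coe_iff.2 (not_lt.1 hc))
      filter_upwards [dl_lim.eventually (gt_mem_nhds (show 0 < (v - x)/2 by linarith))] with k hk
      linarith

lemma right_end (β : EReal) : ∃ r : ℕ → ℝ, ∀ x : ℝ,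
    ((x:EReal) ≤ β → ∀ᶠ k in atTop, x + dl k ≤ r k) ∧ (¬ (x:EReal) ≤ β → ∀ᶠ k in atTop, r k + dl k ≤ x) := by
  obtain ⟨l, hl⟩ := left_end (-β)
  have he : ∀ x : ℝ, (-β ≤ ((-x : ℝ) : EReal)) ↔ (x:EReal) ≤ β := by
    intro x; rw [EReal.coe_neg, EReal.neg_le_neg_iff]
  refine ⟨fun k => - l k, fun x => ⟨fun h => ?_, fun h => ?_⟩⟩
  · filter_upwards [(hl (-x)).1 ((he x).2 h)] with k hk
    linarith
  · filter_upwards [(hl (-x)).2 (fun h' => h ((he x).1 h'))] with k hk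
    linarith

lemma exp_dl_lim : Tendsto (fun k => Real.exp (-(dl k)^2/(2*(dl k)^3))) atTop (nhds 0) := by
  apply Real.tendsto_exp_atBot.comp
  have : (fun k => -(dl k)^2/(2*(dl k)^3)) = fun k : ℕ => -(1/2) * ((k:ℝ)+1) := by
    funext k; unfold dl; field_simp
  rw [this]
  apply Tendsto.const_mul_atTop_of_neg (by norm_num)
  exact tendsto_atTop_add_const_right _ _ tendsto_natCast_atTop_atTop

open Classical in
lemma smooth_lim {α β : EReal} {l r : ℕ → ℝ}
    (hl : ∀ x : ℝ, (α ≤ x → ∀ᶠ k in atTop, l k + dl k ≤ x) ∧ (¬ α ≤ x → ∀ᶠ k in atTop, x + dl k ≤ l k))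
    (hr : ∀ x : ℝ, ((x:EReal) ≤ β → ∀ᶠ k in atTop, x + dl k ≤ r k) ∧
      (¬ (x:EReal) ≤ β → ∀ᶠ k in atTop, r k + dl k ≤ x)) (x : ℝ) :
    Tendsto (fun k => PP ((dl k)^3) (ii (l k) (r k)) x) atTop (nhds (if α ≤ x ∧ (x:EReal) ≤ β then 1 else 0)) := by
  set v : ℝ := if α ≤ x ∧ (x:EReal) ≤ β then 1 else 0 with hv
  have hev : ∀ᶠ k in atTop, ii (l k) (r k) x = v ∧ (dl k)^2 ≤ (x - l k)^2 ∧ (dl k)^2 ≤ (x - r k)^2 := by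
    have h1 : ∀ᶠ k in atTop, (α ≤ x ∧ l k + dl k ≤ x) ∨ (¬ α ≤ x ∧ x + dl k ≤ l k) := by
      by_cases h : α ≤ x
      · filter_upwards [(hl x).1 h] with k hk using Or.inl ⟨h, hk⟩
      · filter_upwards [(hl x).2 h] with k hk using Or.inr ⟨h, hk⟩
    have h2 : ∀ᶠ k in atTop, ((x:EReal) ≤ β ∧ x + dl k ≤ r k) ∨ (¬ (x:EReal) ≤ β ∧ r k + dl k ≤ x) := by
      by_cases h : (x:EReal) ≤ β
      · filter_upwards [(hr x).1 h] with k hk using Or.inl ⟨h, hk⟩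
      · filter_upwards [(hr x).2 h] with k hk using Or.inr ⟨h, hk⟩
    filter_upwards [h1, h2] with k h1 h2
    have hd := dl_pos k
    refine ⟨?_, ?_, ?_⟩
    · rw [hv]; unfold ii
      rcases h1 with h1 | h1
      · rcases h2 with h2 | h2
        · rw [if_pos ⟨h1.1, h2.1⟩, Set.indicator_of_mem]
          exact ⟨by linarith, by linarith⟩
        · rw [if_neg (fun h => h2.1 h.2), Set.indicator_of_notMem]
          intro h; linarith [h.2]
      · rw [if_neg (fun h => h1.1 h.1), Set.indicator_of_notMem]
        intro h; linarith [h.1]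
    · rcases h1 with h1 | h1 <;> nlinarith
    · rcases h2 with h2 | h2 <;> nlinarith
  have hz : Tendsto (fun k => 2 * Real.exp (-(dl k)^2/(2*(dl k)^3))) atTop (nhds 0) := by
    simpa using exp_dl_lim.const_mul 2
  rw [tendsto_iff_norm_sub_tendsto_zero]
  refine squeeze_zero' (Eventually.of_forall fun k => norm_nonneg _) ?_ hz
  filter_upwards [hev] with k ⟨e1, e2, e3⟩
  have hd : 0 < (dl k)^3 := pow_pos (dl_pos k) 3
  have := cher hd (l k) (r k) x
  rw [e1] at this
  rw [Real.norm_eq_abs, abs_sub_comm]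
  refine this.trans ?_
  have hle : ∀ u : ℝ, (dl k)^2 ≤ u^2 → Real.exp (-u^2/(2*(dl k)^3)) ≤ Real.exp (-(dl k)^2/(2*(dl k)^3)) := by
    intro u hu
    apply Real.exp_le_exp.2
    exact div_le_div_of_nonneg_right (by linarith) (by positivity)
  linarith [hle _ e2, hle _ e3]

variable {m : ℕ} {F : Measure (Euc m)} [IsProbabilityMeasure F]

/-- box with extended endpoints -/
def bx (a b : Fin m → EReal) : Set (Euc m) := {y | ∀ j, a j ≤ ((y j : ℝ) : EReal) ∧ ((y j : ℝ) : EReal) ≤ b j}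

lemma bx_meas (a b : Fin m → EReal) : MeasurableSet (bx a b) := by
  have : bx a b = ⋂ j, (fun y : Euc m => ((y j : ℝ) : EReal)) ⁻¹' Set.Icc (a j) (b j) := by
    ext y; simp [bx]
  rw [this]
  refine MeasurableSet.iInter fun j => measurableSet_Icc.preimage ?_
  exact measurable_coe_real_ereal.comp (by fun_prop)

/-- its indicator -/
def bi (a b : Fin m → EReal) : Euc m → ℝ := (bx a b).indicator 1

lemma bi_bm (a b : Fin m → EReal) : BM (bi a b) := by
  refine ⟨measurable_one.indicator (bx_meas a b), 1, fun y => ?_⟩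
  unfold bi Set.indicator
  split_ifs <;> simp

lemma sharp_box (hm : 1 ≤ m) (hF : Adm F) {N n : ℕ} (hN : 1 ≤ N) (hn : 2 * N ≤ n) (a b : Fin m → EReal) :
    |(TT F)^[n] (bi a b) 0 - (TT F)^[n+1] (bi a b) 0| ≤ cE m / N := by
  classical
  choose l hl using fun i => left_end (a i)
  choose r hr using fun i => right_end (b i)
  set g : ℕ → Euc m → ℝ := fun k z => ∏ i, PP ((dl k)^3) (ii (l i k) (r i k)) (z i) with hg
  have hgb : ∀ k, BM (g k) := fun k => BM.prod _ fun i _ =>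
    BM.coord (PP_meas (ii_meas _ _) _) (fun x => PP_bound (ii_abs _ _) _ x) i
  have hg1 : ∀ k z, ‖g k z‖ ≤ 1 := by
    intro k z
    rw [Real.norm_eq_abs, hg]
    simp only
    rw [Finset.abs_prod]
    exact Finset.prod_le_one (fun _ _ => abs_nonneg _) fun j _ => PP_bound (ii_abs _ _) _ _
  have hpt : ∀ z, Tendsto (fun k => g k z) atTop (nhds (bi a b z)) := by
    intro z
    have h1 : Tendsto (fun k => g k z) atTop
        (nhds (∏ i, if a i ≤ ((z i : ℝ):EReal) ∧ ((z i:ℝ):EReal) ≤ b i then (1:ℝ) else 0)) :=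
      tendsto_finsetProd _ fun i _ => smooth_lim (hl i) (hr i) (z i)
    convert h1 using 2
    unfold bi
    by_cases h : z ∈ bx a b
    · rw [Set.indicator_of_mem h]
      symm; apply Finset.prod_eq_one
      intro i _; rw [if_pos (h i)]
    · rw [Set.indicator_of_notMem h]
      have : ∃ j, ¬ (a j ≤ ((z j : ℝ):EReal) ∧ ((z j:ℝ):EReal) ≤ b j) := by
        by_contra hc; push Not at hc; exact h fun j => hc j
      obtain ⟨j, hj⟩ := this
      symm; exact Finset.prod_eq_zero (Finset.mem_univ j) (if_neg hj)
  have hlim : ∀ M, Tendsto (fun k => (TT F)^[M] (g k) 0) atTop (nhds ((TT F)^[M] (bi a b) 0)) := by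
    intro M
    have := convPow_prob F M
    simp only [← convPow_integral M (hgb _)]
    rw [← convPow_integral M (bi_bm a b)]
    exact tendsto_integral_of_dominated_convergence (fun _ => (1:ℝ)) (fun k => (hgb k).meas.aestronglyMeasurable)
      (integrable_const _) (fun k => Eventually.of_forall (hg1 k)) (Eventually.of_forall hpt)
  refine le_of_tendsto ((hlim n).sub (hlim (n+1))).abs (Eventually.of_forall fun k => ?_)
  exact smooth_box hm hF hN hn _ _ (pow_pos (dl_pos k) 3)

variable {d : ℕ}

lemma poly_eq {t : Fin m → Euc d} {X : Set (Euc d)} (hX : X ∈ polyhedraOn t) :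
    ∃ a b : Fin m → EReal, X = LL t ⁻¹' bx a b := by
  unfold polyhedraOn at hX
  obtain ⟨a, b, h⟩ := hX
  refine ⟨a, b, ?_⟩
  have hh : X = {x | ∀ j, a j ≤ ((⟪x, t j⟫ : ℝ) : EReal) ∧ ((⟪x, t j⟫ : ℝ) : EReal) ≤ b j} := by
    exact h
  rw [hh]
  ext x
  simp only [bx, Set.mem_preimage, Set.mem_ofPred_eq, LL_apply]
  simp only [real_inner_comm]

lemma poly_meas {X : Set (Euc d)} (hX : X ∈ polyhedra d m) : MeasurableSet X := by
  obtain ⟨t, ht⟩ := hX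
  obtain ⟨a, b, rfl⟩ := poly_eq ht
  exact (bx_meas a b).preimage (LL t).continuous.measurable

def cF (m : ℕ) : ℝ := 4 * cE m + 2

lemma cF_pos (m : ℕ) : 2 < cF m := by have := cE_pos m; unfold cF; linarith

lemma step (hm : 1 ≤ m) {G : Measure (Euc d)} [IsProbabilityMeasure G] (hG : Adm G) {X : Set (Euc d)} (hX : X ∈ polyhedra d m) (n : ℕ) :
    |(convPow G n X).toReal - (convPow G (n+1) X).toReal| ≤ cF m / ((n:ℝ)+1) := by
  have hE := cE_pos m
  have hb : ∀ n, 0 ≤ (convPow G n X).toReal ∧ (convPow G n X).toReal ≤ 1 := fun n => by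
    have := convPow_prob G n
    exact ⟨ENNReal.toReal_nonneg, measureReal_le_one⟩
  by_cases hn : n < 2
  · have h1 := hb n
    have h2 := hb (n+1)
    have : |(convPow G n X).toReal - (convPow G (n+1) X).toReal| ≤ 1 := by
      rw [abs_le]; constructor <;> linarith
    refine this.trans ?_
    rw [le_div_iff₀ (by positivity)]
    have : (n:ℝ) ≤ 1 := by exact_mod_cast Nat.le_of_lt_succ hn
    linarith [cF_pos m]
  · obtain ⟨t, ht⟩ := hX
    obtain ⟨a, b, rfl⟩ := poly_eq ht
    have hp := map_prob (F := G) (LL t)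
    have hS := bx_meas a b
    have key : ∀ n, (convPow G n (LL t ⁻¹' bx a b)).toReal = (TT (G.map (LL t)))^[n] (bi a b) 0 := by
      intro n
      have h1 := iter_map (F := G) (LL t) (bi_bm a b) n 0
      rw [map_zero] at h1
      rw [h1, ← convPow_integral n ((bi_bm a b).lin (LL t))]
      have : (fun z => bi a b (LL t z)) = (LL t ⁻¹' bx a b).indicator 1 := by
        funext z; unfold bi; rfl
      rw [this, integral_indicator_one (hS.preimage (LL t).continuous.measurable)]
      rfl
    rw [key, key]
    refine (sharp_box hm (hG.map (LL t)) (N := n/2) (by omega) (by omega) a b).trans ?_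
    have hN : (0:ℝ) < ((n/2 : ℕ):ℝ) := by exact_mod_cast (show 0 < n/2 by omega)
    have h3 : (n:ℝ) + 1 ≤ 4 * ((n/2:ℕ):ℝ) := by exact_mod_cast (show n + 1 ≤ 4*(n/2) by omega)
    rw [div_le_div_iff₀ hN (by positivity)]
    unfold cF
    nlinarith

lemma multi {p : ℕ → ℝ} {C : ℝ} (hC : 2 < C) (hp : ∀ n, 0 ≤ p n ∧ p n ≤ 1)
    (hs : ∀ n : ℕ, |p n - p (n+1)| ≤ C / ((n:ℝ)+1)) (k l : ℕ) :
    |p k - p l| ≤ min (2 * C * |(k:ℝ) - (l:ℝ)| / ((l:ℝ)+1)) 1 := by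
  have h1 : |p k - p l| ≤ 1 := by
    have := hp k; have := hp l
    rw [abs_le]; constructor <;> linarith
  have key : ∀ l j : ℕ, |p (l+j) - p l| ≤ C * j / ((l:ℝ)+1) := by
    intro l j
    induction j with
    | zero => simp
    | succ j ih =>
      have h2 := hs (l+j)
      have h3 : C / (((l+j:ℕ):ℝ)+1) ≤ C / ((l:ℝ)+1) := by
        gcongr; exact Nat.le_add_right _ _
      have h4 := abs_sub_le (p (l+(j+1))) (p (l+j)) (p l)
      rw [abs_sub_comm (p (l+(j+1))) (p (l+j))] at h4
      rw [← add_assoc] at *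
      have : C * ((j+1:ℕ):ℝ) / ((l:ℝ)+1) = C * j / ((l:ℝ)+1) + C / ((l:ℝ)+1) := by push_cast; ring
      rw [this]; linarith
  refine le_min ?_ h1
  rcases le_total l k with h | h
  · obtain ⟨j, rfl⟩ := Nat.exists_eq_add_of_le h
    refine (key l j).trans ?_
    push_cast
    rw [add_sub_cancel_left, abs_of_nonneg (Nat.cast_nonneg j)]
    gcongr
    linarith
  · obtain ⟨j, rfl⟩ := Nat.exists_eq_add_of_le h
    have hk := key k j
    rw [abs_sub_comm] at hk
    have ea : |(k:ℝ) - ((k+j:ℕ):ℝ)| = j := by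
      push_cast; rw [abs_sub_comm, add_sub_cancel_left, abs_of_nonneg (Nat.cast_nonneg j)]
    rw [ea]
    push_cast
    have hj : (0:ℝ) ≤ j := Nat.cast_nonneg j
    have hk0 : (0:ℝ) ≤ k := Nat.cast_nonneg k
    by_cases hc : (j:ℝ) ≤ k + 1
    · refine hk.trans ?_
      rw [div_le_div_iff₀ (by positivity) (by positivity)]
      have : C * j * ((k:ℝ) + j + 1) ≤ C * j * (2 * (k+1)) := by
        gcongr; linarith
      linarith
    · refine h1.trans ?_
      rw [le_div_iff₀ (by positivity)]
      push Not at hc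
      nlinarith

lemma mix {Ω : Type} [MeasurableSpace Ω] (P : Measure Ω) [IsProbabilityMeasure P] {G : Measure (Euc d)} [IsProbabilityMeasure G]
    {μ : Ω → ℕ} (hμ : Measurable μ) {X : Set (Euc d)} (hX : MeasurableSet X) :
    ((Measure.sum fun k => P {ω | μ ω = k} • convPow G k) X).toReal = ∫ ω, (convPow G (μ ω) X).toReal ∂P := by
  rw [Measure.sum_apply _ hX]
  rw [integral_toReal]
  · congr 1
    have : ∫⁻ ω, convPow G (μ ω) X ∂P = ∫⁻ k, convPow G k X ∂(P.map μ) := by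
      rw [lintegral_map (measurable_of_countable _) hμ]
    rw [this, lintegral_countable']
    refine tsum_congr fun k => ?_
    rw [Measure.smul_apply, smul_eq_mul, mul_comm, Measure.map_apply hμ (measurableSet_singleton k)]
    rfl
  · exact ((measurable_of_countable (fun k => convPow G k X)).comp hμ).aemeasurable
  · refine Eventually.of_forall fun ω => ?_
    have := convPow_prob G (μ ω)
    exact measure_lt_top _ _

lemma adm_of {G : Measure (Euc d)} [IsProbabilityMeasure G] (hs : IsSymmMeasure G) (hp : ∀ t, 0 ≤ (charFn G t).re) : Adm G := by
  refine ⟨inferInstance, hs, fun t => ?_⟩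
  have h := hp t
  unfold charFn at h
  have hi : Integrable (fun x : Euc d => Complex.exp ((⟪t, x⟫ : ℂ) * Complex.I)) G := by
    refine Integrable.of_bound (by fun_prop) 1 (Eventually.of_forall fun x => ?_)
    rw [Complex.norm_exp_ofReal_mul_I]
  have h2 := integral_re hi
  unfold Fc
  simp only [RCLike.re_to_complex, Complex.exp_ofReal_mul_I_re] at h2
  rw [h2]; exact h

end S15
end

theorem stmt15 :
    ∃ C : ℕ → ℝ, (∀ m, 0 < C m) ∧
      ∀ (d m : ℕ), 0 < d → 0 < m →
        ∀ F : Measure (Euc d), IsProbabilityMeasure F → IsSymmMeasure F →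
          (∀ t : Euc d, 0 ≤ (charFn F t).re) →
          ∀ (Ω : Type) (_ : MeasurableSpace Ω) (P : Measure Ω), IsProbabilityMeasure P →
            ∀ μ ν : Ω → ℕ, Measurable μ → Measurable ν →
              rhoPoly m (Measure.sum fun k => P {ω | μ ω = k} • convPow F k)
                  (Measure.sum fun k => P {ω | ν ω = k} • convPow F k) ≤
                ∫ ω, min (C m * |(μ ω : ℝ) - (ν ω : ℝ)| / ((ν ω : ℝ) + 1)) 1 ∂P := by
  refine ⟨fun m => 2 * S15.cF m, fun m => by linarith [S15.cF_pos m], ?_⟩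
  intro d m _ hm F hF hs hp Ω _ P hP μ ν hμ hν
  have hA := S15.adm_of hs hp
  have hb : ∀ (X : Set (Euc d)) (n : ℕ), 0 ≤ (convPow F n X).toReal ∧ (convPow F n X).toReal ≤ 1 := fun X n => by
    have := S15.convPow_prob F n
    exact ⟨ENNReal.toReal_nonneg, measureReal_le_one⟩
  have hR0 : ∀ ω, 0 ≤ min (2 * S15.cF m * |(μ ω : ℝ) - (ν ω : ℝ)| / ((ν ω : ℝ) + 1)) 1 := by
    intro ω
    have := S15.cF_pos m
    have h0 : 0 ≤ S15.cF m := by linarith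
    positivity
  have hmR : Measurable (fun ω => min (2 * S15.cF m * |(μ ω : ℝ) - (ν ω : ℝ)| / ((ν ω : ℝ) + 1)) 1) := by
    have h1 : Measurable (fun ω => ((μ ω : ℕ) : ℝ)) := (measurable_of_countable _).comp hμ
    have h2 : Measurable (fun ω => ((ν ω : ℕ) : ℝ)) := (measurable_of_countable _).comp hν
    exact ((((h1.sub h2).abs).const_mul _).div (h2.add_const 1)).min measurable_const
  have hiR : Integrable (fun ω => min (2 * S15.cF m * |(μ ω : ℝ) - (ν ω : ℝ)| / ((ν ω : ℝ) + 1)) 1) P :=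
    Integrable.of_bound hmR.aestronglyMeasurable 1 (Filter.Eventually.of_forall fun ω => by
      rw [Real.norm_of_nonneg (hR0 ω)]; exact min_le_right _ _)
  unfold rhoPoly
  refine Real.iSup_le (fun X => Real.iSup_le (fun hX => ?_) (integral_nonneg hR0)) (integral_nonneg hR0)
  have hXm := S15.poly_meas hX
  have hip : ∀ ξ : Ω → ℕ, Measurable ξ → Integrable (fun ω => (convPow F (ξ ω) X).toReal) P := fun ξ hξ =>
    Integrable.of_bound (((measurable_of_countable (fun k => (convPow F k X).toReal)).comp hξ).aestronglyMeasurable) 1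
      (Filter.Eventually.of_forall fun ω => by
        rw [Real.norm_of_nonneg (hb X _).1]; exact (hb X _).2)
  rw [S15.mix P hμ hXm, S15.mix P hν hXm, ← integral_sub (hip μ hμ) (hip ν hν)]
  refine abs_integral_le_integral_abs.trans ?_
  refine integral_mono ((hip μ hμ).sub (hip ν hν)).abs hiR fun ω => ?_
  exact S15.multi (S15.cF_pos m) (hb X) (S15.step hm hA hX) (μ ω) (ν ω)
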